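/- Let η_{ν,m}(x) := 2^{νn}(1 + 2^ν|x|)^{−m}. Let p, q ∈ P^log(ℝ^n) and u a variable exponent with 1 < p^- ≤ p(x) ≤ u(x) ≤ sup u < ∞ for a.e. x, and 1 < q^- ≤ q^+ < ∞. Let c_∞(1/p) be the global log-Hölder decay constant of 1/p, i.e. a constant with |1/p(x) − 1/p_∞| ≤ c_∞(1/p)/log(e+|x|) for all x. Then for every m > n(1 + c_∞(1/p)) there exists c > 0 such that for all sequences (f_ν)_{ν∈ℕ_0} of measurable functions on ℝ^n one has ‖(∑_{ν=0}^∞ |(η_{ν,m} ∗ f_ν)(·)|^{q(·)})^{1/q(·)}‖_{M^{u(·)}_{p(·)}(ℝ^n)} ≤ c ‖(∑_{ν=0}^∞ |f_ν(·)|^{q(·)})^{1/q(·)}‖_{M^{u(·)}_{p(·)}(ℝ^n)}. -/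

import Mathlib

open MeasureTheory ENNReal Real
open scoped FourierTransform

noncomputable section

/-- Euclidean space `ℝ^n`. -/
abbrev Rn (n : ℕ) : Type := EuclideanSpace ℝ (Fin n)

variable {n : ℕ}

/-- The function `φ_t(s)` used in the semimodular of variable exponent Lebesgue spaces:
`φ_t(s) = s^t` for `t < ∞`, while `φ_∞(s) = 0` for `s ≤ 1` and `= ∞` for `s > 1`. -/
def phiVE (t : ℝ≥0∞) (s : ℝ≥0∞) : ℝ≥0∞ :=
  if t = ∞ then (if s ≤ 1 then 0 else ∞) else s ^ t.toReal

/-- The semimodular `ρ_p` of variable exponent Lebesgue spaces. -/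
def modularVE (p : Rn n → ℝ≥0∞) (g : Rn n → ℝ≥0∞) : ℝ≥0∞ :=
  ∫⁻ x, phiVE (p x) (g x)

/-- The variable exponent Lebesgue quasi-norm `‖·‖_{L^{p(·)}(ℝ^n)}`, applied to the
(pointwise) absolute value of a function, i.e. to `[0,∞]`-valued functions.
(For `p⁻ ≥ 1` this is the usual Luxemburg norm; for general `p` it agrees with the
definition via `‖f‖ = ‖|f|^t‖_{L^{p/t}}^{1/t}`.) -/
def vLpNorm (p : Rn n → ℝ≥0∞) (g : Rn n → ℝ≥0∞) : ℝ≥0∞ :=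
  sInf {lam : ℝ≥0∞ | modularVE p (fun x => g x / lam) ≤ 1}

/-- A variable exponent: a measurable function `p : ℝ^n → (0,∞]` with `p⁻ = ess inf p > 0`. -/
def IsVarExp (p : Rn n → ℝ≥0∞) : Prop :=
  Measurable p ∧ (∀ x, 0 < p x) ∧ 0 < essInf p (volume : Measure (Rn n))

/-- Local log-Hölder continuity of `g : ℝ^n → ℝ`. -/
def LocLogHolder (g : Rn n → ℝ) : Prop :=
  ∃ c > 0, ∀ x y : Rn n, |g x - g y| ≤ c / Real.log (Real.exp 1 + (dist x y)⁻¹)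

/-- Log-Hölder decay of `g` at infinity, with limit value `gInf` and constant `c`. -/
def LogDecay (g : Rn n → ℝ) (gInf c : ℝ) : Prop :=
  ∀ x : Rn n, |g x - gInf| ≤ c / Real.log (Real.exp 1 + ‖x‖)

/-- `p ∈ P^log(ℝ^n)`, with prescribed limit value `pinvInf = 1/p_∞` of `1/p` at infinity. -/
def IsPLogWith (p : Rn n → ℝ≥0∞) (pinvInf : ℝ) : Prop :=
  IsVarExp p ∧ LocLogHolder (fun x => (p x)⁻¹.toReal) ∧
    ∃ c > 0, LogDecay (fun x => (p x)⁻¹.toReal) pinvInf c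

/-- `p ∈ P^log(ℝ^n)`. -/
def IsPLog (p : Rn n → ℝ≥0∞) : Prop := ∃ pinvInf : ℝ, IsPLogWith p pinvInf

/-- The Morrey quasi-norm `‖·‖_{M^{u(·)}_{p(·)}(ℝ^n)}` of a `[0,∞]`-valued function:
`sup_{x, r>0} r^{n(1/u(x) - 1/p(x))} ‖f‖_{L^{p(·)}(B_r(x))}`. -/
def morreyNorm (p u : Rn n → ℝ≥0∞) (g : Rn n → ℝ≥0∞) : ℝ≥0∞ :=
  ⨆ (x : Rn n) (r : ℝ) (_ : 0 < r),
    ENNReal.ofReal (r ^ ((n : ℝ) * ((u x)⁻¹.toReal - (p x)⁻¹.toReal))) *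
      vLpNorm p ((Metric.ball x r).indicator g)

/-- The `ℓ^q` (quasi-)norm of a sequence in `[0,∞]`, with the usual modification for `q = ∞`. -/
def lqNorm (q : ℝ≥0∞) (a : ℕ → ℝ≥0∞) : ℝ≥0∞ :=
  if q = ∞ then ⨆ ν, a ν else (∑' ν, a ν ^ q.toReal) ^ (1 / q.toReal)

/-- The vector-valued Morrey quasi-norm `‖(f_ν)_ν‖_{M^{u(·)}_{p(·)}(ℓ^{q(·)})}`. -/
def morreySeqNorm (p u q : Rn n → ℝ≥0∞) (f : ℕ → Rn n → ℝ≥0∞) : ℝ≥0∞ :=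
  morreyNorm p u (fun x => lqNorm (q x) (fun ν => f ν x))

/-- The kernel `η_{ν,m}(x) = 2^{νn} (1 + 2^ν |x|)^{-m}`. -/
def etaK (ν : ℕ) (m : ℝ) (x : Rn n) : ℝ≥0∞ :=
  ENNReal.ofReal ((2 : ℝ) ^ (ν * n) * (1 + 2 ^ ν * ‖x‖) ^ (-m))

/-- Convolution of `[0,∞]`-valued functions. -/
def lconv (f g : Rn n → ℝ≥0∞) (x : Rn n) : ℝ≥0∞ := ∫⁻ y, f (x - y) * g y

/-- The constant `c_{p,u} = max(0, sup_x (1/p(x) - 1/u(x)) - 1/p_∞)`. -/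
def cpu (p u : Rn n → ℝ≥0∞) (pinvInf : ℝ) : ℝ :=
  max 0 ((⨆ x : Rn n, ((p x)⁻¹.toReal - (u x)⁻¹.toReal)) - pinvInf)

lemma rpow_le_exp_mul_rpow_add {t W A K e₀ e₁ e₂ : ℝ} (ht : 0 ≤ t) (hW : 1 ≤ W) (hA : 0 ≤ A)
    (h₀ : 0 ≤ e₀) (h₀₁ : e₀ ≤ e₁) (hK : |e₁ - e₂| * Real.log W ≤ K) (htW : t ≤ W ^ A) :
    t ^ e₁ ≤ Real.exp (A * K) * t ^ e₂ + W ^ (-(A * e₀)) := by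
  have hW0 : 0 < W := by linarith
  have hlW : 0 ≤ Real.log W := Real.log_nonneg hW
  rcases lt_or_ge t (W ^ (-A)) with h | h
  · have h1 : t ^ e₁ ≤ (W ^ (-A)) ^ e₁ := Real.rpow_le_rpow ht h.le (h₀.trans h₀₁)
    rw [← Real.rpow_mul hW0.le] at h1
    have h2 : W ^ (-A * e₁) ≤ W ^ (-(A * e₀)) :=
      Real.rpow_le_rpow_of_exponent_le hW (by nlinarith)
    have : 0 ≤ Real.exp (A * K) * t ^ e₂ := by positivity
    linarith
  · have ht0 : 0 < t := lt_of_lt_of_le (by positivity) h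
    have hl1 : Real.log t ≤ A * Real.log W := by
      have := Real.log_le_log ht0 htW
      rwa [Real.log_rpow hW0] at this
    have hl2 : -(A * Real.log W) ≤ Real.log t := by
      have := Real.log_le_log (by positivity) h
      rw [Real.log_rpow hW0] at this
      linarith
    have hl : |Real.log t| ≤ A * Real.log W := abs_le.2 ⟨hl2, hl1⟩
    have h1 : t ^ (e₁ - e₂) ≤ Real.exp (A * K) := by
      rw [Real.rpow_def_of_pos ht0]
      apply Real.exp_le_exp.2
      calc Real.log t * (e₁ - e₂) ≤ |Real.log t| * |e₁ - e₂| := by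
            rw [← abs_mul]; exact le_abs_self _
        _ ≤ (A * Real.log W) * |e₁ - e₂| := by gcongr
        _ = A * (|e₁ - e₂| * Real.log W) := by ring
        _ ≤ A * K := by gcongr
    have h2 : t ^ e₁ = t ^ (e₁ - e₂) * t ^ e₂ := by
      rw [← Real.rpow_add ht0]; ring_nf
    have : 0 ≤ W ^ (-(A * e₀)) := by positivity
    rw [h2]
    have := mul_le_mul_of_nonneg_right h1 (Real.rpow_nonneg ht e₂)
    linarith

/-- Changing the exponent of a power of `t` costs a bounded factor as long as `t` stays between
`W ^ (-A)` and `W ^ A`. -/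
lemma ennreal_rpow_le_exp_mul_rpow_add {t : ℝ≥0∞} {W A K e₀ e₁ e₂ : ℝ} (hW : 1 ≤ W) (hA : 0 ≤ A)
    (h₀ : 0 ≤ e₀) (h₀₁ : e₀ ≤ e₁) (h₂ : 0 ≤ e₂) (hK : |e₁ - e₂| * Real.log W ≤ K)
    (htW : t ≤ ENNReal.ofReal (W ^ A)) :
    t ^ e₁ ≤ ENNReal.ofReal (Real.exp (A * K)) * t ^ e₂ + ENNReal.ofReal (W ^ (-(A * e₀))) := by
  have ht : t ≠ ∞ := (htW.trans_lt ENNReal.ofReal_lt_top).ne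
  lift t to NNReal using ht
  have hW0 : 0 < W := by linarith
  have h := rpow_le_exp_mul_rpow_add (t := t) t.coe_nonneg hW hA h₀ h₀₁ hK
    ((ENNReal.ofReal_le_ofReal_iff (by positivity)).1 (by simpa using htW))
  have h' := ENNReal.ofReal_le_ofReal h
  rw [ENNReal.ofReal_add (by positivity) (by positivity), ENNReal.ofReal_mul (by positivity),
    ← ENNReal.ofReal_rpow_of_nonneg t.coe_nonneg (h₀.trans h₀₁),
    ← ENNReal.ofReal_rpow_of_nonneg t.coe_nonneg h₂]
    at h'
  simpa using h'

lemma ennreal_add_rpow_le {S a : ℝ≥0∞} {r : ℝ} (hr : 1 ≤ r) :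
    (S + a) ^ r ≤ S ^ r + ENNReal.ofReal r * (a * (S + a) ^ (r - 1)) := by
  have hr0 : 0 < r := by linarith
  rcases eq_or_ne S ∞ with rfl | hS
  · simp [ENNReal.top_rpow_of_pos hr0]
  rcases eq_or_ne a ∞ with rfl | ha
  · have : (∞ : ℝ≥0∞) ^ (r - 1) ≠ 0 := by
      rcases eq_or_lt_of_le (sub_nonneg.2 hr) with h | h
      · simp [← h]
      · simp [ENNReal.top_rpow_of_pos h]
    simp [ENNReal.top_mul this, ENNReal.mul_top, hr0]
  lift S to NNReal using hS
  lift a to NNReal using ha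
  have key : ((S : ℝ) + a) ^ r ≤ (S : ℝ) ^ r + r * (a * ((S : ℝ) + a) ^ (r - 1)) := by
    have hS := S.coe_nonneg
    have ha := a.coe_nonneg
    rcases eq_or_lt_of_le (add_nonneg hS ha) with h | h
    · have : (S : ℝ) = 0 := by
        apply le_antisymm _ hS; have : (S : ℝ).toNNReal = S := by simp
        change (0 : ℝ) = S + a at h; change (0 : ℝ) ≤ a at ha; linarith
      have ha' : (a : ℝ) = 0 := by change (0 : ℝ) = S + a at h; linarith
      simp [this, ha', hr0.ne']
    · set T : ℝ := S + a with hT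
      have hb := one_add_mul_self_le_rpow_one_add (s := -(a / T)) (p := r)
        (by rw [neg_le_neg_iff, div_le_one h]; linarith) hr
      have e : 1 + -(a / T) = S / T := by field_simp; simp [hT]
      rw [e, Real.div_rpow hS h.le, le_div_iff₀ (by positivity)] at hb
      have e2 : T ^ r = T * T ^ (r - 1) := by
        rw [Real.rpow_sub_one h.ne']; field_simp
      have e3 : (1 + r * -(a / T)) * T ^ r = T ^ r - r * (a * T ^ (r - 1)) := by
        rw [e2]; field_simp; ring
      rw [e3] at hb
      linarith
  have h' := ENNReal.ofReal_le_ofReal key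
  rw [ENNReal.ofReal_add (by positivity) (by positivity), ENNReal.ofReal_mul (by positivity),
    ENNReal.ofReal_mul (by positivity),
    ← ENNReal.ofReal_rpow_of_nonneg (by positivity) hr0.le,
    ← ENNReal.ofReal_rpow_of_nonneg (by positivity) hr0.le,
    ← ENNReal.ofReal_rpow_of_nonneg (by positivity) (by linarith),
    ENNReal.ofReal_add (by positivity) (by positivity)] at h'
  simpa using h'

lemma ennreal_sum_rpow_le (a : ℕ → ℝ≥0∞) {r : ℝ} (hr : 1 ≤ r) (N : ℕ) :
    (∑ ν ∈ Finset.range N, a ν) ^ r ≤ ENNReal.ofReal r *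
      ∑ ν ∈ Finset.range N, a ν * (∑ μ ∈ Finset.range (ν + 1), a μ) ^ (r - 1) := by
  induction N with
  | zero => simp [show 0 < r by linarith]
  | succ N ih =>
    rw [Finset.sum_range_succ, Finset.sum_range_succ _ N, mul_add]
    refine (ennreal_add_rpow_le hr).trans ?_
    rw [← Finset.sum_range_succ]
    gcongr

/-- Young's inequality with variable weights: the part of `F` can be absorbed. -/
lemma ennreal_mul_rpow_sub_one_le {F G : ℝ≥0∞} {r b c : ℝ} (hr : 1 ≤ r) (hrb : r ≤ b)
    (hc : 1 ≤ c) :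
    ENNReal.ofReal c * (G * F ^ (r - 1)) ≤
      2⁻¹ * F ^ r + ENNReal.ofReal ((2 * c) ^ b) * G ^ r := by
  have hr0 : 0 < r := by linarith
  rcases le_total F (ENNReal.ofReal (2 * c) * G) with h | h
  · refine le_trans ?_ le_add_self
    have e : G ^ r = G * G ^ (r - 1) := by
      conv_rhs => rw [← ENNReal.rpow_one G, ← ENNReal.rpow_mul, one_mul]
      rw [← ENNReal.rpow_add_of_nonneg _ _ zero_le_one (by linarith)]; ring_nf
    calc ENNReal.ofReal c * (G * F ^ (r - 1))
        ≤ ENNReal.ofReal c * (G * (ENNReal.ofReal (2 * c) * G) ^ (r - 1)) := by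
          gcongr
      _ = (ENNReal.ofReal c * ENNReal.ofReal (2 * c) ^ (r - 1)) * G ^ r := by
          rw [ENNReal.mul_rpow_of_nonneg _ _ (by linarith), e]; ring
      _ ≤ _ := by
          gcongr
          rw [ENNReal.ofReal_rpow_of_nonneg (by linarith) (by linarith),
            ← ENNReal.ofReal_mul (by linarith)]
          apply ENNReal.ofReal_le_ofReal
          calc c * (2 * c) ^ (r - 1) ≤ (2 * c) * (2 * c) ^ (r - 1) := by gcongr; linarith
            _ = (2 * c) ^ r := by
              rw [Real.rpow_sub_one (by linarith)]; field_simp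
            _ ≤ (2 * c) ^ b := Real.rpow_le_rpow_of_exponent_le (by linarith) hrb
  · refine le_trans ?_ le_self_add
    have e : F ^ r = F * F ^ (r - 1) := by
      conv_rhs => rw [← ENNReal.rpow_one F, ← ENNReal.rpow_mul, one_mul]
      rw [← ENNReal.rpow_add_of_nonneg _ _ zero_le_one (by linarith)]; ring_nf
    rw [e, ← mul_assoc, ← mul_assoc]
    refine mul_le_mul_left ?_ _
    rw [ENNReal.ofReal_mul (by norm_num), mul_assoc, ENNReal.ofReal_ofNat] at h
    rwa [← ENNReal.mul_le_iff_le_inv two_ne_zero ENNReal.ofNat_ne_top]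

lemma ennreal_le_one_add_rpow (t : ℝ≥0∞) {r : ℝ} (hr : 1 ≤ r) : t ≤ 1 + t ^ r := by
  rcases le_total t 1 with h | h
  · exact h.trans le_self_add
  · refine le_trans ?_ le_add_self
    conv_lhs => rw [← ENNReal.rpow_one t]
    exact ENNReal.rpow_le_rpow_of_exponent_le h hr

/-- A crude form of Young's inequality. -/
lemma ennreal_mul_le_rpow_add_rpow (s t : ℝ≥0∞) {p q : ℝ} (h : p.HolderConjugate q) :
    s * t ≤ s ^ p + t ^ q := by
  refine (ENNReal.young_inequality s t h).trans ?_
  gcongr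
  · exact ENNReal.div_le_of_le_mul (le_mul_of_one_le_right' (by simpa using h.lt.le))
  · exact ENNReal.div_le_of_le_mul (le_mul_of_one_le_right' (by simpa using h.symm.lt.le))

/-- The cell of side length `2 ^ (-ν)` containing `x`, in the dyadic grid with origin `α`. -/
def cell (α : Rn n) (ν : ℕ) (x : Rn n) : Set (Rn n) :=
  {y | ∀ i, ⌊(2 : ℝ) ^ ν * (y i - α i)⌋ = ⌊(2 : ℝ) ^ ν * (x i - α i)⌋}

lemma mem_cell_comm {α : Rn n} {ν : ℕ} {x y : Rn n} : y ∈ cell α ν x ↔ x ∈ cell α ν y := by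
  simp only [cell, Set.mem_ofPred_eq, eq_comm]

lemma mem_cell_self (α : Rn n) (ν : ℕ) (x : Rn n) : x ∈ cell α ν x := fun _ => rfl

lemma cell_eq_of_mem {α : Rn n} {ν : ℕ} {x y : Rn n} (h : y ∈ cell α ν x) :
    cell α ν y = cell α ν x := by
  ext z
  simp only [cell, Set.mem_ofPred_eq] at h ⊢
  simp only [h]

lemma cell_succ_subset (α : Rn n) (ν : ℕ) (x : Rn n) : cell α (ν + 1) x ⊆ cell α ν x := by
  intro y hy i
  have key : ∀ t : ℝ, ⌊(2 : ℝ) ^ ν * t⌋ = ⌊(2 : ℝ) ^ (ν + 1) * t⌋ / 2 := by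
    intro t
    have := Int.floor_div_natCast ((2 : ℝ) ^ (ν + 1) * t) 2
    push_cast at this
    rw [← this]
    congr 1
    ring
  rw [key, key, hy i]

lemma cell_subset_of_le (α : Rn n) {μ ν : ℕ} (h : μ ≤ ν) (x : Rn n) :
    cell α ν x ⊆ cell α μ x := by
  induction ν, h using Nat.le_induction with
  | base => exact subset_rfl
  | succ ν _ ih => exact (cell_succ_subset α ν x).trans ih

lemma measurableSet_cell_prod (α : Rn n) (ν : ℕ) :
    MeasurableSet {z : Rn n × Rn n | z.2 ∈ cell α ν z.1} := by
  have h : ∀ i, Measurable fun x : Rn n => ⌊(2 : ℝ) ^ ν * (x i - α i)⌋ := fun i =>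
    Int.measurable_floor.comp (by fun_prop)
  have e : {z : Rn n × Rn n | z.2 ∈ cell α ν z.1} = ⋂ i, {z : Rn n × Rn n |
      ⌊(2 : ℝ) ^ ν * (z.2 i - α i)⌋ = ⌊(2 : ℝ) ^ ν * (z.1 i - α i)⌋} := by
    ext; simp [cell]
  rw [e]
  exact MeasurableSet.iInter fun i => measurableSet_eq_fun ((h i).comp measurable_snd)
    ((h i).comp measurable_fst)

lemma measurableSet_cell (α : Rn n) (ν : ℕ) (x : Rn n) : MeasurableSet (cell α ν x) :=
  measurable_prodMk_left (measurableSet_cell_prod α ν)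

lemma cell_eq_preimage (α : Rn n) (ν : ℕ) (x : Rn n) :
    cell α ν x = (MeasurableEquiv.toLp 2 (Fin n → ℝ)).symm ⁻¹' Set.univ.pi (fun i =>
      Set.Ico (α i + ⌊(2 : ℝ) ^ ν * (x i - α i)⌋ / 2 ^ ν)
        (α i + (⌊(2 : ℝ) ^ ν * (x i - α i)⌋ + 1) / 2 ^ ν)) := by
  ext y
  simp only [cell, Set.mem_ofPred_eq, Set.mem_preimage, Set.mem_univ_pi, Set.mem_Ico,
    MeasurableEquiv.toLp_symm_apply]
  refine forall_congr' fun i => ?_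
  have h2 : (0 : ℝ) < 2 ^ ν := by positivity
  rw [Int.floor_eq_iff, ← le_sub_iff_add_le', ← sub_lt_iff_lt_add' (b := α i), div_le_iff₀ h2,
    lt_div_iff₀ h2, mul_comm (y i - α i)]

lemma volume_cell (α : Rn n) (ν : ℕ) (x : Rn n) :
    volume (cell α ν x) = ((2 : ℝ≥0∞) ^ (ν * n))⁻¹ := by
  rw [cell_eq_preimage,
    (EuclideanSpace.volume_preserving_symm_measurableEquiv_toLp _).measure_preimage_equiv,
    Real.volume_pi_Ico]
  have : ∀ k : ℤ, ∀ a : ℝ, a + ((k : ℝ) + 1) / 2 ^ ν - (a + k / 2 ^ ν) = (2 ^ ν)⁻¹ := by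
    intro k a; ring
  simp only [this, Finset.prod_const, Finset.card_univ, Fintype.card_fin]
  rw [ENNReal.ofReal_inv_of_pos (by positivity), ENNReal.ofReal_pow (by norm_num), pow_mul,
    ENNReal.ofReal_ofNat, ENNReal.inv_pow, ENNReal.inv_pow, ENNReal.inv_pow]

lemma dist_le_of_mem_cell {α : Rn n} {ν : ℕ} {x y : Rn n} (h : y ∈ cell α ν x) :
    dist x y ≤ (Real.sqrt n + 1) * (2 ^ ν)⁻¹ := by
  have h2 : (0 : ℝ) < 2 ^ ν := by positivity
  have hi : ∀ i, dist (x i) (y i) ^ 2 ≤ ((2 ^ ν)⁻¹ : ℝ) ^ 2 := by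
    intro i
    have h1 := Int.abs_sub_lt_one_of_floor_eq_floor (h i)
    have : (2 : ℝ) ^ ν * (y i - α i) - 2 ^ ν * (x i - α i) = 2 ^ ν * (y i - x i) := by ring
    rw [this, abs_mul, abs_of_pos h2] at h1
    gcongr
    rw [dist_comm, Real.dist_eq, ← one_div, le_div_iff₀ h2, mul_comm]
    exact h1.le
  rw [EuclideanSpace.dist_eq]
  calc √(∑ i, dist (x i) (y i) ^ 2) ≤ √(∑ _i : Fin n, ((2 ^ ν)⁻¹ : ℝ) ^ 2) :=
        Real.sqrt_le_sqrt (Finset.sum_le_sum fun i _ => hi i)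
    _ = √n * (2 ^ ν)⁻¹ := by
        rw [Finset.sum_const, Finset.card_univ, Fintype.card_fin, nsmul_eq_mul,
          Real.sqrt_mul (by positivity), Real.sqrt_sq (by positivity)]
    _ ≤ _ := by gcongr; linarith

/-- Averages over dyadic cells. -/
def dyadicAvg (α : Rn n) (ν : ℕ) (f : Rn n → ℝ≥0∞) (x : Rn n) : ℝ≥0∞ :=
  2 ^ (ν * n) * ∫⁻ y in cell α ν x, f y

lemma setLIntegral_cell_eq (α : Rn n) (ν : ℕ) (μ : Measure (Rn n)) (f : Rn n → ℝ≥0∞) (x : Rn n) :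
    ∫⁻ y in cell α ν x, f y ∂μ =
      ∫⁻ y, {z : Rn n × Rn n | z.2 ∈ cell α ν z.1}.indicator (fun z => f z.2) (x, y) ∂μ := by
  rw [← lintegral_indicator (measurableSet_cell α ν x)]
  rfl

lemma measurable_setLIntegral_cell (α : Rn n) (ν : ℕ) (μ : Measure (Rn n)) [SFinite μ]
    {f : Rn n → ℝ≥0∞} (hf : Measurable f) : Measurable fun x => ∫⁻ y in cell α ν x, f y ∂μ := by
  simp only [setLIntegral_cell_eq]
  exact Measurable.lintegral_prod_right'
    ((hf.comp measurable_snd).indicator (measurableSet_cell_prod α ν))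

lemma measurable_dyadicAvg (α : Rn n) (ν : ℕ) {f : Rn n → ℝ≥0∞} (hf : Measurable f) :
    Measurable (dyadicAvg α ν f) :=
  (measurable_setLIntegral_cell α ν _ hf).const_mul _

lemma lintegral_setLIntegral_cell_mul (α : Rn n) (ν : ℕ) (μ : Measure (Rn n)) [SFinite μ]
    {f g : Rn n → ℝ≥0∞} (hf : Measurable f) (hg : Measurable g) :
    ∫⁻ x, (∫⁻ y in cell α ν x, f y ∂μ) * g x ∂μ =
      ∫⁻ y, f y * ∫⁻ x in cell α ν y, g x ∂μ ∂μ := by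
  have hm := measurableSet_cell_prod α ν
  have h1 : ∀ x, (∫⁻ y in cell α ν x, f y ∂μ) * g x =
      ∫⁻ y, {z : Rn n × Rn n | z.2 ∈ cell α ν z.1}.indicator
        (fun z => f z.2 * g z.1) (x, y) ∂μ := by
    intro x
    rw [setLIntegral_cell_eq, ← lintegral_mul_const]
    · refine lintegral_congr fun y => ?_
      by_cases h : y ∈ cell α ν x <;> simp [Set.indicator, h]
    · exact ((hf.comp measurable_snd).indicator hm).comp measurable_prodMk_left
  have h2 : ∀ y, f y * (∫⁻ x in cell α ν y, g x ∂μ) =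
      ∫⁻ x, {z : Rn n × Rn n | z.2 ∈ cell α ν z.1}.indicator
        (fun z => f z.2 * g z.1) (x, y) ∂μ := by
    intro y
    rw [setLIntegral_cell_eq, ← lintegral_const_mul]
    · refine lintegral_congr fun x => ?_
      by_cases h : y ∈ cell α ν x <;> simp [Set.indicator, h, mem_cell_comm (x := y)]
    · exact ((hg.comp measurable_snd).indicator hm).comp measurable_prodMk_left
  simp only [h1, h2]
  refine lintegral_lintegral_swap (Measurable.aemeasurable ?_)
  exact (((hf.comp measurable_snd).mul (hg.comp measurable_fst)).indicator hm)

lemma lintegral_dyadicAvg_mul (α : Rn n) (ν : ℕ) {f g : Rn n → ℝ≥0∞} (hf : Measurable f)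
    (hg : Measurable g) :
    ∫⁻ x, dyadicAvg α ν f x * g x = ∫⁻ y, f y * dyadicAvg α ν g y := by
  simp only [dyadicAvg]
  calc ∫⁻ x, 2 ^ (ν * n) * (∫⁻ y in cell α ν x, f y) * g x
      = 2 ^ (ν * n) * ∫⁻ x, (∫⁻ y in cell α ν x, f y) * g x := by
        rw [← lintegral_const_mul]
        · simp only [mul_assoc]
        · exact (measurable_setLIntegral_cell α ν _ hf).mul hg
    _ = 2 ^ (ν * n) * ∫⁻ y, f y * ∫⁻ x in cell α ν y, g x := by
        rw [lintegral_setLIntegral_cell_mul α ν _ hf hg]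
    _ = _ := by
        rw [← lintegral_const_mul]
        · refine lintegral_congr fun y => ?_
          ring
        · exact hf.mul (measurable_setLIntegral_cell α ν _ hg)

lemma dyadicAvg_eq_of_mem {α : Rn n} {μ ν : ℕ} (h : μ ≤ ν) (f : Rn n → ℝ≥0∞) {x y : Rn n}
    (hy : y ∈ cell α ν x) : dyadicAvg α μ f y = dyadicAvg α μ f x := by
  rw [dyadicAvg, dyadicAvg, cell_eq_of_mem (cell_subset_of_le α h x hy)]

lemma dyadicAvg_mono (α : Rn n) (ν : ℕ) {f g : Rn n → ℝ≥0∞} (h : f ≤ᵐ[volume] g) (x : Rn n) :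
    dyadicAvg α ν f x ≤ dyadicAvg α ν g x := by
  unfold dyadicAvg
  gcongr 1
  exact lintegral_mono_ae (ae_restrict_of_ae h)

/-- A discretized and two-sided form of log-Hölder continuity. -/
def CellOsc (α : Rn n) (P : Rn n → ℝ) (K : ℝ) : Prop :=
  ∀ ν x y, y ∈ cell α ν x → |P x - P y| * (ν + Real.log (Real.exp 1 + ‖x‖)) ≤ K

lemma one_le_log_exp_add {t : ℝ} (ht : 0 ≤ t) : 1 ≤ Real.log (Real.exp 1 + t) := by
  rw [Real.le_log_iff_exp_le (by positivity)]
  linarith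

lemma exists_cellOsc {P : Rn n → ℝ} {L Pinf : ℝ}
    (hloc : ∀ x y, |P x - P y| ≤ L / Real.log (Real.exp 1 + (dist x y)⁻¹))
    (hdec : ∀ x, |P x - Pinf| ≤ L / Real.log (Real.exp 1 + ‖x‖)) :
    ∃ K, ∀ α, CellOsc α P K := by
  set D : ℝ := Real.sqrt n + 1 with hD
  have hD1 : 1 ≤ D := by have := Real.sqrt_nonneg n; linarith
  have hL : 0 ≤ L := by
    have := (abs_nonneg _).trans (hdec 0)
    rw [norm_zero, add_zero, Real.log_exp, div_one] at this
    exact this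
  refine ⟨(1 + Real.log D) * L / Real.log 2 + L + L * (1 + Real.log (1 + D)), ?_⟩
  intro α ν x y hy
  have hd := dist_le_of_mem_cell hy
  have hlD : 0 ≤ Real.log D := Real.log_nonneg hD1
  have hlD' : 0 ≤ Real.log (1 + D) := Real.log_nonneg (by linarith)
  have hl2 : 0 < Real.log 2 := Real.log_pos (by norm_num)
  have h1 : |P x - P y| * ν ≤ (1 + Real.log D) * L / Real.log 2 := by
    rcases eq_or_ne x y with rfl | hxy
    · simp; positivity
    have hdp : 0 < dist x y := dist_pos.2 hxy
    have hl := one_le_log_exp_add (inv_nonneg.2 hdp.le)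
    set ℓ := Real.log (Real.exp 1 + (dist x y)⁻¹) with hℓ
    have h3 : ν * Real.log 2 - Real.log D ≤ ℓ := by
      rw [← Real.log_pow, ← Real.log_div (by positivity) (by positivity)]
      apply Real.log_le_log (by positivity)
      have : (2 : ℝ) ^ ν / D ≤ (dist x y)⁻¹ := by
        rw [le_inv_comm₀ (by positivity) hdp, inv_div]
        simpa [div_eq_mul_inv] using hd
      linarith [Real.exp_pos 1]
    have h4 := hloc x y
    rw [le_div_iff₀ (by linarith)] at h4
    rw [le_div_iff₀ hl2]
    have h5 : ν * Real.log 2 ≤ (1 + Real.log D) * ℓ := by nlinarith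
    calc |P x - P y| * ν * Real.log 2 = |P x - P y| * (ν * Real.log 2) := by ring
      _ ≤ |P x - P y| * ((1 + Real.log D) * ℓ) := by gcongr
      _ = (1 + Real.log D) * (|P x - P y| * ℓ) := by ring
      _ ≤ _ := by gcongr
  have h2 : |P x - P y| * Real.log (Real.exp 1 + ‖x‖) ≤ L + L * (1 + Real.log (1 + D)) := by
    have hx := one_le_log_exp_add (norm_nonneg x)
    have hy := one_le_log_exp_add (norm_nonneg y)
    have h4 := hdec x
    have h5 := hdec y
    rw [le_div_iff₀ (by linarith)] at h4 h5
    have h6 : Real.log (Real.exp 1 + ‖x‖) ≤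
        Real.log (1 + D) + Real.log (Real.exp 1 + ‖y‖) := by
      rw [← Real.log_mul (by positivity) (by positivity)]
      apply Real.log_le_log (by positivity)
      have h7 : ‖x‖ ≤ ‖y‖ + D := by
        have h8 : dist x y ≤ D := hd.trans
          (mul_le_of_le_one_right (by positivity)
            (inv_le_one_of_one_le₀ (one_le_pow₀ (by norm_num))))
        have := norm_le_norm_add_norm_sub' x y
        rw [dist_eq_norm] at h8
        linarith
      have h9 : 1 ≤ Real.exp 1 := Real.one_le_exp (by norm_num)
      nlinarith [norm_nonneg y]
    have h7 : |P x - P y| ≤ |P x - Pinf| + |P y - Pinf| := by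
      rw [abs_sub_comm (P y)]
      exact abs_sub_le _ _ _
    have h8 : Real.log (Real.exp 1 + ‖x‖) ≤
        (1 + Real.log (1 + D)) * Real.log (Real.exp 1 + ‖y‖) := by
      nlinarith
    calc |P x - P y| * Real.log (Real.exp 1 + ‖x‖)
        ≤ (|P x - Pinf| + |P y - Pinf|) * Real.log (Real.exp 1 + ‖x‖) := by gcongr
      _ = |P x - Pinf| * Real.log (Real.exp 1 + ‖x‖) +
          |P y - Pinf| * Real.log (Real.exp 1 + ‖x‖) := by ring
      _ ≤ L + |P y - Pinf| * ((1 + Real.log (1 + D)) * Real.log (Real.exp 1 + ‖y‖)) := by gcongr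
      _ = L + (|P y - Pinf| * Real.log (Real.exp 1 + ‖y‖)) * (1 + Real.log (1 + D)) := by ring
      _ ≤ _ := by gcongr
  rw [mul_add]
  linarith

lemma lintegral_div_rpow_le_one_of_duality {β : Type*} [MeasurableSpace β] {μ : Measure β}
    [SigmaFinite μ] {P P' : β → ℝ} (hP' : Measurable P')
    (h : ∀ x, (P x).HolderConjugate (P' x)) {F : β → ℝ≥0∞} (hF : Measurable F) {c : ℝ≥0∞}
    (hc0 : c ≠ 0) (hc : c ≠ ∞)
    (H : ∀ g : β → ℝ≥0∞, Measurable g → ∫⁻ x, g x ^ P' x ∂μ ≤ 1 → ∫⁻ x, F x * g x ∂μ ≤ c) :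
    ∫⁻ x, (F x / (2 * c)) ^ P x ∂μ ≤ 1 := by
  by_contra! hlt
  obtain ⟨φ, hφ, hφtop, hφ1⟩ : ∃ φ : SimpleFunc β NNReal,
      (∀ x, (φ x : ℝ≥0∞) ≤ (F x / (2 * c)) ^ P x) ∧ ∫⁻ x, φ x ∂μ < ∞ ∧ 1 < ∫⁻ x, φ x ∂μ := by
    rw [lintegral_eq_nnreal] at hlt
    simp only [lt_iSup_iff] at hlt
    obtain ⟨g, hg, hg1⟩ := hlt
    rw [← SimpleFunc.lintegral_eq_lintegral] at hg1
    obtain ⟨φ, hφ, hφ'⟩ := exists_lt_lintegral_simpleFunc_of_lt_lintegral (f := g) hg1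
    exact ⟨φ, fun x => (ENNReal.coe_le_coe.2 (hφ x)).trans (hg x), hφ'⟩
  set I : ℝ≥0∞ := ∫⁻ x, φ x ∂μ with hI
  have hI0 : I ≠ 0 := (zero_lt_one.trans hφ1).ne'
  have hφm : Measurable fun x => ((φ x : NNReal) : ℝ≥0∞) := by
    exact measurable_coe_nnreal_ennreal.comp φ.measurable
  set ψ : β → ℝ≥0∞ := fun x => (φ x : ℝ≥0∞) / I with hψ
  have hψm : Measurable ψ := hφm.div_const I
  have hψ1 : ∫⁻ x, ψ x ∂μ = 1 := by
    simp only [hψ, div_eq_mul_inv]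
    rw [lintegral_mul_const _ hφm]
    exact ENNReal.mul_inv_cancel hI0 hφtop.ne
  have hψF : ∀ x, ψ x ^ (P x)⁻¹ ≤ F x / (2 * c) := by
    intro x
    have hP0 := (h x).pos
    calc ψ x ^ (P x)⁻¹ ≤ ((F x / (2 * c)) ^ P x) ^ (P x)⁻¹ := by
          refine ENNReal.rpow_le_rpow ?_ (inv_nonneg.2 hP0.le)
          refine le_trans ?_ (hφ x)
          exact ENNReal.div_le_of_le_mul (le_mul_of_one_le_right' hφ1.le)
      _ = _ := by rw [← ENNReal.rpow_mul, mul_inv_cancel₀ hP0.ne', ENNReal.rpow_one]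
  have key := H (fun x => ψ x ^ (P' x)⁻¹) (hψm.pow hP'.inv) (by
    rw [← hψ1]
    refine le_of_eq (lintegral_congr fun x => ?_)
    rw [← ENNReal.rpow_mul, inv_mul_cancel₀ (h x).symm.pos.ne', ENNReal.rpow_one])
  have h1 : (1 : ℝ≥0∞) ≤ (2 * c)⁻¹ * c := by
    calc (1 : ℝ≥0∞) = ∫⁻ x, ψ x ^ (P x)⁻¹ * ψ x ^ (P' x)⁻¹ ∂μ := by
          rw [← hψ1]
          refine lintegral_congr fun x => ?_
          rw [← ENNReal.rpow_add_of_nonneg _ _ (inv_nonneg.2 (h x).pos.le)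
            (inv_nonneg.2 (h x).symm.pos.le), (h x).inv_add_inv_eq_one, ENNReal.rpow_one]
      _ ≤ ∫⁻ x, (2 * c)⁻¹ * (F x * ψ x ^ (P' x)⁻¹) ∂μ := by
          refine lintegral_mono fun x => ?_
          calc _ ≤ F x / (2 * c) * ψ x ^ (P' x)⁻¹ := by gcongr; exact hψF x
            _ = _ := by rw [div_eq_mul_inv]; ring
      _ = (2 * c)⁻¹ * ∫⁻ x, F x * ψ x ^ (P' x)⁻¹ ∂μ :=
          lintegral_const_mul _ (hF.mul (hψm.pow hP'.inv))
      _ ≤ _ := by gcongr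
  rw [ENNReal.mul_inv (by simp) (by simp), mul_assoc, ENNReal.inv_mul_cancel hc0 hc, mul_one] at h1
  exact absurd h1 (by simp)

/-- An integrable weight on `ℝ^n`, for `r > n`. -/
def decayW (r : ℝ) (x : Rn n) : ℝ≥0∞ := ENNReal.ofReal ((Real.exp 1 + ‖x‖) ^ (-r))

lemma measurable_decayW (r : ℝ) : Measurable (decayW (n := n) r) := by
  unfold decayW
  fun_prop

lemma one_le_exp_add_norm (x : Rn n) : 1 ≤ Real.exp 1 + ‖x‖ := by
  have := Real.one_le_exp (show (0 : ℝ) ≤ 1 by norm_num)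
  have := norm_nonneg x
  linarith

lemma decayW_le_one {r : ℝ} (hr : 0 ≤ r) (x : Rn n) : decayW r x ≤ 1 := by
  rw [decayW, ENNReal.ofReal_le_one]
  exact Real.rpow_le_one_of_one_le_of_nonpos (one_le_exp_add_norm x) (by linarith)

lemma lintegral_decayW_lt_top {r : ℝ} (hr : (n : ℝ) < r) :
    ∫⁻ x : Rn n, decayW r x < ∞ := by
  have h := finite_integral_one_add_norm (μ := (volume : Measure (Rn n))) (r := r)
    (by simpa using hr)
  refine lt_of_le_of_lt (lintegral_mono fun x => ENNReal.ofReal_le_ofReal ?_) h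
  apply Real.rpow_le_rpow_of_nonpos (by positivity)
  · have := Real.one_le_exp (show (0 : ℝ) ≤ 1 by norm_num)
    linarith
  · have : (0 : ℝ) ≤ n := by positivity
    linarith

lemma lintegral_le_of_forall_unit_cell (α : Rn n) {f g : Rn n → ℝ≥0∞}
    (h : ∀ x, ∫⁻ y in cell α 0 x, f y ≤ ∫⁻ y in cell α 0 x, g y) : ∫⁻ x, f x ≤ ∫⁻ x, g x := by
  set c : (Fin n → ℤ) → Rn n := fun k => WithLp.toLp 2 fun i => (k i : ℝ) + α i with hc
  have hcell : ∀ k y, y ∈ cell α 0 (c k) ↔ ∀ i, ⌊y i - α i⌋ = k i := by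
    intro k y
    simp [cell, hc]
  have hU : ⋃ k, cell α 0 (c k) = Set.univ := by
    refine Set.eq_univ_of_forall fun y => Set.mem_iUnion.2 ⟨fun i => ⌊y i - α i⌋, ?_⟩
    simp [hcell]
  have hD : Pairwise (Function.onFun Disjoint fun k => cell α 0 (c k)) := by
    intro k l hkl
    refine Set.disjoint_left.2 fun y hk hl => hkl ?_
    rw [hcell] at hk hl
    ext i
    rw [← hk, ← hl]
  have key : ∀ f : Rn n → ℝ≥0∞, ∫⁻ x, f x = ∑' k, ∫⁻ y in cell α 0 (c k), f y := by
    intro f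
    rw [← lintegral_iUnion (fun k => measurableSet_cell α 0 _) hD, hU, setLIntegral_univ]
  rw [key f, key g]
  exact ENNReal.tsum_le_tsum fun k => h _

lemma setLIntegral_dyadicAvg_mul_rpow_le {α : Rn n} {P : Rn n → ℝ} {K a A : ℝ} (hPm : Measurable P)
    (hosc : CellOsc α P K) (ha : 1 ≤ a) (haP : ∀ x, a ≤ P x) (hA : 0 ≤ A) {ν : ℕ} (x₀ : Rn n)
    {f S : Rn n → ℝ≥0∞} (hf : Measurable f) (hS : Measurable S)
    (hSc : ∀ x y, y ∈ cell α ν x → S y = S x)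
    (hSb : ∀ x ∈ cell α 0 x₀, S x ≤ ENNReal.ofReal ((2 ^ ν * (Real.exp 1 + ‖x‖)) ^ A)) :
    ∫⁻ x in cell α 0 x₀, dyadicAvg α ν f x * S x ^ (P x - 1) ≤
      ∫⁻ y in cell α 0 x₀, f y * (ENNReal.ofReal (Real.exp (A * K)) * S y ^ (P y - 1) +
        decayW (A * (a - 1)) y) := by
  set Q := cell α 0 x₀ with hQ
  have hQm : MeasurableSet Q := measurableSet_cell α 0 x₀
  set μ := (volume : Measure (Rn n)).restrict Q with hμ
  have hsub : ∀ x ∈ Q, cell α ν x ⊆ Q := fun x hx => by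
    rw [hQ, ← cell_eq_of_mem hx]
    exact cell_subset_of_le α (Nat.zero_le ν) x
  have hres : ∀ x ∈ Q, ∀ g : Rn n → ℝ≥0∞,
      ∫⁻ y in cell α ν x, g y ∂μ = ∫⁻ y in cell α ν x, g y := by
    intro x hx g
    rw [hμ, Measure.restrict_restrict (measurableSet_cell α ν x),
      Set.inter_eq_self_of_subset_left (hsub x hx)]
  have hSP : Measurable fun x => S x ^ (P x - 1) := hS.pow (hPm.sub_const 1)
  have hinner : ∀ y ∈ Q, 2 ^ (ν * n) * ∫⁻ x in cell α ν y, S x ^ (P x - 1) ≤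
      ENNReal.ofReal (Real.exp (A * K)) * S y ^ (P y - 1) + decayW (A * (a - 1)) y := by
    intro y hy
    calc 2 ^ (ν * n) * ∫⁻ x in cell α ν y, S x ^ (P x - 1)
        ≤ 2 ^ (ν * n) * ∫⁻ x in cell α ν y, (ENNReal.ofReal (Real.exp (A * K)) * S y ^ (P y - 1) +
          decayW (A * (a - 1)) y) := by
          gcongr 1
          refine setLIntegral_mono' (measurableSet_cell α ν y) fun x hx => ?_
          rw [hSc y x hx]
          have hw := one_le_exp_add_norm y
          have h2 : (1 : ℝ) ≤ 2 ^ ν := one_le_pow₀ (by norm_num)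
          refine (ennreal_rpow_le_exp_mul_rpow_add (W := 2 ^ ν * (Real.exp 1 + ‖y‖)) (A := A)
            (K := K) (e₀ := a - 1) (e₂ := P y - 1) (by nlinarith) hA (by linarith)
            (by linarith [haP x]) (by linarith [haP y]) ?_ (hSb y hy)).trans ?_
          · refine le_trans ?_ (hosc ν y x hx)
            rw [show P x - 1 - (P y - 1) = -(P y - P x) by ring, abs_neg,
              Real.log_mul (by positivity) (by linarith), Real.log_pow]
            gcongr
            have := Real.log_two_lt_d9
            have : (0 : ℝ) ≤ ν := by positivity
            nlinarith
          · gcongr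
            refine ENNReal.ofReal_le_ofReal (Real.rpow_le_rpow_of_nonpos (by linarith)
              (by nlinarith) ?_)
            have := mul_nonneg hA (sub_nonneg.2 ha)
            linarith
      _ = _ := by
          rw [setLIntegral_const, volume_cell, mul_comm, mul_assoc, ENNReal.inv_mul_cancel
            (by simp) (by simp), mul_one]
  have hm₁ : Measurable fun x => (∫⁻ y in cell α ν x, f y ∂μ) * S x ^ (P x - 1) :=
    (measurable_setLIntegral_cell α ν μ hf).mul hSP
  have hm₂ : Measurable fun y => f y * ∫⁻ x in cell α ν y, S x ^ (P x - 1) ∂μ :=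
    hf.mul (measurable_setLIntegral_cell α ν μ hSP)
  calc ∫⁻ x in Q, dyadicAvg α ν f x * S x ^ (P x - 1)
      = ∫⁻ x, 2 ^ (ν * n) * ((∫⁻ y in cell α ν x, f y ∂μ) * S x ^ (P x - 1)) ∂μ := by
        refine setLIntegral_congr_fun hQm fun x hx => ?_
        simp only [dyadicAvg, hres x hx]
        ring
    _ = 2 ^ (ν * n) * ∫⁻ y, f y * ∫⁻ x in cell α ν y, S x ^ (P x - 1) ∂μ ∂μ := by
        rw [lintegral_const_mul _ hm₁,
          lintegral_setLIntegral_cell_mul α ν μ hf hSP]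
    _ = ∫⁻ y, f y * (2 ^ (ν * n) * ∫⁻ x in cell α ν y, S x ^ (P x - 1) ∂μ) ∂μ := by
        rw [← lintegral_const_mul _ hm₂]
        refine lintegral_congr fun y => ?_
        ring
    _ ≤ _ := by
        refine setLIntegral_mono' hQm fun y hy => ?_
        gcongr
        rw [hres y hy]
        exact hinner y hy

lemma ennreal_sum_dyadicAvg_le {α : Rn n} {f : ℕ → Rn n → ℝ≥0∞} {x₀ : Rn n} {M : ℝ≥0∞}
    (hG : ∫⁻ x in cell α 0 x₀, ∑' ν, f ν x ≤ M) (ν : ℕ) {x : Rn n} (hx : x ∈ cell α 0 x₀) :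
    ∑ μ ∈ Finset.range (ν + 1), dyadicAvg α μ (f μ) x ≤ (ν + 1 : ℕ) * (2 ^ (ν * n) * M) := by
  calc ∑ μ ∈ Finset.range (ν + 1), dyadicAvg α μ (f μ) x
      ≤ ∑ μ ∈ Finset.range (ν + 1), 2 ^ (ν * n) * M := by
        refine Finset.sum_le_sum fun μ hμ => ?_
        have hμν : μ ≤ ν := by simpa [Nat.lt_succ_iff] using hμ
        refine mul_le_mul' (pow_le_pow_right₀ (by norm_num) (by gcongr)) (le_trans ?_ hG)
        refine (lintegral_mono fun y => ENNReal.le_tsum μ).trans (lintegral_mono_set ?_)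
        rw [← cell_eq_of_mem hx]
        exact cell_subset_of_le α (Nat.zero_le μ) x
    _ = _ := by simp

lemma setLIntegral_sum_dyadicAvg_rpow_le {α : Rn n} {P : Rn n → ℝ} {K a b A : ℝ}
    (hPm : Measurable P) (hosc : CellOsc α P K) (ha : 1 < a) (haP : ∀ x, a ≤ P x)
    (hPb : ∀ x, P x ≤ b) (hA : n + 2 ≤ A) {f : ℕ → Rn n → ℝ≥0∞} (hf : ∀ ν, Measurable (f ν))
    (hG : ∫⁻ x, (∑' ν, f ν x) ^ P x ≤ 1) (N : ℕ) (x₀ : Rn n) :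
    ∫⁻ x in cell α 0 x₀, (∑ ν ∈ Finset.range N, dyadicAvg α ν (f ν) x) ^ P x ≤
      ∫⁻ x in cell α 0 x₀, 2 * ((ENNReal.ofReal ((2 * (b * Real.exp (A * K))) ^ b) +
        ENNReal.ofReal b) * (∑' ν, f ν x) ^ P x + ENNReal.ofReal b * decayW (A * (a - 1)) x) := by
  set Q := cell α 0 x₀ with hQ
  have hQm : MeasurableSet Q := measurableSet_cell α 0 x₀
  have hQv : volume Q = 1 := by simp [hQ, volume_cell]
  have hb : 1 ≤ b := ha.le.trans ((haP 0).trans (hPb 0))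
  have hA0 : 0 ≤ A := le_trans (by positivity) hA
  have hK : 0 ≤ K := by
    have := hosc 0 0 0 (mem_cell_self _ _ _)
    simpa using this
  set G : Rn n → ℝ≥0∞ := fun x => ∑' ν, f ν x with hGdef
  have hGm : Measurable G := Measurable.tsum hf
  set F : Rn n → ℝ≥0∞ := fun x => ∑ ν ∈ Finset.range N, dyadicAvg α ν (f ν) x with hF
  have ham : ∀ ν, Measurable (dyadicAvg α ν (f ν)) := fun ν => measurable_dyadicAvg α ν (hf ν)
  have hSm : ∀ k, Measurable fun x => ∑ μ ∈ Finset.range k, dyadicAvg α μ (f μ) x := fun k =>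
    Finset.measurable_fun_sum _ fun μ _ => ham μ
  have hG2 : ∫⁻ x in Q, G x ≤ 2 := by
    calc ∫⁻ x in Q, G x ≤ ∫⁻ x in Q, (1 + G x ^ P x) :=
          lintegral_mono fun x => ennreal_le_one_add_rpow _ (by linarith [haP x])
      _ = 1 + ∫⁻ x in Q, G x ^ P x := by
          rw [lintegral_add_left measurable_const]; simp [hQv]
      _ ≤ 1 + 1 := by gcongr; exact (setLIntegral_le_lintegral _ _).trans hG
      _ = 2 := one_add_one_eq_two
  set C₁ := ENNReal.ofReal (Real.exp (A * K))
  set e := decayW (n := n) (A * (a - 1))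
  have he1 : ∀ x, e x ≤ 1 := decayW_le_one (mul_nonneg hA0 (by linarith))
  have hstep : ∀ ν ∈ Finset.range N,
      ∫⁻ x in Q, dyadicAvg α ν (f ν) x *
        (∑ μ ∈ Finset.range (ν + 1), dyadicAvg α μ (f μ) x) ^ (P x - 1) ≤
      ∫⁻ x in Q, f ν x * (C₁ * F x ^ (P x - 1) + e x) := by
    intro ν hν
    refine (setLIntegral_dyadicAvg_mul_rpow_le hPm hosc ha.le haP hA0 x₀ (hf ν) (hSm (ν + 1))
      ?_ ?_).trans ?_
    · intro x y hy
      refine Finset.sum_congr rfl fun μ hμ => dyadicAvg_eq_of_mem ?_ _ hy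
      simpa [Nat.lt_succ_iff] using hμ
    · intro x hx
      refine (ennreal_sum_dyadicAvg_le hG2 ν hx).trans ?_
      have h1 : (((ν + 1 : ℕ) : ℝ≥0∞)) * (2 ^ (ν * n) * 2) =
          ENNReal.ofReal ((ν + 1 : ℕ) * (2 ^ (ν * n) * 2)) := by
        rw [ENNReal.ofReal_mul (by positivity), ENNReal.ofReal_natCast,
          ENNReal.ofReal_mul (by positivity), ENNReal.ofReal_pow (by positivity),
          ENNReal.ofReal_ofNat]
      rw [h1]
      refine ENNReal.ofReal_le_ofReal ?_
      have hw : 2 ≤ Real.exp 1 + ‖x‖ := by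
        have := Real.add_one_le_exp 1
        have := norm_nonneg x
        linarith
      have h2 : (1 : ℝ) ≤ 2 ^ ν := one_le_pow₀ (by norm_num)
      have h3 : ((ν + 1 : ℕ) : ℝ) ≤ 2 ^ ν := by exact_mod_cast Nat.lt_two_pow_self
      set W := 2 ^ ν * (Real.exp 1 + ‖x‖) with hW
      have hW1 : 1 ≤ W := by nlinarith
      calc ((ν + 1 : ℕ) : ℝ) * (2 ^ (ν * n) * 2) ≤ W * (W ^ n * W) := by
            rw [pow_mul]
            gcongr
            · nlinarith
            · nlinarith
            · nlinarith
        _ = W ^ ((n : ℝ) + 2) := by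
            rw [Real.rpow_add (by linarith), Real.rpow_natCast, Real.rpow_two]; ring
        _ ≤ W ^ A := Real.rpow_le_rpow_of_exponent_le hW1 hA
    · refine lintegral_mono fun x => ?_
      gcongr 3
      refine ENNReal.rpow_le_rpow ?_ (by linarith [haP x])
      refine Finset.sum_le_sum_of_subset (Finset.range_mono ?_)
      exact Finset.mem_range.1 hν
  have hT : ∫⁻ x in Q, F x ^ P x ≤ ∫⁻ x in Q, 2⁻¹ * F x ^ P x +
      ((ENNReal.ofReal ((2 * (b * Real.exp (A * K))) ^ b) + ENNReal.ofReal b) * G x ^ P x +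
        ENNReal.ofReal b * e x) := by
    calc ∫⁻ x in Q, F x ^ P x
        ≤ ∫⁻ x in Q, ENNReal.ofReal b * ∑ ν ∈ Finset.range N, dyadicAvg α ν (f ν) x *
            (∑ μ ∈ Finset.range (ν + 1), dyadicAvg α μ (f μ) x) ^ (P x - 1) := by
          refine lintegral_mono fun x => ?_
          refine (ennreal_sum_rpow_le _ (by linarith [haP x]) N).trans ?_
          gcongr
          exact hPb x
      _ = ENNReal.ofReal b * ∑ ν ∈ Finset.range N, ∫⁻ x in Q, dyadicAvg α ν (f ν) x *
            (∑ μ ∈ Finset.range (ν + 1), dyadicAvg α μ (f μ) x) ^ (P x - 1) := by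
          have hm : ∀ ν, Measurable fun x => dyadicAvg α ν (f ν) x *
            (∑ μ ∈ Finset.range (ν + 1), dyadicAvg α μ (f μ) x) ^ (P x - 1) := fun ν =>
            (ham ν).mul ((hSm (ν + 1)).pow (hPm.sub_const 1))
          rw [lintegral_const_mul _ (Finset.measurable_fun_sum _ fun ν _ => hm ν),
            lintegral_finsetSum _ fun ν _ => hm ν]
      _ ≤ ENNReal.ofReal b * ∑ ν ∈ Finset.range N,
            ∫⁻ x in Q, f ν x * (C₁ * F x ^ (P x - 1) + e x) := by
          gcongr 1
          exact Finset.sum_le_sum hstep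
      _ = ∫⁻ x in Q, ENNReal.ofReal b * ((∑ ν ∈ Finset.range N, f ν x) *
            (C₁ * F x ^ (P x - 1) + e x)) := by
          have hm : ∀ ν, Measurable fun x => f ν x * (C₁ * F x ^ (P x - 1) + e x) := fun ν =>
            (hf ν).mul ((((hSm N).pow (hPm.sub_const 1)).const_mul _).add (measurable_decayW _))
          rw [← lintegral_finsetSum _ fun ν _ => hm ν,
            ← lintegral_const_mul _ (Finset.measurable_fun_sum _ fun ν _ => hm ν)]
          simp only [Finset.sum_mul]
      _ ≤ _ := by
          refine lintegral_mono fun x => ?_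
          have h1 : ∑ ν ∈ Finset.range N, f ν x ≤ G x := ENNReal.sum_le_tsum _
          have h2 := ennreal_mul_rpow_sub_one_le (F := F x) (G := G x) (r := P x) (b := b)
            (c := b * Real.exp (A * K)) (by linarith [haP x]) (hPb x)
            (one_le_mul_of_one_le_of_one_le hb (Real.one_le_exp (by positivity)))
          have h3 : G x * e x ≤ G x ^ P x + e x := by
            calc G x * e x ≤ (1 + G x ^ P x) * e x := by
                  gcongr; exact ennreal_le_one_add_rpow _ (by linarith [haP x])
              _ = e x + G x ^ P x * e x := by ring
              _ ≤ e x + G x ^ P x * 1 := by gcongr; exact he1 x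
              _ = _ := by rw [mul_one, add_comm]
          calc _ ≤ ENNReal.ofReal b * (G x * (C₁ * F x ^ (P x - 1) + e x)) := by gcongr
            _ = ENNReal.ofReal (b * Real.exp (A * K)) * (G x * F x ^ (P x - 1)) +
                ENNReal.ofReal b * (G x * e x) := by
                rw [ENNReal.ofReal_mul (by linarith)]; ring
            _ ≤ (2⁻¹ * F x ^ P x + ENNReal.ofReal ((2 * (b * Real.exp (A * K))) ^ b) * G x ^ P x) +
                ENNReal.ofReal b * (G x ^ P x + e x) := by gcongr
            _ = _ := by ring
  have hFfin : ∫⁻ x in Q, F x ^ P x ≠ ∞ := by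
    have hbound : ∀ x ∈ Q, F x ^ P x ≤ (1 + (N + 1 : ℕ) * (2 ^ (N * n) * 2)) ^ b := by
      intro x hx
      calc F x ^ P x ≤ (1 + (N + 1 : ℕ) * (2 ^ (N * n) * 2)) ^ P x := by
            refine ENNReal.rpow_le_rpow ?_ (by linarith [haP x])
            refine le_trans ?_ (le_add_self)
            refine le_trans ?_ (ennreal_sum_dyadicAvg_le hG2 N hx)
            exact Finset.sum_le_sum_of_subset (Finset.range_mono (Nat.le_succ N))
        _ ≤ _ := ENNReal.rpow_le_rpow_of_exponent_le le_self_add (hPb x)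
    refine ne_top_of_le_ne_top ?_ (setLIntegral_mono' hQm hbound)
    rw [setLIntegral_const, hQv, mul_one]
    refine ENNReal.rpow_ne_top_of_nonneg (by linarith) ?_
    exact ENNReal.add_ne_top.2 ⟨by simp, ENNReal.mul_ne_top (by simp)
      (ENNReal.mul_ne_top (by simp) (by simp))⟩
  have hFP : Measurable fun x => F x ^ P x := (hSm N).pow hPm
  rw [lintegral_add_left (hFP.const_mul _), lintegral_const_mul _ hFP] at hT
  set T := ∫⁻ x in Q, F x ^ P x
  have hG' : Measurable fun x => ((ENNReal.ofReal ((2 * (b * Real.exp (A * K))) ^ b) +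
      ENNReal.ofReal b) * G x ^ P x + ENNReal.ofReal b * e x) :=
    ((hGm.pow hPm).const_mul _).add ((measurable_decayW _).const_mul _)
  rw [lintegral_const_mul _ hG']
  set R := ∫⁻ x in Q, ((ENNReal.ofReal ((2 * (b * Real.exp (A * K))) ^ b) +
      ENNReal.ofReal b) * G x ^ P x + ENNReal.ofReal b * e x)
  have h2 : 2⁻¹ * T + 2⁻¹ * T ≤ 2⁻¹ * T + R := by
    rwa [← add_mul, ENNReal.inv_two_add_inv_two, one_mul]
  have h3 : 2⁻¹ * T ≤ R := (ENNReal.add_le_add_iff_left (ENNReal.mul_ne_top (by simp) hFfin)).1 h2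
  calc T = 2 * (2⁻¹ * T) := by
        rw [← mul_assoc, ENNReal.mul_inv_cancel (by simp) (by simp), one_mul]
    _ ≤ 2 * R := by gcongr

theorem exists_lintegral_tsum_dyadicAvg_rpow_le {α : Rn n} {P : Rn n → ℝ} {K a b : ℝ}
    (hPm : Measurable P) (hosc : CellOsc α P K) (ha : 1 < a) (haP : ∀ x, a ≤ P x)
    (hPb : ∀ x, P x ≤ b) : ∃ C : ℝ≥0∞, C ≠ ∞ ∧ ∀ f : ℕ → Rn n → ℝ≥0∞, (∀ ν, Measurable (f ν)) →
      ∫⁻ x, (∑' ν, f ν x) ^ P x ≤ 1 → ∫⁻ x, (∑' ν, dyadicAvg α ν (f ν) x) ^ P x ≤ C := by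
  set A : ℝ := max (n + 2) ((n + 1) / (a - 1)) with hA
  have ha1 : 0 < a - 1 := by linarith
  have hAa : (n : ℝ) < A * (a - 1) := by
    have : (n + 1) / (a - 1) ≤ A := le_max_right _ _
    rw [div_le_iff₀ ha1] at this
    linarith
  refine ⟨2 * ((ENNReal.ofReal ((2 * (b * Real.exp (A * K))) ^ b) +
        ENNReal.ofReal b) * 1 + ENNReal.ofReal b * ∫⁻ x : Rn n, decayW (A * (a - 1)) x), ?_, ?_⟩
  · refine ENNReal.mul_ne_top (by simp) (ENNReal.add_ne_top.2 ⟨by simp,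
      ENNReal.mul_ne_top (by simp) (lintegral_decayW_lt_top hAa).ne⟩)
  intro f hf hG
  have hfin : ∀ N, ∫⁻ x, (∑ ν ∈ Finset.range N, dyadicAvg α ν (f ν) x) ^ P x ≤
      2 * ((ENNReal.ofReal ((2 * (b * Real.exp (A * K))) ^ b) +
        ENNReal.ofReal b) * 1 + ENNReal.ofReal b * ∫⁻ x : Rn n, decayW (A * (a - 1)) x) := by
    intro N
    refine (lintegral_le_of_forall_unit_cell α fun x₀ => setLIntegral_sum_dyadicAvg_rpow_le hPm hosc
      ha haP hPb (A := A) (le_max_left _ _) hf hG N x₀).trans ?_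
    have hGm : Measurable fun x => (∑' ν, f ν x) ^ P x := (Measurable.tsum hf).pow hPm
    rw [lintegral_const_mul' _ _ (by simp),
      lintegral_add_left (hGm.const_mul _), lintegral_const_mul _ hGm,
      lintegral_const_mul _ (measurable_decayW _)]
    gcongr
  refine le_of_tendsto' (lintegral_tendsto_of_tendsto_of_monotone (μ := volume)
    (f := fun N x => (∑ ν ∈ Finset.range N, dyadicAvg α ν (f ν) x) ^ P x) ?_ ?_ ?_) hfin
  · exact fun N => ((Finset.measurable_fun_sum _ fun μ _ =>
      measurable_dyadicAvg α μ (hf μ)).pow hPm).aemeasurable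
  · refine Filter.Eventually.of_forall fun x => fun N M h => ?_
    exact ENNReal.rpow_le_rpow (Finset.sum_le_sum_of_subset (Finset.range_mono h))
      (by linarith [haP x])
  · refine Filter.Eventually.of_forall fun x => ?_
    exact (ENNReal.continuous_rpow_const.tendsto _).comp (ENNReal.tendsto_nat_tsum _)

lemma exists_measurable_argmax {β : Type*} [MeasurableSpace β] {u : ℕ → β → ℝ≥0∞}
    (hu : ∀ ν, Measurable (u ν)) (N : ℕ) : ∃ j : β → ℕ, Measurable j ∧
      (Measurable fun x => u (j x) x) ∧ ∀ x, ∀ ν ≤ N, u ν x ≤ u (j x) x := by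
  classical
  induction N with
  | zero => exact ⟨fun _ => 0, measurable_const, hu 0, by simp⟩
  | succ N ih =>
    obtain ⟨j, hj, hv, hle⟩ := ih
    have hs : MeasurableSet {x | u (j x) x < u (N + 1) x} := measurableSet_lt hv (hu _)
    refine ⟨fun x => if u (j x) x < u (N + 1) x then N + 1 else j x,
      Measurable.ite hs measurable_const hj, ?_, ?_⟩
    · have : (fun x => u (if u (j x) x < u (N + 1) x then N + 1 else j x) x) =
          fun x => if u (j x) x < u (N + 1) x then u (N + 1) x else u (j x) x := by
        ext x
        split_ifs <;> rfl
      rw [this]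
      exact Measurable.ite hs (hu _) hv
    · intro x ν hν
      beta_reduce
      rcases Nat.le_succ_iff.1 hν with h | rfl
      · have := hle x ν h
        split_ifs with h'
        · exact this.trans h'.le
        · exact this
      · split_ifs with h'
        · exact le_rfl
        · exact not_lt.1 h'

lemma abs_conjExponent_sub_le {s t a : ℝ} (ha : 1 < a) (hs : a ≤ s) (ht : a ≤ t) :
    |s.conjExponent - t.conjExponent| ≤ |s - t| / (a - 1) ^ 2 := by
  have hs1 : a - 1 ≤ s - 1 := by linarith
  have ht1 : a - 1 ≤ t - 1 := by linarith
  have ha1 : 0 < a - 1 := by linarith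
  have e : s.conjExponent - t.conjExponent = (t - s) / ((s - 1) * (t - 1)) := by
    unfold Real.conjExponent
    rw [div_sub_div _ _ (by linarith) (by linarith)]
    congr 1
    ring
  rw [e, abs_div, abs_sub_comm, abs_of_pos (mul_pos (ha1.trans_le hs1) (ha1.trans_le ht1)), sq]
  have hs0 : 0 ≤ s - 1 := by linarith
  gcongr

lemma conjExponent_mem_Icc {s a b : ℝ} (ha : 1 < a) (hs : a ≤ s) (hb : s ≤ b) :
    s.conjExponent ∈ Set.Icc b.conjExponent a.conjExponent := by
  unfold Real.conjExponent
  constructor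
  · rw [div_le_div_iff₀ (by linarith) (by linarith)]
    linarith
  · rw [div_le_div_iff₀ (by linarith) (by linarith)]
    linarith

lemma one_lt_conjExponent {b : ℝ} (hb : 1 < b) : 1 < b.conjExponent :=
  (Real.HolderConjugate.conjExponent hb).symm.lt

lemma CellOsc.conjExponent {α : Rn n} {P : Rn n → ℝ} {K a : ℝ} (h : CellOsc α P K) (ha : 1 < a)
    (haP : ∀ x, a ≤ P x) : CellOsc α (fun x => (P x).conjExponent) (K / (a - 1) ^ 2) := by
  intro ν x y hy
  have h1 := abs_conjExponent_sub_le ha (haP x) (haP y)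
  have h2 := one_le_log_exp_add (norm_nonneg x)
  calc _ ≤ |P x - P y| / (a - 1) ^ 2 * (ν + Real.log (Real.exp 1 + ‖x‖)) := by gcongr
    _ = |P x - P y| * (ν + Real.log (Real.exp 1 + ‖x‖)) / (a - 1) ^ 2 := by ring
    _ ≤ _ := by
      gcongr
      exact h ν x y hy

lemma measurable_conjExponent_comp {P : Rn n → ℝ} (hPm : Measurable P) :
    Measurable fun x => (P x).conjExponent := by
  unfold Real.conjExponent
  fun_prop

lemma lintegral_mul_le_add_conjExponent {P : Rn n → ℝ} (hPm : Measurable P) (hP : ∀ x, 1 < P x)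
    {F G : Rn n → ℝ≥0∞} (hF : Measurable F) :
    ∫⁻ x, F x * G x ≤ (∫⁻ x, F x ^ P x) + ∫⁻ x, G x ^ (P x).conjExponent := by
  have hFP : Measurable fun x => F x ^ P x := hF.pow hPm
  rw [← lintegral_add_left hFP]
  exact lintegral_mono fun x =>
    ennreal_mul_le_rpow_add_rpow _ _ (Real.HolderConjugate.conjExponent (hP x))

lemma lintegral_rpow_le_of_div {P : Rn n → ℝ} (hPm : Measurable P) {b : ℝ} (hP0 : ∀ x, 0 ≤ P x)
    (hPb : ∀ x, P x ≤ b) {F : Rn n → ℝ≥0∞} (hF : Measurable F) {c D : ℝ≥0∞} (hc : 1 ≤ c)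
    (hct : c ≠ ∞) (h : ∫⁻ x, (F x / c) ^ P x ≤ D) : ∫⁻ x, F x ^ P x ≤ c ^ b * D := by
  have hc0 : c ≠ 0 := (zero_lt_one.trans_le hc).ne'
  calc ∫⁻ x, F x ^ P x ≤ ∫⁻ x, c ^ b * (F x / c) ^ P x := by
        refine lintegral_mono fun x => ?_
        calc F x ^ P x = (c * (F x / c)) ^ P x := by rw [ENNReal.mul_div_cancel hc0 hct]
          _ = c ^ P x * (F x / c) ^ P x := ENNReal.mul_rpow_of_nonneg _ _ (hP0 x)
          _ ≤ _ := by
            gcongr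
            exact hPb x
    _ = c ^ b * ∫⁻ x, (F x / c) ^ P x := by
        rw [lintegral_const_mul _ ((hF.div_const c).pow hPm)]
    _ ≤ _ := by gcongr

theorem exists_lintegral_iSup_dyadicAvg_rpow_le {α : Rn n} {P : Rn n → ℝ} {K a b : ℝ}
    (hPm : Measurable P) (hosc : CellOsc α P K) (ha : 1 < a) (haP : ∀ x, a ≤ P x)
    (hPb : ∀ x, P x ≤ b) : ∃ C : ℝ≥0∞, C ≠ ∞ ∧ ∀ G : Rn n → ℝ≥0∞, Measurable G →
      ∫⁻ x, G x ^ P x ≤ 1 → ∫⁻ x, (⨆ ν, dyadicAvg α ν G x) ^ P x ≤ C := by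
  have hb : 1 < b := ha.trans_le ((haP 0).trans (hPb 0))
  have hP'm := measurable_conjExponent_comp hPm
  have hP1 : ∀ x, 1 < P x := fun x => ha.trans_le (haP x)
  obtain ⟨C, hC, hCf⟩ := exists_lintegral_tsum_dyadicAvg_rpow_le hP'm (hosc.conjExponent ha haP)
    (one_lt_conjExponent hb) (fun x => (conjExponent_mem_Icc ha (haP x) (hPb x)).1)
    (fun x => (conjExponent_mem_Icc ha (haP x) (hPb x)).2)
  have hD : 1 ≤ 2 * (1 + C) := by
    calc (1 : ℝ≥0∞) ≤ 2 * 1 := by norm_num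
      _ ≤ _ := by gcongr; exact le_self_add
  have hDt : 2 * (1 + C) ≠ ∞ := ENNReal.mul_ne_top (by simp) (by simp [hC])
  refine ⟨(2 * (1 + C)) ^ b * 1, ENNReal.mul_ne_top
    (ENNReal.rpow_ne_top_of_nonneg (by linarith) hDt) (by simp), ?_⟩
  intro G hG hGP
  set u : ℕ → Rn n → ℝ≥0∞ := fun ν => dyadicAvg α ν G with hu
  have hum : ∀ ν, Measurable (u ν) := fun ν => measurable_dyadicAvg α ν hG
  have hfin : ∀ N : ℕ, ∫⁻ x, (⨆ ν, ⨆ (_ : ν ≤ N), u ν x) ^ P x ≤ (2 * (1 + C)) ^ b * 1 := by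
    intro N
    obtain ⟨j, hj, hjm, hle⟩ := exists_measurable_argmax hum N
    refine le_trans (lintegral_mono fun x => ENNReal.rpow_le_rpow (iSup₂_le (hle x))
      (by linarith [hP1 x])) ?_
    refine lintegral_rpow_le_of_div hPm (fun x => by linarith [hP1 x]) hPb hjm hD hDt ?_
    refine lintegral_div_rpow_le_one_of_duality hP'm
      (fun x => Real.HolderConjugate.conjExponent (hP1 x)) hjm (by simp) (by simp [hC]) ?_
    intro g hg hg1
    set gs : ℕ → Rn n → ℝ≥0∞ := fun ν => (j ⁻¹' {ν}).indicator g with hgs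
    have hgsm : ∀ ν, Measurable (gs ν) := fun ν => hg.indicator (hj (measurableSet_singleton ν))
    have hsingle : ∀ (v : ℕ → ℝ≥0∞) x, ∑' ν, v ν * gs ν x = v (j x) * g x := by
      intro v x
      rw [tsum_eq_single (j x)]
      · simp [hgs]
      · intro ν hν
        simp [hgs, hν.symm]
    have hsum : ∀ x, ∑' ν, gs ν x = g x := by
      intro x
      simpa using hsingle (fun _ => 1) x
    calc ∫⁻ x, u (j x) x * g x = ∫⁻ x, ∑' ν, u ν x * gs ν x := by
          refine lintegral_congr fun x => ?_
          rw [hsingle (fun ν => u ν x)]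
      _ = ∑' ν, ∫⁻ x, u ν x * gs ν x :=
          lintegral_tsum fun ν => ((hum ν).mul (hgsm ν)).aemeasurable
      _ = ∑' ν, ∫⁻ x, G x * dyadicAvg α ν (gs ν) x := by
          refine tsum_congr fun ν => ?_
          exact lintegral_dyadicAvg_mul α ν hG (hgsm ν)
      _ = ∫⁻ x, G x * ∑' ν, dyadicAvg α ν (gs ν) x := by
          have hm : ∀ ν, Measurable fun x => G x * dyadicAvg α ν (gs ν) x := fun ν =>
            hG.mul (measurable_dyadicAvg α ν (hgsm ν))
          rw [← lintegral_tsum fun ν => (hm ν).aemeasurable]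
          simp only [ENNReal.tsum_mul_left]
      _ ≤ (∫⁻ x, G x ^ P x) + ∫⁻ x, (∑' ν, dyadicAvg α ν (gs ν) x) ^ (P x).conjExponent :=
          lintegral_mul_le_add_conjExponent hPm hP1 hG
      _ ≤ 1 + C := by
          refine add_le_add hGP (hCf gs hgsm ?_)
          simpa only [hsum] using hg1
  refine le_of_tendsto' (lintegral_tendsto_of_tendsto_of_monotone (μ := volume)
    (f := fun N x => (⨆ ν, ⨆ (_ : ν ≤ N), u ν x) ^ P x) ?_ ?_ ?_) hfin
  · exact fun N => ((Measurable.iSup fun ν => Measurable.iSup_Prop _ (hum ν)).pow hPm).aemeasurable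
  · refine Filter.Eventually.of_forall fun x => fun N M h => ?_
    exact ENNReal.rpow_le_rpow (iSup_mono fun ν => iSup_const_mono fun h' => h'.trans h)
      (by linarith [hP1 x])
  · refine Filter.Eventually.of_forall fun x => ?_
    refine (ENNReal.continuous_rpow_const.tendsto _).comp ?_
    have hmono : Monotone fun N : ℕ => ⨆ ν, ⨆ (_ : ν ≤ N), u ν x := fun N M h =>
      iSup_mono fun ν => iSup_const_mono fun h' => h'.trans h
    have heq : ⨆ N : ℕ, ⨆ ν, ⨆ (_ : ν ≤ N), u ν x = ⨆ ν, u ν x := by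
      refine le_antisymm (iSup_le fun N => iSup₂_le fun ν _ => le_iSup (fun ν => u ν x) ν)
        (iSup_le fun ν => ?_)
      exact le_iSup_of_le ν (le_iSup₂_of_le ν le_rfl le_rfl)
    rw [← heq]
    exact tendsto_atTop_iSup hmono

lemma lintegral_mul_rpow_le_of_lintegral_le_one {β : Type*} [MeasurableSpace β] {μ : Measure β}
    {w φ : β → ℝ≥0∞} (hw : AEMeasurable w μ) (hφ : AEMeasurable φ μ) (hw1 : ∫⁻ x, w x ∂μ ≤ 1)
    {κ : ℝ} (hκ : 1 ≤ κ) : (∫⁻ x, w x * φ x ∂μ) ^ κ ≤ ∫⁻ x, w x * φ x ^ κ ∂μ := by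
  have hκ0 : 0 < κ := by linarith
  have hκ1 : κ⁻¹ ≤ 1 := inv_le_one_of_one_le₀ hκ
  have hm : AEMeasurable (fun x => w x * φ x ^ κ) μ := hw.mul (hφ.pow_const κ)
  have h := ENNReal.lintegral_mul_norm_pow_le hm hw (inv_nonneg.2 hκ0.le) (sub_nonneg.2 hκ1)
    (by ring)
  have e : ∀ x, (w x * φ x ^ κ) ^ κ⁻¹ * w x ^ (1 - κ⁻¹) = w x * φ x := by
    intro x
    rw [ENNReal.mul_rpow_of_nonneg _ _ (inv_nonneg.2 hκ0.le), ← ENNReal.rpow_mul,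
      mul_inv_cancel₀ hκ0.ne', ENNReal.rpow_one, mul_right_comm,
      ← ENNReal.rpow_add_of_nonneg _ _ (inv_nonneg.2 hκ0.le) (sub_nonneg.2 hκ1),
      add_sub_cancel, ENNReal.rpow_one]
  simp only [e] at h
  calc (∫⁻ x, w x * φ x ∂μ) ^ κ
      ≤ ((∫⁻ x, w x * φ x ^ κ ∂μ) ^ κ⁻¹ * (∫⁻ x, w x ∂μ) ^ (1 - κ⁻¹)) ^ κ := by gcongr
    _ ≤ ((∫⁻ x, w x * φ x ^ κ ∂μ) ^ κ⁻¹ * 1) ^ κ := by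
        gcongr
        exact ENNReal.rpow_le_one hw1 (sub_nonneg.2 hκ1)
    _ = _ := by rw [mul_one, ← ENNReal.rpow_mul, inv_mul_cancel₀ hκ0.ne', ENNReal.rpow_one]

lemma dyadicAvg_rpow_le {α : Rn n} {q : Rn n → ℝ} {K : ℝ} (hqm : Measurable q)
    (hosc : CellOsc α q K) (hq : ∀ x, 1 ≤ q x) {f G : Rn n → ℝ≥0∞} (hf : Measurable f)
    (hG : Measurable G) (hfG : ∀ x, f x ≤ G x) (j : ℕ) (x : Rn n) :
    dyadicAvg α j f x ^ q x ≤ ENNReal.ofReal (Real.exp (K + 1)) * (dyadicAvg α j G x ^ (q x - 1) *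
      dyadicAvg α j (fun y => G y * (f y / G y) ^ q y) x) +
      2⁻¹ ^ (j + 1) * dyadicAvg α j G x ^ q x := by
  have hK : 0 ≤ K := by
    have := hosc 0 0 0 (mem_cell_self _ _ _)
    simpa using this
  have hqx := hq x
  set γ := dyadicAvg α j G x with hγ
  rcases eq_or_ne γ ∞ with h | hγt
  · rw [h, ENNReal.top_rpow_of_pos (by linarith : 0 < q x), ENNReal.mul_top (by simp)]
    simp
  have hle : dyadicAvg α j f x ≤ γ := dyadicAvg_mono α j (Filter.Eventually.of_forall hfG) x
  rcases eq_or_ne γ 0 with h | hγ0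
  · rw [h] at hle
    rw [nonpos_iff_eq_zero.1 hle, ENNReal.zero_rpow_of_pos (by linarith)]
    exact zero_le
  have hGfin : ∀ᵐ y ∂volume.restrict (cell α j x), G y < ∞ := by
    refine ae_lt_top hG ?_
    intro h
    rw [hγ, dyadicAvg, h, ENNReal.mul_top (by simp)] at hγt
    exact hγt rfl
  set ρ := dyadicAvg α j f x / γ with hρ
  have hρ1 : ρ ≤ 1 := ENNReal.div_le_of_le_mul (by simpa using hle)
  set κ := q x + (K + 1) / (j + 1 : ℝ) with hκ
  have hj : (0 : ℝ) < j + 1 := by positivity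
  have hκ1 : 1 ≤ κ := by
    have : 0 ≤ (K + 1) / (j + 1 : ℝ) := by positivity
    linarith
  have hqκ : ∀ y ∈ cell α j x, q y ≤ κ := by
    intro y hy
    have h1 := hosc j x y hy
    have h2 := one_le_log_exp_add (norm_nonneg x)
    have h3 : |q x - q y| ≤ (K + 1) / (j + 1 : ℝ) := by
      rw [le_div_iff₀ hj]
      calc |q x - q y| * (j + 1) ≤ |q x - q y| * (j + Real.log (Real.exp 1 + ‖x‖)) := by gcongr
        _ ≤ _ := by linarith
    have := neg_le_of_abs_le h3
    linarith
  set w : Rn n → ℝ≥0∞ := fun y => 2 ^ (j * n) / γ * G y with hw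
  set φ : Rn n → ℝ≥0∞ := fun y => f y / G y with hφ
  have hwm : Measurable w := hG.const_mul _
  have hφm : Measurable φ := hf.div hG
  have hw1 : ∫⁻ y in cell α j x, w y ≤ 1 := by
    rw [lintegral_const_mul _ hG, ENNReal.mul_comm_div, ENNReal.div_eq_inv_mul, ← mul_assoc,
      mul_comm _ γ⁻¹, mul_comm γ⁻¹, mul_right_comm]
    change γ * γ⁻¹ ≤ 1
    exact ENNReal.mul_inv_le_one γ
  have hwφ : ∫⁻ y in cell α j x, w y * φ y = ρ := by
    calc ∫⁻ y in cell α j x, w y * φ y = ∫⁻ y in cell α j x, 2 ^ (j * n) / γ * f y := by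
          refine lintegral_congr_ae (hGfin.mono fun y hy => ?_)
          simp only [hw, hφ]
          rw [mul_assoc]
          congr 1
          rcases eq_or_ne (G y) 0 with h | h
          · have : f y = 0 := nonpos_iff_eq_zero.1 (h ▸ hfG y)
            simp [h, this]
          · exact ENNReal.mul_div_cancel h hy.ne
      _ = ρ := by
          rw [lintegral_const_mul _ hf, hρ, dyadicAvg, ENNReal.mul_div_right_comm]
  have hJ : ρ ^ κ ≤ dyadicAvg α j (fun y => G y * (f y / G y) ^ q y) x / γ := by
    rw [← hwφ]
    refine (lintegral_mul_rpow_le_of_lintegral_le_one hwm.aemeasurable hφm.aemeasurable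
      hw1 hκ1).trans ?_
    have hHm : Measurable fun y => G y * (f y / G y) ^ q y := hG.mul (hφm.pow hqm)
    rw [dyadicAvg, ENNReal.mul_div_right_comm, ← lintegral_const_mul _ hHm]
    refine setLIntegral_mono' (measurableSet_cell α j x) fun y hy => ?_
    simp only [hw, mul_assoc]
    gcongr 2
    exact ENNReal.rpow_le_rpow_of_exponent_ge
      (ENNReal.div_le_of_le_mul (by simpa using hfG y)) (hqκ y hy)
  have hpt : ρ ^ q x ≤ ENNReal.ofReal (Real.exp (K + 1)) * ρ ^ κ + 2⁻¹ ^ (j + 1) := by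
    have h2 : (1 : ℝ) ≤ 2 ^ (j + 1) := one_le_pow₀ (by norm_num)
    have := ennreal_rpow_le_exp_mul_rpow_add (t := ρ) (W := 2 ^ (j + 1)) (A := 1) (K := K + 1)
      (e₀ := 1) (e₁ := q x) (e₂ := κ) h2 (by norm_num) (by norm_num) hqx (by linarith) ?_ ?_
    · rw [one_mul, one_mul, Real.rpow_neg_one, ENNReal.ofReal_inv_of_pos (by positivity),
        ENNReal.ofReal_pow (by norm_num), ENNReal.ofReal_ofNat, ENNReal.inv_pow] at this
      exact this
    · rw [hκ, sub_add_cancel_left, abs_neg, abs_of_nonneg (by positivity), Real.log_pow,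
        Nat.cast_add, Nat.cast_one, div_mul_eq_mul_div, mul_left_comm,
        mul_div_cancel_left₀ _ hj.ne']
      have := Real.log_two_lt_d9
      nlinarith
    · rw [Real.rpow_one]
      exact hρ1.trans (by simpa using ENNReal.ofReal_le_ofReal h2)
  have e1 : γ ^ q x = γ ^ (q x - 1) * γ := by
    conv_rhs => rw [← ENNReal.rpow_one γ, ← ENNReal.rpow_mul, one_mul]
    rw [← ENNReal.rpow_add _ _ hγ0 hγt, sub_add_cancel]
  calc dyadicAvg α j f x ^ q x = γ ^ q x * ρ ^ q x := by
        rw [← ENNReal.mul_rpow_of_nonneg _ _ (by linarith), ENNReal.mul_div_cancel hγ0 hγt]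
    _ ≤ γ ^ q x * (ENNReal.ofReal (Real.exp (K + 1)) *
        (dyadicAvg α j (fun y => G y * (f y / G y) ^ q y) x / γ) + 2⁻¹ ^ (j + 1)) := by
        gcongr
        refine hpt.trans ?_
        gcongr
    _ = ENNReal.ofReal (Real.exp (K + 1)) * (γ ^ (q x - 1) * (γ *
        (dyadicAvg α j (fun y => G y * (f y / G y) ^ q y) x / γ))) + 2⁻¹ ^ (j + 1) * γ ^ q x := by
        rw [mul_add, mul_comm (γ ^ q x) (2⁻¹ ^ (j + 1)), e1]
        ring
    _ = _ := by rw [ENNReal.mul_div_cancel hγ0 hγt]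

lemma floor_eq_or_floor_sub_third_eq {s t : ℝ} {j : ℕ} (h : |s - t| ≤ (2 ^ j)⁻¹ / 4) :
    ⌊(2 : ℝ) ^ j * s⌋ = ⌊(2 : ℝ) ^ j * t⌋ ∨
      ⌊(2 : ℝ) ^ j * (s - 1 / 3)⌋ = ⌊(2 : ℝ) ^ j * (t - 1 / 3)⌋ := by
  wlog hst : s ≤ t generalizing s t
  · have := this (s := t) (t := s) (by rwa [abs_sub_comm]) (le_of_not_ge hst)
    simpa only [eq_comm] using this
  by_contra! hne
  have hp : (0 : ℝ) < 2 ^ j := by positivity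
  have h1 : (2 : ℝ) ^ j * t - 2 ^ j * s ≤ 1 / 4 := by
    have : t - s ≤ (2 ^ j)⁻¹ / 4 := by rw [abs_sub_comm] at h; exact (le_abs_self _).trans h
    calc (2 : ℝ) ^ j * t - 2 ^ j * s = 2 ^ j * (t - s) := by ring
      _ ≤ 2 ^ j * ((2 ^ j)⁻¹ / 4) := by gcongr
      _ = 1 / 4 := by field_simp
  have hlt : ∀ {σ τ : ℝ}, σ ≤ τ → ⌊σ⌋ ≠ ⌊τ⌋ → σ < ⌊τ⌋ := fun hle hne =>
    Int.floor_lt.1 (lt_of_le_of_ne (Int.floor_le_floor hle) hne)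
  have hk := hlt (mul_le_mul_of_nonneg_left hst hp.le) hne.1
  have hl := hlt (mul_le_mul_of_nonneg_left (sub_le_sub_right hst (1 / 3)) hp.le) hne.2
  have hk' := Int.floor_le ((2 : ℝ) ^ j * t)
  have hl' := Int.floor_le ((2 : ℝ) ^ j * (t - 1 / 3))
  set k := ⌊(2 : ℝ) ^ j * t⌋
  set l := ⌊(2 : ℝ) ^ j * (t - 1 / 3)⌋
  have h2 : |((3 * (k - l) - 2 ^ j : ℤ) : ℝ)| < 1 := by
    push_cast
    rw [abs_lt]
    constructor <;> linarith
  have h3 : 3 * (k - l) - 2 ^ j = 0 := by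
    rw [← Int.cast_abs] at h2
    exact Int.abs_lt_one_iff.1 (by exact_mod_cast h2)
  have h4 : (3 : ℤ) ∣ 2 ^ j := ⟨k - l, by linarith⟩
  have h5 : (3 : ℤ) ∣ 2 := Int.prime_three.dvd_of_dvd_pow h4
  norm_num at h5

/-- The `2 ^ n` dyadic grids shifted by a third in some of the coordinates. -/
def thirdShift (b : Fin n → Bool) : Rn n := WithLp.toLp 2 fun i => if b i then 1 / 3 else 0

lemma exists_mem_cell_thirdShift {x y : Rn n} {j : ℕ} (h : ‖x - y‖ ≤ (2 ^ j)⁻¹ / 4) :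
    ∃ b : Fin n → Bool, y ∈ cell (thirdShift b) j x := by
  classical
  refine ⟨fun i => decide (⌊(2 : ℝ) ^ j * y i⌋ ≠ ⌊(2 : ℝ) ^ j * x i⌋), fun i => ?_⟩
  have hi : |y i - x i| ≤ (2 ^ j)⁻¹ / 4 := by
    rw [abs_sub_comm]
    exact (PiLp.norm_apply_le (x - y) i).trans h
  rcases floor_eq_or_floor_sub_third_eq hi with h' | h'
  · simp [thirdShift, h']
  · by_cases h'' : ⌊(2 : ℝ) ^ j * y i⌋ = ⌊(2 : ℝ) ^ j * x i⌋
    · simp [thirdShift, h'']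
    · simpa [thirdShift, h''] using h'

lemma exists_dyadic_scale {t : ℝ} (ht : t ≤ 1 / 4) (ν : ℕ) :
    ∃ j ≤ ν, t ≤ (2 ^ j)⁻¹ / 4 ∧ (j = ν ∨ (2 ^ (j + 1))⁻¹ / 4 < t) := by
  induction ν with
  | zero => exact ⟨0, le_rfl, by simpa using ht, Or.inl rfl⟩
  | succ ν ih =>
    obtain ⟨j, hj, htj, h | h⟩ := ih
    · subst h
      rcases le_or_gt t ((2 ^ (j + 1))⁻¹ / 4) with h' | h'
      · exact ⟨j + 1, le_rfl, h', Or.inl rfl⟩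
      · exact ⟨j, by omega, htj, Or.inr h'⟩
    · exact ⟨j, by omega, htj, Or.inr h⟩

lemma etaK_le_of_scale {m : ℝ} (hm : 0 ≤ m) {ν k j : ℕ} (hjk : j + k = ν) {z : Rn n}
    (h : (2 : ℝ) ^ k / 8 ≤ 1 + 2 ^ ν * ‖z‖) :
    (2 : ℝ) ^ (ν * n) * (1 + 2 ^ ν * ‖z‖) ^ (-m) ≤
      8 ^ m * (((2 : ℝ) ^ (-(m - n))) ^ k * 2 ^ (j * n)) := by
  subst hjk
  have h1 : (1 + 2 ^ (j + k) * ‖z‖) ^ (-m) ≤ ((2 : ℝ) ^ k / 8) ^ (-m) :=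
    Real.rpow_le_rpow_of_nonpos (by positivity) h (by linarith)
  calc (2 : ℝ) ^ ((j + k) * n) * (1 + 2 ^ (j + k) * ‖z‖) ^ (-m)
      ≤ (2 : ℝ) ^ ((j + k) * n) * ((2 : ℝ) ^ k / 8) ^ (-m) := by gcongr
    _ = _ := by
      rw [Real.div_rpow (by positivity) (by positivity), Real.rpow_neg (by norm_num : (0 : ℝ) ≤ 8),
        div_inv_eq_mul, ← Real.rpow_natCast 2 k, ← Real.rpow_mul (by norm_num),
        ← Real.rpow_natCast 2 ((j + k) * n), ← Real.rpow_natCast 2 (j * n),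
        ← Real.rpow_natCast _ k, ← Real.rpow_mul (by norm_num), ← mul_assoc,
        ← Real.rpow_add (by norm_num), mul_comm, ← Real.rpow_add (by norm_num)]
      congr 2
      push_cast
      ring

lemma etaK_le {m : ℝ} (hm : 0 ≤ m) (ν : ℕ) (x y : Rn n) :
    etaK ν m (x - y) ≤ ENNReal.ofReal (8 ^ m) *
      (∑ jk ∈ Finset.HasAntidiagonal.antidiagonal ν, ENNReal.ofReal (2 ^ (-(m - n))) ^ jk.2 *
        ∑ b : Fin n → Bool, 2 ^ (jk.1 * n) * (cell (thirdShift b) jk.1 x).indicator 1 y +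
      ENNReal.ofReal (2 ^ (-(m - n))) ^ ν * etaK 0 m (x - y)) := by
  set t := ‖x - y‖ with ht
  have ht0 : 0 ≤ t := norm_nonneg _
  rcases le_or_gt t (1 / 4) with h | h
  · obtain ⟨j, hj, htj, hor⟩ := exists_dyadic_scale h ν
    obtain ⟨k, rfl⟩ := Nat.exists_eq_add_of_le hj
    obtain ⟨b, hb⟩ := exists_mem_cell_thirdShift htj
    have hk : (2 : ℝ) ^ k / 8 ≤ 1 + 2 ^ (j + k) * t := by
      rcases hor with h' | h'
      · have : k = 0 := by omega
        subst this
        have : (0 : ℝ) ≤ 2 ^ (j + 0) * t := by positivity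
        rw [pow_zero]
        linarith
      · have : (2 : ℝ) ^ (j + k) * ((2 ^ (j + 1))⁻¹ / 4) ≤ 2 ^ (j + k) * t := by gcongr
        have e : (2 : ℝ) ^ (j + k) * ((2 ^ (j + 1))⁻¹ / 4) = 2 ^ k / 8 := by
          rw [pow_add, pow_add]
          field_simp
          norm_num
        linarith
    calc etaK (j + k) m (x - y)
        ≤ ENNReal.ofReal (8 ^ m * (((2 : ℝ) ^ (-(m - n))) ^ k * 2 ^ (j * n))) :=
          ENNReal.ofReal_le_ofReal (etaK_le_of_scale hm rfl hk)
      _ = ENNReal.ofReal (8 ^ m) * (ENNReal.ofReal (2 ^ (-(m - n))) ^ k *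
          (2 ^ (j * n) * (cell (thirdShift b) j x).indicator 1 y)) := by
          rw [ENNReal.ofReal_mul (by positivity), ENNReal.ofReal_mul (by positivity),
            ENNReal.ofReal_pow (by positivity), ENNReal.ofReal_pow (by positivity),
            ENNReal.ofReal_ofNat, Set.indicator_of_mem hb, Pi.one_apply, mul_one]
      _ ≤ _ := by
          gcongr 1
          refine le_trans ?_ le_self_add
          refine le_trans ?_ (Finset.single_le_sum (f := fun jk : ℕ × ℕ =>
            ENNReal.ofReal (2 ^ (-(m - n))) ^ jk.2 * ∑ b : Fin n → Bool, 2 ^ (jk.1 * n) *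
              (cell (thirdShift b) jk.1 x).indicator (1 : Rn n → ℝ≥0∞) y) (fun _ _ => zero_le)
              (Finset.HasAntidiagonal.mem_antidiagonal.2 (rfl : (j, k).1 + (j, k).2 = j + k)))
          gcongr 1
          exact Finset.single_le_sum (f := fun b : Fin n → Bool => (2 : ℝ≥0∞) ^ (j * n) *
              (cell (thirdShift b) j x).indicator (1 : Rn n → ℝ≥0∞) y) (fun _ _ => zero_le)
              (Finset.mem_univ b)
  · refine le_trans ?_ (mul_le_mul_right le_add_self _)
    rw [etaK, etaK, ← ENNReal.ofReal_pow (by positivity), ← ENNReal.ofReal_mul (by positivity),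
      ← ENNReal.ofReal_mul (by positivity)]
    refine ENNReal.ofReal_le_ofReal ?_
    rw [← ht, zero_mul, pow_zero, one_mul, one_mul]
    have h1 : (1 + 2 ^ ν * t) ^ (-m) ≤ ((2 : ℝ) ^ ν * ((1 + t) / 8)) ^ (-m) := by
      refine Real.rpow_le_rpow_of_nonpos (by positivity) ?_ (by linarith)
      have : (2 : ℝ) ^ ν * ((1 + t) / 8) ≤ 2 ^ ν * t := by gcongr; linarith
      linarith
    calc (2 : ℝ) ^ (ν * n) * (1 + 2 ^ ν * t) ^ (-m)
        ≤ (2 : ℝ) ^ (ν * n) * ((2 : ℝ) ^ ν * ((1 + t) / 8)) ^ (-m) := by gcongr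
      _ = _ := by
        rw [Real.mul_rpow (by positivity) (by positivity), Real.div_rpow (by positivity)
          (by positivity), Real.rpow_neg (by norm_num : (0 : ℝ) ≤ 8), div_inv_eq_mul,
          ← Real.rpow_natCast 2 ν, ← Real.rpow_mul (by norm_num), ← Real.rpow_natCast 2 (ν * n),
          ← Real.rpow_natCast _ ν, ← Real.rpow_mul (by norm_num)]
        have e : (2 : ℝ) ^ (-(m - n) * ν) = 2 ^ ((ν * n : ℕ) : ℝ) * 2 ^ (ν * -m) := by
          rw [← Real.rpow_add (by norm_num)]
          congr 1
          push_cast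
          ring
        rw [e]
        ring

lemma measurable_etaK (ν : ℕ) (m : ℝ) : Measurable (etaK (n := n) ν m) := by
  unfold etaK
  fun_prop

lemma lconv_etaK_le {m : ℝ} (hm : 0 ≤ m) (ν : ℕ) {f : Rn n → ℝ≥0∞} (hf : Measurable f) (x : Rn n) :
    lconv (etaK ν m) f x ≤ ENNReal.ofReal (8 ^ m) *
      (∑ jk ∈ Finset.HasAntidiagonal.antidiagonal ν, ENNReal.ofReal (2 ^ (-(m - n))) ^ jk.2 *
        ∑ b : Fin n → Bool, dyadicAvg (thirdShift b) jk.1 f x +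
      ENNReal.ofReal (2 ^ (-(m - n))) ^ ν * lconv (etaK 0 m) f x) := by
  have hterm : ∀ (α : Rn n) (j : ℕ),
      dyadicAvg α j f x = ∫⁻ y, 2 ^ (j * n) * (cell α j x).indicator 1 y * f y := by
    intro α j
    rw [dyadicAvg, ← lintegral_indicator (measurableSet_cell α j x), ← lintegral_const_mul]
    · refine lintegral_congr fun y => ?_
      by_cases h : y ∈ cell α j x <;> simp [h]
    · exact hf.indicator (measurableSet_cell α j x)
  have hi : ∀ (α : Rn n) (j : ℕ),
      Measurable fun y => 2 ^ (j * n) * (cell α j x).indicator (1 : Rn n → ℝ≥0∞) y * f y :=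
    fun α j => ((measurable_one.indicator (measurableSet_cell α j x)).const_mul _).mul hf
  have hη : Measurable fun y => etaK 0 m (x - y) * f y :=
    ((measurable_etaK 0 m).comp (measurable_const.sub measurable_id)).mul hf
  have hs : ∀ jk : ℕ × ℕ, Measurable fun y => ENNReal.ofReal (2 ^ (-(m - n))) ^ jk.2 *
      ∑ b : Fin n → Bool, 2 ^ (jk.1 * n) * (cell (thirdShift b) jk.1 x).indicator 1 y * f y :=
    fun jk => (Finset.measurable_fun_sum _ fun b _ => hi _ _).const_mul _
  simp only [hterm, lconv]
  rw [← lintegral_const_mul _ hη]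
  have e : ∀ jk : ℕ × ℕ, ENNReal.ofReal (2 ^ (-(m - n))) ^ jk.2 * ∑ b : Fin n → Bool,
      ∫⁻ y, 2 ^ (jk.1 * n) * (cell (thirdShift b) jk.1 x).indicator 1 y * f y =
      ∫⁻ y, ENNReal.ofReal (2 ^ (-(m - n))) ^ jk.2 *
      ∑ b : Fin n → Bool, 2 ^ (jk.1 * n) * (cell (thirdShift b) jk.1 x).indicator 1 y * f y := by
    intro jk
    rw [lintegral_const_mul _ (Finset.measurable_fun_sum _ fun b _ => hi _ _),
      lintegral_finsetSum _ fun b _ => hi _ _]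
  simp only [e]
  rw [← lintegral_finsetSum _ fun jk _ => hs jk,
    ← lintegral_add_left (Finset.measurable_fun_sum _ fun jk _ => hs jk),
    ← lintegral_const_mul' _ _ (by simp)]
  refine lintegral_mono fun y => ?_
  calc etaK ν m (x - y) * f y ≤ _ := mul_le_mul_left (etaK_le hm ν x y) _
    _ = _ := by
      rw [mul_assoc, add_mul, Finset.sum_mul]
      simp only [mul_assoc, Finset.sum_mul]

/-- Bounded exponents whose oscillation is logarithmically controlled, locally and at infinity. -/
structure LogExponent (P : Rn n → ℝ) (Pinf a b K : ℝ) : Prop where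
  measurable : Measurable P
  one_lt : 1 < a
  le_apply : ∀ x, a ≤ P x
  apply_le : ∀ x, P x ≤ b
  le_inf : a ≤ Pinf
  inf_le : Pinf ≤ b
  locHolder : ∀ x y, |P x - P y| * Real.log (Real.exp 1 + (dist x y)⁻¹) ≤ K
  decay : ∀ x, |P x - Pinf| * Real.log (Real.exp 1 + ‖x‖) ≤ K
  cellOsc : ∀ α, CellOsc α P K

lemma rpow_le_mul_rpow_add_decayW {t : ℝ≥0∞} (ht : t ≤ 1) {x : Rn n} {A K e₁ e₂ : ℝ} (hA : 0 ≤ A)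
    (h₁ : 1 ≤ e₁) (h₂ : 0 ≤ e₂) (h : |e₁ - e₂| * Real.log (Real.exp 1 + ‖x‖) ≤ K) :
    t ^ e₁ ≤ ENNReal.ofReal (Real.exp (A * K)) * t ^ e₂ + decayW A x := by
  have := ennreal_rpow_le_exp_mul_rpow_add (t := t) (one_le_exp_add_norm x) hA zero_le_one h₁ h₂ h
    (ht.trans (ENNReal.one_le_ofReal.2 (Real.one_le_rpow (one_le_exp_add_norm x) hA)))
  rwa [mul_one] at this

lemma etaK_zero_le_of_mem_cell {m : ℝ} (hm : 0 ≤ m) {α : Rn n} (x : Rn n) {y z : Rn n}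
    (h : z ∈ cell α 0 y) :
    etaK 0 m (x - y) ≤ ENNReal.ofReal ((Real.sqrt n + 2) ^ m) * etaK 0 m (x - z) := by
  rw [etaK, etaK, ← ENNReal.ofReal_mul (by positivity)]
  refine ENNReal.ofReal_le_ofReal ?_
  simp only [zero_mul, pow_zero, one_mul]
  have hd := dist_le_of_mem_cell h
  rw [pow_zero, inv_one, mul_one, dist_eq_norm] at hd
  have hs := Real.sqrt_nonneg n
  have h1 : ‖x - z‖ ≤ ‖x - y‖ + ‖y - z‖ := by
    simpa using norm_add_le (x - y) (y - z)
  have h2 : 1 + ‖x - z‖ ≤ (Real.sqrt n + 2) * (1 + ‖x - y‖) := by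
    nlinarith [norm_nonneg (x - y), mul_nonneg hs (norm_nonneg (x - y))]
  have h3 : ((Real.sqrt n + 2) * (1 + ‖x - y‖)) ^ (-m) ≤ (1 + ‖x - z‖) ^ (-m) :=
    Real.rpow_le_rpow_of_nonpos (by positivity) h2 (by linarith)
  calc (1 + ‖x - y‖) ^ (-m)
      = (Real.sqrt n + 2) ^ m * ((Real.sqrt n + 2) * (1 + ‖x - y‖)) ^ (-m) := by
        rw [Real.mul_rpow (by positivity) (by positivity), ← mul_assoc,
          ← Real.rpow_add (by positivity), add_neg_cancel, Real.rpow_zero, one_mul]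
    _ ≤ _ := by gcongr

lemma lconv_etaK_zero_le {m : ℝ} (hm : 0 ≤ m) (α : Rn n) {G : Rn n → ℝ≥0∞} (hG : Measurable G)
    (x : Rn n) : lconv (etaK 0 m) G x ≤
      ENNReal.ofReal ((Real.sqrt n + 2) ^ m) * lconv (etaK 0 m) (dyadicAvg α 0 G) x := by
  have hη : Measurable fun y => etaK 0 m (x - y) :=
    (measurable_etaK 0 m).comp (measurable_const.sub measurable_id)
  have key : ∀ y, etaK 0 m (x - y) ≤
      ENNReal.ofReal ((Real.sqrt n + 2) ^ m) * dyadicAvg α 0 (fun z => etaK 0 m (x - z)) y := by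
    intro y
    calc etaK 0 m (x - y) = ∫⁻ z in cell α 0 y, etaK 0 m (x - y) := by
          rw [setLIntegral_const, volume_cell, zero_mul, pow_zero, inv_one, mul_one]
      _ ≤ ∫⁻ z in cell α 0 y, ENNReal.ofReal ((Real.sqrt n + 2) ^ m) * etaK 0 m (x - z) :=
          setLIntegral_mono' (measurableSet_cell α 0 y) fun z hz => etaK_zero_le_of_mem_cell hm x hz
      _ = _ := by
          rw [lintegral_const_mul _ hη, dyadicAvg, zero_mul, pow_zero, one_mul]
  calc lconv (etaK 0 m) G x ≤ ∫⁻ y, ENNReal.ofReal ((Real.sqrt n + 2) ^ m) *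
        (dyadicAvg α 0 (fun z => etaK 0 m (x - z)) y * G y) := by
        refine lintegral_mono fun y => ?_
        rw [← mul_assoc]
        exact mul_le_mul_left (key y) _
    _ = _ := by
        rw [lintegral_const_mul' _ _ (by simp), lintegral_dyadicAvg_mul α 0 hη hG, lconv]

lemma lintegral_etaK_zero_lt_top {m : ℝ} (hm : (n : ℝ) < m) :
    ∫⁻ x : Rn n, etaK 0 m x < ∞ := by
  have h0 : 0 < m := (Nat.cast_nonneg n).trans_lt hm
  have := finite_integral_one_add_norm (E := Rn n) (μ := volume) (r := m) (by simpa using hm)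
  refine lt_of_le_of_lt (lintegral_mono fun x => ?_) this
  simp [etaK]

lemma measurable_lconv_etaK (ν : ℕ) (m : ℝ) {G : Rn n → ℝ≥0∞} (hG : Measurable G) :
    Measurable (lconv (etaK ν m) G) := by
  refine Measurable.lintegral_prod_right' (f := fun z : Rn n × Rn n => etaK ν m (z.1 - z.2) * G z.2)
    ?_
  exact ((measurable_etaK ν m).comp (measurable_fst.sub measurable_snd)).mul
    (hG.comp measurable_snd)

lemma lintegral_lintegral_sub_mul {w φ : Rn n → ℝ≥0∞} (hw : Measurable w) (hφ : Measurable φ) :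
    ∫⁻ x, ∫⁻ y, w (x - y) * φ y = (∫⁻ x, w x) * ∫⁻ y, φ y := by
  rw [lintegral_lintegral_swap]
  · rw [← lintegral_const_mul _ hφ]
    refine lintegral_congr fun y => ?_
    have : Measurable fun x => w (x - y) := hw.comp (measurable_id.sub measurable_const)
    rw [lintegral_mul_const _ this, lintegral_sub_right_eq_self w y]
  · exact ((hw.comp (measurable_fst.sub measurable_snd)).mul
      (hφ.comp measurable_snd)).aemeasurable

lemma LogExponent.lintegral_lconv_rpow_le {P : Rn n → ℝ} {Pinf a b K A : ℝ}
    (hP : LogExponent P Pinf a b K) (hA : 0 ≤ A) {w h : Rn n → ℝ≥0∞} (hw : Measurable w)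
    (hw1 : ∫⁻ x, w x ≤ 1) (hh : Measurable h) (hh1 : ∀ x, h x ≤ 1) :
    ∫⁻ x, lconv w h x ^ P x ≤ ENNReal.ofReal (Real.exp (A * K)) *
      (ENNReal.ofReal (Real.exp (A * K)) * (∫⁻ x, h x ^ P x) + ∫⁻ x : Rn n, decayW A x) +
      ∫⁻ x : Rn n, decayW A x := by
  have ha := hP.one_lt
  have hw' : ∀ x, Measurable fun y => w (x - y) :=
    fun x => hw.comp (measurable_const.sub measurable_id)
  have hI : ∀ x, ∫⁻ y, w (x - y) ≤ 1 := by
    intro x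
    rwa [lintegral_sub_left_eq_self]
  have hpow : Measurable fun y => h y ^ Pinf := hh.pow_const _
  have hpow' : Measurable fun y => h y ^ P y := hh.pow hP.measurable
  set E := ENNReal.ofReal (Real.exp (A * K)) with hE
  have hpt : ∀ x, lconv w h x ^ P x ≤ E * (∫⁻ y, w (x - y) * h y ^ Pinf) + decayW A x := by
    intro x
    have h1 : lconv w h x ≤ 1 := by
      refine le_trans (lintegral_mono fun y => ?_) (hI x)
      exact mul_le_of_le_one_right' (hh1 y)
    refine (rpow_le_mul_rpow_add_decayW h1 hA (ha.le.trans (hP.le_apply x))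
      (by linarith [hP.le_inf]) (hP.decay x)).trans ?_
    gcongr
    exact lintegral_mul_rpow_le_of_lintegral_le_one (hw' x).aemeasurable hh.aemeasurable (hI x)
      (ha.le.trans hP.le_inf)
  have hinf : ∫⁻ y, h y ^ Pinf ≤ E * (∫⁻ x, h x ^ P x) + ∫⁻ x : Rn n, decayW A x := by
    have hm1 : Measurable fun y => E * h y ^ P y := hpow'.const_mul _
    rw [← lintegral_const_mul _ hpow', ← lintegral_add_left hm1]
    refine lintegral_mono fun y => ?_
    refine rpow_le_mul_rpow_add_decayW (hh1 y) hA (ha.le.trans hP.le_inf)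
      (by linarith [hP.le_apply y]) ?_
    rw [abs_sub_comm]
    exact hP.decay y
  calc ∫⁻ x, lconv w h x ^ P x
      ≤ ∫⁻ x, E * (∫⁻ y, w (x - y) * h y ^ Pinf) + decayW A x := lintegral_mono hpt
    _ = E * (∫⁻ x, ∫⁻ y, w (x - y) * h y ^ Pinf) + ∫⁻ x : Rn n, decayW A x := by
        rw [lintegral_add_right _ (measurable_decayW A), lintegral_const_mul' _ _ (by simp [hE])]
    _ ≤ _ := by
        rw [lintegral_lintegral_sub_mul hw hpow]
        gcongr
        calc (∫⁻ x, w x) * ∫⁻ y, h y ^ Pinf ≤ 1 * ∫⁻ y, h y ^ Pinf := by gcongr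
          _ ≤ _ := by rwa [one_mul]

theorem LogExponent.exists_lintegral_lconv_etaK_rpow_le {P : Rn n → ℝ} {Pinf a b K m : ℝ}
    (hP : LogExponent P Pinf a b K) (hm : (n : ℝ) < m) :
    ∃ C : ℝ≥0∞, C ≠ ∞ ∧ ∀ G : Rn n → ℝ≥0∞, Measurable G →
      ∫⁻ x, G x ^ P x ≤ 1 → ∫⁻ x, lconv (etaK 0 m) G x ^ P x ≤ C := by
  have ha := hP.one_lt
  have hm0 : 0 ≤ m := (Nat.cast_nonneg n).trans hm.le
  have hP0 : ∀ x, 0 ≤ P x := fun x => by linarith [hP.le_apply x]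
  obtain ⟨C₀, hC₀, hC₀f⟩ := exists_lintegral_tsum_dyadicAvg_rpow_le (α := 0) hP.measurable
    (hP.cellOsc 0) ha hP.le_apply hP.apply_le
  set I := max (∫⁻ x : Rn n, etaK 0 m x) 1 with hI
  have hIt : I ≠ ∞ := (max_lt (lintegral_etaK_zero_lt_top hm) one_lt_top).ne
  have hI1 : 1 ≤ I := le_max_right _ _
  have hI0 : I ≠ 0 := (zero_lt_one.trans_le hI1).ne'
  set c₁ := ENNReal.ofReal ((Real.sqrt n + 2) ^ m) with hc₁
  have hc₁1 : 1 ≤ c₁ := ENNReal.one_le_ofReal.2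
    (Real.one_le_rpow (by linarith [Real.sqrt_nonneg n]) hm0)
  set c := c₁ * (2 * I) with hc
  have hc1 : 1 ≤ c := one_le_mul hc₁1 (one_le_mul one_le_two hI1)
  have hct : c ≠ ∞ := ENNReal.mul_ne_top (by simp [hc₁]) (ENNReal.mul_ne_top (by simp) hIt)
  set E := ENNReal.ofReal (Real.exp ((n + 1) * K)) with hE
  set W := ∫⁻ x : Rn n, decayW (n + 1) x with hW
  have hWt : W ≠ ∞ := (lintegral_decayW_lt_top (by linarith)).ne
  refine ⟨c ^ b * (E * (E * C₀ + W) + W), ?_, fun G hG hG1 => ?_⟩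
  · have hb : 0 ≤ b := (hP0 0).trans (hP.apply_le 0)
    exact ENNReal.mul_ne_top (ENNReal.rpow_ne_top_of_nonneg hb hct)
      (ENNReal.add_ne_top.2 ⟨ENNReal.mul_ne_top (by simp [hE])
        (ENNReal.add_ne_top.2 ⟨ENNReal.mul_ne_top (by simp [hE]) hC₀, hWt⟩), hWt⟩)
  set g := dyadicAvg 0 0 G with hg
  have hgm : Measurable g := measurable_dyadicAvg 0 0 hG
  have hg2 : ∀ x, g x ≤ 2 := by
    intro x
    rw [hg, dyadicAvg, zero_mul, pow_zero, one_mul]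
    calc ∫⁻ y in cell 0 0 x, G y ≤ ∫⁻ y in cell 0 0 x, 1 + G y ^ P y :=
          lintegral_mono fun y => ennreal_le_one_add_rpow _ (ha.le.trans (hP.le_apply y))
      _ = 1 + ∫⁻ y in cell 0 0 x, G y ^ P y := by
          rw [lintegral_add_left measurable_const, setLIntegral_const, volume_cell, zero_mul,
            pow_zero, inv_one, mul_one]
      _ ≤ 1 + 1 := by
          gcongr
          exact (setLIntegral_le_lintegral _ _).trans hG1
      _ = 2 := one_add_one_eq_two
  have hgC : ∫⁻ x, g x ^ P x ≤ C₀ := by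
    have := hC₀f (fun ν => if ν = 0 then G else 0)
      (fun ν => by split_ifs; exacts [hG, measurable_const]) ?_
    · refine le_trans (lintegral_mono fun x => ?_) this
      gcongr
      · exact hP0 x
      · exact ENNReal.le_tsum 0
    · refine le_trans (le_of_eq (lintegral_congr fun x => ?_)) hG1
      congr 1
      rw [tsum_eq_single 0 fun ν hν => by simp [hν]]
      simp
  set h : Rn n → ℝ≥0∞ := fun x => g x / 2 with hh
  have hhm : Measurable h := hgm.div_const 2
  have hh1 : ∀ x, h x ≤ 1 := fun x => ENNReal.div_le_of_le_mul (by simpa using hg2 x)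
  have hhC : ∫⁻ x, h x ^ P x ≤ C₀ := by
    refine le_trans (lintegral_mono fun x => ?_) hgC
    gcongr
    · exact hP0 x
    · exact ENNReal.div_le_of_le_mul (le_mul_of_one_le_right' one_le_two)
  have hwm : Measurable fun x : Rn n => etaK 0 m x / I := (measurable_etaK 0 m).div_const I
  have hmain := hP.lintegral_lconv_rpow_le (A := n + 1) (by positivity) hwm (by
    simp only [div_eq_mul_inv]
    rw [lintegral_mul_const _ (measurable_etaK 0 m), ← div_eq_mul_inv]
    exact ENNReal.div_le_of_le_mul (by simp [hI])) hhm hh1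
  have hconv : ∀ x, lconv (etaK 0 m) G x / c ≤ lconv (fun x => etaK 0 m x / I) h x := by
    intro x
    refine ENNReal.div_le_of_le_mul ?_
    refine (lconv_etaK_zero_le hm0 0 hG x).trans ?_
    rw [hc, mul_comm (lconv _ _ _), mul_assoc]
    gcongr
    rw [lconv, lconv, ← lintegral_const_mul' _ _ (ENNReal.mul_ne_top (by simp) hIt)]
    refine lintegral_mono fun y => le_of_eq ?_
    calc etaK 0 m (x - y) * dyadicAvg 0 0 G y
        = (I * (etaK 0 m (x - y) / I)) * (2 * (g y / 2)) := by
          rw [ENNReal.mul_div_cancel hI0 hIt, ENNReal.mul_div_cancel (by simp) (by simp)]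
      _ = _ := by ring
  refine lintegral_rpow_le_of_div hP.measurable hP0 hP.apply_le
    (measurable_lconv_etaK 0 m hG) hc1 hct ?_
  calc ∫⁻ x, (lconv (etaK 0 m) G x / c) ^ P x
      ≤ ∫⁻ x, lconv (fun x => etaK 0 m x / I) h x ^ P x := by
        refine lintegral_mono fun x => ?_
        gcongr
        · exact hP0 x
        · exact hconv x
    _ ≤ _ := hmain
    _ ≤ _ := by gcongr

lemma tsum_sum_antidiagonal (φ : ℕ × ℕ → ℝ≥0∞) :
    ∑' ν, ∑ jk ∈ Finset.HasAntidiagonal.antidiagonal ν, φ jk = ∑' j, ∑' k, φ (j, k) := by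
  rw [← ENNReal.tsum_prod, ← Finset.HasAntidiagonal.sigmaAntidiagonalEquivProd.tsum_eq,
    ENNReal.tsum_sigma']
  refine tsum_congr fun ν => ?_
  rw [← Finset.tsum_subtype]
  rfl

lemma ennreal_sum_weight_mul_rpow_le {ι : Type*} (s : Finset ι) (w φ : ι → ℝ≥0∞) {r : ℝ}
    (hr : 1 ≤ r) {S : ℝ≥0∞} (hS : ∑ i ∈ s, w i ≤ S) (hS1 : 1 ≤ S) :
    (∑ i ∈ s, w i * φ i) ^ r ≤ S ^ r * ∑ i ∈ s, w i * φ i ^ r := by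
  have hr0 : 0 < r := by linarith
  calc (∑ i ∈ s, w i * φ i) ^ r
      ≤ ((∑ i ∈ s, w i) ^ (1 - r⁻¹) * (∑ i ∈ s, w i * φ i ^ r) ^ r⁻¹) ^ r := by
        gcongr
        exact ENNReal.inner_le_weight_mul_Lp_of_nonneg s hr w φ
    _ ≤ (S * (∑ i ∈ s, w i * φ i ^ r) ^ r⁻¹) ^ r := by
        gcongr
        have h0 : 0 ≤ 1 - r⁻¹ := sub_nonneg.2 (inv_le_one_of_one_le₀ hr)
        calc (∑ i ∈ s, w i) ^ (1 - r⁻¹) ≤ S ^ (1 - r⁻¹) := by gcongr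
          _ ≤ S ^ (1 : ℝ) := by
            refine ENNReal.rpow_le_rpow_of_exponent_le hS1 ?_
            linarith [inv_nonneg.2 hr0.le]
          _ = S := ENNReal.rpow_one S
    _ = _ := by
        rw [ENNReal.mul_rpow_of_nonneg _ _ hr0.le, ← ENNReal.rpow_mul, inv_mul_cancel₀ hr0.ne',
          ENNReal.rpow_one]

lemma ennreal_add_rpow_le_two_rpow (s t : ℝ≥0∞) {r : ℝ} (hr : 1 ≤ r) :
    (s + t) ^ r ≤ 2 ^ r * (s ^ r + t ^ r) := by
  refine (ENNReal.rpow_add_le_mul_rpow_add_rpow s t hr).trans ?_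
  gcongr
  · exact one_le_two
  · linarith

/-- Summation of the `q`-th powers of the local averages that dominate a convolution. -/
lemma tsum_rpow_le_of_le_sum_antidiagonal {ι : Type*} [Fintype ι] [Nonempty ι] {e : ℕ → ℝ≥0∞}
    {d h : ι → ℕ → ℕ → ℝ≥0∞} {κ c E S M : ℝ≥0∞} {r : ℝ} (hr : 1 ≤ r) (hE : 1 ≤ E)
    (hS : ∑' k, κ ^ k = S) (hκ : κ ≤ 1)
    (he : ∀ ν, e ν ≤ c * (∑ jk ∈ Finset.HasAntidiagonal.antidiagonal ν, κ ^ jk.2 *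
      ∑ i, d i jk.1 ν + κ ^ ν * M))
    (hd : ∀ i j ν, d i j ν ^ r ≤ E * (M ^ (r - 1) * h i j ν) + 2⁻¹ ^ (j + 1) * M ^ r) :
    ∑' ν, e ν ^ r ≤ (2 * c * S * Fintype.card ι) ^ r * (2 * E * S * Fintype.card ι) *
      (M + ∑ i, ∑' j, ∑' k, κ ^ k * h i j (j + k)) ^ r := by
  set N : ℝ≥0∞ := (Fintype.card ι : ℝ≥0∞) with hN
  have hN1 : 1 ≤ N := by
    rw [hN]
    exact_mod_cast Fintype.card_pos
  set X := ∑ i, ∑' j, ∑' k, κ ^ k * h i j (j + k) with hX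
  have hr0 : 0 < r := by linarith
  have hS1 : 1 ≤ S := by
    rw [← hS]
    exact (pow_zero κ).symm.trans_le (ENNReal.le_tsum 0)
  have hMX : ∑ i, ∑' j, ∑' k, κ ^ k * (E * (M ^ (r - 1) * h i j (j + k)) + 2⁻¹ ^ (j + 1) * M ^ r) ≤
      E * S * N * (M + X) ^ r := by
    have h1 : ∀ i, ∑' j, ∑' k, κ ^ k * (E * (M ^ (r - 1) * h i j (j + k)) +
        2⁻¹ ^ (j + 1) * M ^ r) = E * M ^ (r - 1) * (∑' j, ∑' k, κ ^ k * h i j (j + k)) +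
        S * M ^ r := by
      intro i
      have h2 : ∀ j, ∑' k, κ ^ k * (E * (M ^ (r - 1) * h i j (j + k)) + 2⁻¹ ^ (j + 1) * M ^ r) =
          E * M ^ (r - 1) * (∑' k, κ ^ k * h i j (j + k)) + 2⁻¹ ^ (j + 1) * (S * M ^ r) := by
        intro j
        rw [← ENNReal.tsum_mul_left, ← hS, ← ENNReal.tsum_mul_right, ← ENNReal.tsum_mul_left,
          ← ENNReal.tsum_add]
        exact tsum_congr fun k => by ring
      simp only [h2]
      rw [ENNReal.tsum_add, ENNReal.tsum_mul_left, ENNReal.tsum_mul_right,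
        ENNReal.tsum_geometric_add_one, ENNReal.one_sub_inv_two, inv_inv,
        ENNReal.inv_mul_cancel two_ne_zero ofNat_ne_top, one_mul]
    simp only [h1]
    rw [Finset.sum_add_distrib, ← Finset.mul_sum, ← hX, Finset.sum_const, Finset.card_univ,
      nsmul_eq_mul, ← hN]
    calc E * M ^ (r - 1) * X + N * (S * M ^ r)
        ≤ E * S * N * (M + X) ^ (r - 1) * X + E * S * N * (M + X) ^ (r - 1) * M := by
          gcongr ?_ + ?_
          · rw [mul_assoc E S N]
            gcongr
            · exact le_mul_of_one_le_right' (one_le_mul hS1 hN1)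
            · exact le_self_add
          · have : M ^ r = M ^ (r - 1) * M := by
              conv_rhs => rw [← ENNReal.rpow_one M, ← ENNReal.rpow_mul]
              rw [one_mul, ← ENNReal.rpow_add_of_nonneg _ _ (by linarith) zero_le_one,
                sub_add_cancel]
            rw [this]
            calc N * (S * (M ^ (r - 1) * M)) = 1 * S * N * M ^ (r - 1) * M := by ring
              _ ≤ _ := by
                gcongr
                exact le_self_add
      _ = E * S * N * ((M + X) ^ (r - 1) * (M + X) ^ (1 : ℝ)) := by rw [ENNReal.rpow_one]; ring
      _ = _ := by
          rw [← ENNReal.rpow_add_of_nonneg _ _ (by linarith) zero_le_one, sub_add_cancel]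
  have hpt : ∀ ν, e ν ^ r ≤ (2 * c * S * N) ^ r *
      (∑ i, ∑ jk ∈ Finset.HasAntidiagonal.antidiagonal ν, κ ^ jk.2 *
        (E * (M ^ (r - 1) * h i jk.1 (jk.1 + jk.2)) + 2⁻¹ ^ (jk.1 + 1) * M ^ r) +
        κ ^ ν * M ^ r) := by
    intro ν
    have hw : ∑ jk ∈ Finset.HasAntidiagonal.antidiagonal ν, κ ^ jk.2 ≤ S := by
      rw [Finset.Nat.sum_antidiagonal_eq_sum_range_succ_mk]
      rw [← Finset.sum_range_reflect, ← hS]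
      refine le_trans (le_of_eq (Finset.sum_congr rfl fun k hk => ?_))
        (ENNReal.sum_le_tsum (Finset.range (ν + 1)))
      congr 1
      have := Finset.mem_range.1 hk
      omega
    have hA : (∑ jk ∈ Finset.HasAntidiagonal.antidiagonal ν, κ ^ jk.2 * ∑ i, d i jk.1 ν) ^ r ≤
        S ^ r * (N ^ r * ∑ i, ∑ jk ∈ Finset.HasAntidiagonal.antidiagonal ν, κ ^ jk.2 *
        (E * (M ^ (r - 1) * h i jk.1 (jk.1 + jk.2)) + 2⁻¹ ^ (jk.1 + 1) * M ^ r)) := by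
      refine (ennreal_sum_weight_mul_rpow_le _ _ _ hr hw hS1).trans ?_
      gcongr
      rw [Finset.sum_comm, Finset.mul_sum]
      refine Finset.sum_le_sum fun jk hjk => ?_
      rw [← Finset.mul_sum, mul_left_comm]
      gcongr
      have h3 := ennreal_sum_weight_mul_rpow_le (Finset.univ : Finset ι) (fun _ => 1)
        (fun i => d i jk.1 ν) hr (S := N) (by simp [hN]) hN1
      simp only [one_mul] at h3
      refine h3.trans ?_
      gcongr with i
      rw [Finset.HasAntidiagonal.mem_antidiagonal.1 hjk]
      exact hd i jk.1 ν
    have hB : (κ ^ ν * M) ^ r ≤ κ ^ ν * M ^ r := by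
      rw [ENNReal.mul_rpow_of_nonneg _ _ hr0.le]
      gcongr
      calc (κ ^ ν) ^ r ≤ (κ ^ ν) ^ (1 : ℝ) :=
            ENNReal.rpow_le_rpow_of_exponent_ge (pow_le_one₀ zero_le hκ) hr
        _ = _ := ENNReal.rpow_one _
    calc e ν ^ r ≤ (c * (∑ jk ∈ Finset.HasAntidiagonal.antidiagonal ν, κ ^ jk.2 *
          ∑ i, d i jk.1 ν + κ ^ ν * M)) ^ r := by
          gcongr
          exact he ν
      _ ≤ c ^ r * (2 ^ r * (S ^ r * (N ^ r * ∑ i, ∑ jk ∈ Finset.HasAntidiagonal.antidiagonal ν,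
          κ ^ jk.2 * (E * (M ^ (r - 1) * h i jk.1 (jk.1 + jk.2)) + 2⁻¹ ^ (jk.1 + 1) * M ^ r)) +
          κ ^ ν * M ^ r)) := by
          rw [ENNReal.mul_rpow_of_nonneg _ _ hr0.le]
          gcongr
          refine (ennreal_add_rpow_le_two_rpow _ _ hr).trans ?_
          gcongr
      _ ≤ c ^ r * (2 ^ r * (S ^ r * (N ^ r * ∑ i, ∑ jk ∈ Finset.HasAntidiagonal.antidiagonal ν,
          κ ^ jk.2 * (E * (M ^ (r - 1) * h i jk.1 (jk.1 + jk.2)) + 2⁻¹ ^ (jk.1 + 1) * M ^ r)) +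
          S ^ r * (N ^ r * (κ ^ ν * M ^ r)))) := by
          gcongr c ^ r * (2 ^ r * (_ + ?_))
          rw [← mul_assoc (S ^ r)]
          exact le_mul_of_one_le_left' (one_le_mul (ENNReal.one_le_rpow hS1 hr0)
            (ENNReal.one_le_rpow hN1 hr0))
      _ = _ := by
          rw [ENNReal.mul_rpow_of_nonneg _ _ hr0.le, ENNReal.mul_rpow_of_nonneg _ _ hr0.le,
            ENNReal.mul_rpow_of_nonneg _ _ hr0.le]
          ring
  calc ∑' ν, e ν ^ r ≤ _ := ENNReal.tsum_le_tsum hpt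
    _ = (2 * c * S * N) ^ r * (∑ i, ∑' j, ∑' k, κ ^ k * (E * (M ^ (r - 1) * h i j (j + k)) +
          2⁻¹ ^ (j + 1) * M ^ r) + S * M ^ r) := by
        rw [ENNReal.tsum_mul_left, ENNReal.tsum_add, ENNReal.tsum_mul_right, hS,
          Summable.tsum_finsetSum fun _ _ => ENNReal.summable]
        congr 3
        funext i
        exact tsum_sum_antidiagonal fun jk : ℕ × ℕ => κ ^ jk.2 *
          (E * (M ^ (r - 1) * h i jk.1 (jk.1 + jk.2)) + 2⁻¹ ^ (jk.1 + 1) * M ^ r)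
    _ ≤ (2 * c * S * N) ^ r * (E * S * N * (M + X) ^ r + E * S * N * (M + X) ^ r) := by
        gcongr
        · calc S = 1 * S * 1 := by ring
            _ ≤ E * S * N := by gcongr
        · exact le_self_add
    _ = _ := by ring

/-- The pointwise `ℓ^q` norm of a sequence of functions, for a finite variable exponent. -/
def lqSum (q : Rn n → ℝ) (f : ℕ → Rn n → ℝ≥0∞) (x : Rn n) : ℝ≥0∞ :=
  (∑' ν, f ν x ^ q x) ^ (1 / q x)

lemma measurable_lqSum {q : Rn n → ℝ} (hq : Measurable q) {f : ℕ → Rn n → ℝ≥0∞}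
    (hf : ∀ ν, Measurable (f ν)) : Measurable (lqSum q f) :=
  (Measurable.tsum fun ν => (hf ν).pow hq).pow (measurable_const.div hq)

lemma lqSum_rpow {q : Rn n → ℝ} (f : ℕ → Rn n → ℝ≥0∞) {x : Rn n} (hq : 0 < q x) :
    lqSum q f x ^ q x = ∑' ν, f ν x ^ q x := by
  rw [lqSum, ← ENNReal.rpow_mul, one_div_mul_cancel hq.ne', ENNReal.rpow_one]

lemma lqSum_le_iff {q : Rn n → ℝ} {f : ℕ → Rn n → ℝ≥0∞} {x : Rn n} (hq : 0 < q x) {t : ℝ≥0∞} :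
    lqSum q f x ≤ t ↔ ∑' ν, f ν x ^ q x ≤ t ^ q x := by
  rw [← lqSum_rpow f hq, ENNReal.rpow_le_rpow_iff hq]

lemma le_lqSum {q : Rn n → ℝ} (f : ℕ → Rn n → ℝ≥0∞) {x : Rn n} (hq : 0 < q x) (ν : ℕ) :
    f ν x ≤ lqSum q f x := by
  rw [← ENNReal.rpow_le_rpow_iff hq, lqSum_rpow f hq]
  exact ENNReal.le_tsum ν

lemma tsum_lqSum_mul_div_rpow_le {q : Rn n → ℝ} (f : ℕ → Rn n → ℝ≥0∞) {x : Rn n} (hq : 0 < q x) :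
    ∑' ν, lqSum q f x * (f ν x / lqSum q f x) ^ q x ≤ lqSum q f x := by
  rw [ENNReal.tsum_mul_left]
  rcases eq_or_ne (lqSum q f x) ∞ with h | h
  · simp [h]
  refine mul_le_of_le_one_right' ?_
  simp only [ENNReal.div_rpow_of_nonneg _ _ hq.le]
  simp only [div_eq_mul_inv]
  rw [ENNReal.tsum_mul_right, ← lqSum_rpow f hq, ← div_eq_mul_inv]
  exact ENNReal.div_self_le_one

lemma dyadicAvg_tsum_mul (α : Rn n) (j : ℕ) (c : ℕ → ℝ≥0∞) {f : ℕ → Rn n → ℝ≥0∞}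
    (hf : ∀ k, Measurable (f k)) (x : Rn n) :
    dyadicAvg α j (fun y => ∑' k, c k * f k y) x = ∑' k, c k * dyadicAvg α j (f k) x := by
  have hm : ∀ k, Measurable fun y => c k * f k y := fun k => (hf k).const_mul _
  rw [dyadicAvg, lintegral_tsum fun k => (hm k).aemeasurable, ← ENNReal.tsum_mul_left]
  refine tsum_congr fun k => ?_
  rw [lintegral_const_mul _ (hf k), dyadicAvg]
  ring

lemma lintegral_add_rpow_le {P : Rn n → ℝ} {b : ℝ} (hPm : Measurable P) (h1 : ∀ x, 1 ≤ P x)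
    (hb : ∀ x, P x ≤ b) {s : Rn n → ℝ≥0∞} (hs : Measurable s) (t : Rn n → ℝ≥0∞) :
    ∫⁻ x, (s x + t x) ^ P x ≤ 2 ^ b * ((∫⁻ x, s x ^ P x) + ∫⁻ x, t x ^ P x) := by
  have hsP : Measurable fun x => s x ^ P x := hs.pow hPm
  have hb0 : 0 ≤ b := by linarith [h1 0, hb 0]
  rw [← lintegral_add_left hsP, ← lintegral_const_mul' _ _
    (ENNReal.rpow_ne_top_of_nonneg hb0 (by simp))]
  refine lintegral_mono fun x => (ennreal_add_rpow_le_two_rpow _ _ (h1 x)).trans ?_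
  gcongr
  · exact one_le_two
  · exact hb x

lemma lintegral_sum_rpow_le {ι : Type*} [Fintype ι] [Nonempty ι] {P : Rn n → ℝ} {b : ℝ}
    (hPm : Measurable P) (h1 : ∀ x, 1 ≤ P x) (hb : ∀ x, P x ≤ b) {s : ι → Rn n → ℝ≥0∞}
    (hs : ∀ i, Measurable (s i)) :
    ∫⁻ x, (∑ i, s i x) ^ P x ≤ (Fintype.card ι : ℝ≥0∞) ^ b * ∑ i, ∫⁻ x, s i x ^ P x := by
  have hN1 : (1 : ℝ≥0∞) ≤ Fintype.card ι := by exact_mod_cast Fintype.card_pos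
  have hsP : ∀ i, Measurable fun x => s i x ^ P x := fun i => (hs i).pow hPm
  have hb0 : 0 ≤ b := by linarith [h1 0, hb 0]
  rw [← lintegral_finsetSum _ fun i _ => hsP i, ← lintegral_const_mul' _ _
    (ENNReal.rpow_ne_top_of_nonneg hb0 (by simp))]
  refine lintegral_mono fun x => ?_
  have := ennreal_sum_weight_mul_rpow_le (Finset.univ : Finset ι) (fun _ => 1) (fun i => s i x)
    (h1 x) (S := Fintype.card ι) (by simp) hN1
  simp only [one_mul] at this
  refine this.trans ?_
  gcongr
  exact hb x

lemma ennreal_tsum_tsum_add_le (c : ℕ → ℝ≥0∞) (H : ℕ → ℝ≥0∞) :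
    ∑' j, ∑' k, c k * H (j + k) ≤ (∑' k, c k) * ∑' ν, H ν := by
  rw [ENNReal.tsum_comm, ← ENNReal.tsum_mul_right]
  refine ENNReal.tsum_le_tsum fun k => ?_
  rw [ENNReal.tsum_mul_left]
  gcongr c k * ?_
  exact ENNReal.tsum_comp_le_tsum_of_injective (add_left_injective k) H

/-- The convolution inequality in `L^{P(·)}(ℓ^{q(·)})`, in terms of modulars. -/
theorem LogExponent.exists_lintegral_lqSum_lconv_rpow_le {P q : Rn n → ℝ} {Pinf a b K Kq m : ℝ}
    (hP : LogExponent P Pinf a b K) (hqm : Measurable q) (hqosc : ∀ α, CellOsc α q Kq)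
    (hq : ∀ x, 1 ≤ q x) (hm : (n : ℝ) < m) :
    ∃ C : ℝ≥0∞, C ≠ ∞ ∧ ∀ f : ℕ → Rn n → ℝ≥0∞, (∀ ν, Measurable (f ν)) →
      ∫⁻ x, lqSum q f x ^ P x ≤ 1 →
        ∫⁻ x, lqSum q (fun ν => lconv (etaK ν m) (f ν)) x ^ P x ≤ C := by
  have ha := hP.one_lt
  have hm0 : 0 ≤ m := (Nat.cast_nonneg n).trans hm.le
  have hP1 : ∀ x, 1 ≤ P x := fun x => by linarith [hP.le_apply x]
  have hP0 : ∀ x, 0 ≤ P x := fun x => by linarith [hP.le_apply x]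
  have hq0 : ∀ x, 0 < q x := fun x => by linarith [hq x]
  have hb0 : 0 ≤ b := (hP0 0).trans (hP.apply_le 0)
  have hKq : 0 ≤ Kq := by
    have := hqosc 0 0 0 0 (mem_cell_self _ _ _)
    simpa using this
  choose C₁ hC₁ hC₁f using fun i : Fin n → Bool => exists_lintegral_tsum_dyadicAvg_rpow_le
    (α := thirdShift i) hP.measurable (hP.cellOsc _) ha hP.le_apply hP.apply_le
  choose C₂ hC₂ hC₂f using fun i : Fin n → Bool => exists_lintegral_iSup_dyadicAvg_rpow_le
    (α := thirdShift i) hP.measurable (hP.cellOsc _) ha hP.le_apply hP.apply_le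
  obtain ⟨C₃, hC₃, hC₃f⟩ := hP.exists_lintegral_lconv_etaK_rpow_le hm
  set κ := ENNReal.ofReal (2 ^ (-(m - n))) with hκ
  have hκ1 : κ < 1 := by
    rw [hκ, ENNReal.ofReal_lt_one]
    exact Real.rpow_lt_one_of_one_lt_of_neg one_lt_two (by linarith)
  set S := ∑' k : ℕ, κ ^ k with hS
  have hSt : S ≠ ∞ := by
    rw [hS, ENNReal.tsum_geometric]
    exact ENNReal.inv_ne_top.2 (tsub_pos_of_lt hκ1).ne'
  have hS1 : 1 ≤ S := (pow_zero κ).symm.trans_le (ENNReal.le_tsum 0)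
  have hS0 : S ≠ 0 := (zero_lt_one.trans_le hS1).ne'
  set N : ℝ≥0∞ := (Fintype.card (Fin n → Bool) : ℝ≥0∞) with hN
  have hN1 : 1 ≤ N := by
    rw [hN]
    exact_mod_cast Fintype.card_pos
  have hNt : N ≠ ∞ := by simp [hN]
  set E := ENNReal.ofReal (Real.exp (Kq + 1)) with hE
  have hE1 : 1 ≤ E := ENNReal.one_le_ofReal.2 (Real.one_le_exp (by linarith))
  have hEt : E ≠ ∞ := by simp [hE]
  set c₀ := ENNReal.ofReal (8 ^ m) with hc₀
  have hc₀1 : 1 ≤ c₀ := ENNReal.one_le_ofReal.2 (Real.one_le_rpow (by norm_num) hm0)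
  have hc₀t : c₀ ≠ ∞ := by simp [hc₀]
  set D := 2 * c₀ * S * N * (2 * E * S * N) * S with hD
  have hE2 : 1 ≤ 2 * E * S * N :=
    one_le_mul (one_le_mul (one_le_mul one_le_two hE1) hS1) hN1
  have hD1 : 1 ≤ D :=
    one_le_mul (one_le_mul (one_le_mul (one_le_mul (one_le_mul one_le_two hc₀1) hS1) hN1) hE2) hS1
  have hDt : D ≠ ∞ := by
    rw [hD]
    exact ENNReal.mul_ne_top (ENNReal.mul_ne_top (ENNReal.mul_ne_top (ENNReal.mul_ne_top
      (ENNReal.mul_ne_top (by simp) hc₀t) hSt) hNt) (ENNReal.mul_ne_top (ENNReal.mul_ne_top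
      (ENNReal.mul_ne_top (by simp) hEt) hSt) hNt)) hSt
  refine ⟨D ^ b * (2 ^ b * (2 ^ b * (N ^ b * (∑ i, C₂ i) + C₃) + N ^ b * ∑ i, C₁ i)), ?_,
    fun f hf hG1 => ?_⟩
  · have h2b : (2 : ℝ≥0∞) ^ b ≠ ∞ := ENNReal.rpow_ne_top_of_nonneg hb0 (by simp)
    have hNb : N ^ b ≠ ∞ := ENNReal.rpow_ne_top_of_nonneg hb0 hNt
    have h1 : ∑ i, C₁ i ≠ ∞ := ENNReal.sum_ne_top.2 fun i _ => hC₁ i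
    have h2 : ∑ i, C₂ i ≠ ∞ := ENNReal.sum_ne_top.2 fun i _ => hC₂ i
    exact ENNReal.mul_ne_top (ENNReal.rpow_ne_top_of_nonneg hb0 hDt) (ENNReal.mul_ne_top h2b
      (ENNReal.add_ne_top.2 ⟨ENNReal.mul_ne_top h2b (ENNReal.add_ne_top.2
        ⟨ENNReal.mul_ne_top hNb h2, hC₃⟩), ENNReal.mul_ne_top hNb h1⟩))
  set G := lqSum q f with hG
  have hGm : Measurable G := measurable_lqSum hqm hf
  set H : ℕ → Rn n → ℝ≥0∞ := fun ν y => G y * (f ν y / G y) ^ q y with hH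
  have hHm : ∀ ν, Measurable (H ν) := fun ν => hGm.mul (((hf ν).div hGm).pow hqm)
  set J : ℕ → Rn n → ℝ≥0∞ := fun j y => ∑' k, κ ^ k / S * H (j + k) y with hJ
  have hJm : ∀ j, Measurable (J j) := fun j =>
    Measurable.tsum fun k => (hHm (j + k)).const_mul _
  have hJG : ∀ y, ∑' j, J j y ≤ G y := by
    intro y
    calc ∑' j, J j y ≤ (∑' k, κ ^ k / S) * ∑' ν, H ν y := ennreal_tsum_tsum_add_le _ fun ν => H ν y
      _ ≤ 1 * G y := by
        gcongr
        · simp only [div_eq_mul_inv]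
          rw [ENNReal.tsum_mul_right, ← div_eq_mul_inv]
          exact ENNReal.div_self_le_one
        · exact tsum_lqSum_mul_div_rpow_le f (hq0 y)
      _ = G y := one_mul _
  set A : (Fin n → Bool) → Rn n → ℝ≥0∞ := fun i x => ⨆ j, dyadicAvg (thirdShift i) j G x with hA
  have hAm : ∀ i, Measurable (A i) := fun i => Measurable.iSup fun j => measurable_dyadicAvg _ j hGm
  set T : (Fin n → Bool) → Rn n → ℝ≥0∞ := fun i x => ∑' j, dyadicAvg (thirdShift i) j (J j) x
    with hT
  have hTm : ∀ i, Measurable (T i) := fun i =>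
    Measurable.tsum fun j => measurable_dyadicAvg _ j (hJm j)
  set B : Rn n → ℝ≥0∞ := lconv (etaK 0 m) G with hB
  have hBm : Measurable B := measurable_lconv_etaK 0 m hGm
  have hAsum : Measurable fun x => ∑ i, A i x := Finset.measurable_fun_sum _ fun i _ => hAm i
  have hAB : Measurable fun x => ∑ i, A i x + B x := hAsum.add hBm
  have hpt : ∀ x, lqSum q (fun ν => lconv (etaK ν m) (f ν)) x / D ≤
      ∑ i, A i x + B x + ∑ i, T i x := by
    intro x
    refine ENNReal.div_le_of_le_mul' ?_
    have hle : ∀ i j, dyadicAvg (thirdShift i) j G x ≤ ∑ i, A i x + B x := fun i j =>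
      ((le_iSup (fun j => dyadicAvg (thirdShift i) j G x) j).trans
        (Finset.single_le_sum (f := fun i => A i x) (fun _ _ => zero_le)
          (Finset.mem_univ i))).trans le_self_add
    have hsum := tsum_rpow_le_of_le_sum_antidiagonal (ι := Fin n → Bool)
      (e := fun ν => lconv (etaK ν m) (f ν) x)
      (d := fun i j ν => dyadicAvg (thirdShift i) j (f ν) x)
      (h := fun i j ν => dyadicAvg (thirdShift i) j (H ν) x) (κ := κ) (c := c₀) (E := E) (S := S)
      (M := ∑ i, A i x + B x) (hq x) hE1 rfl hκ1.le
      (fun ν => by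
        refine (lconv_etaK_le hm0 ν (hf ν) x).trans ?_
        gcongr
        refine le_trans (lintegral_mono fun y => ?_) le_add_self
        gcongr
        exact le_lqSum f (hq0 y) ν)
      (fun i j ν => by
        refine (dyadicAvg_rpow_le hqm (hqosc _) hq (hf ν) hGm
          (fun y => le_lqSum f (hq0 y) ν) j x).trans ?_
        gcongr
        · linarith [hq x]
        · exact hle i j
        · exact (hq0 x).le
        · exact hle i j)
    have hX : ∑ i : Fin n → Bool, ∑' j, ∑' k, κ ^ k * dyadicAvg (thirdShift i) j (H (j + k)) x =
        S * ∑ i, T i x := by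
      rw [Finset.mul_sum]
      refine Finset.sum_congr rfl fun i _ => ?_
      rw [hT, ← ENNReal.tsum_mul_left]
      refine tsum_congr fun j => ?_
      rw [hJ, dyadicAvg_tsum_mul _ _ _ (fun k => hHm (j + k)), ← ENNReal.tsum_mul_left]
      refine tsum_congr fun k => ?_
      rw [← mul_assoc, ENNReal.mul_div_cancel hS0 hSt]
    rw [hX] at hsum
    refine (lqSum_le_iff (hq0 x)).2 (hsum.trans ?_)
    calc (2 * c₀ * S * N) ^ q x * (2 * E * S * N) * (∑ i, A i x + B x + S * ∑ i, T i x) ^ q x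
        ≤ (2 * c₀ * S * N) ^ q x * (2 * E * S * N) ^ q x *
          (S * (∑ i, A i x + B x + ∑ i, T i x)) ^ q x := by
          rw [mul_add S]
          gcongr
          · calc 2 * E * S * N = (2 * E * S * N) ^ (1 : ℝ) := (ENNReal.rpow_one _).symm
              _ ≤ _ := ENNReal.rpow_le_rpow_of_exponent_le hE2 (hq x)
          · exact (hq0 x).le
          · exact le_mul_of_one_le_left' hS1
      _ = _ := by
          rw [← ENNReal.mul_rpow_of_nonneg _ _ (hq0 x).le,
            ← ENNReal.mul_rpow_of_nonneg _ _ (hq0 x).le, ← mul_assoc, hD]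
  refine lintegral_rpow_le_of_div hP.measurable hP0 hP.apply_le
    (measurable_lqSum hqm fun ν => measurable_lconv_etaK ν m (hf ν)) hD1 hDt ?_
  calc ∫⁻ x, (lqSum q (fun ν => lconv (etaK ν m) (f ν)) x / D) ^ P x
      ≤ ∫⁻ x, (∑ i, A i x + B x + ∑ i, T i x) ^ P x := by
        refine lintegral_mono fun x => ?_
        gcongr
        · exact hP0 x
        · exact hpt x
    _ ≤ 2 ^ b * ((∫⁻ x, (∑ i, A i x + B x) ^ P x) + ∫⁻ x, (∑ i, T i x) ^ P x) :=
        lintegral_add_rpow_le hP.measurable hP1 hP.apply_le hAB _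
    _ ≤ 2 ^ b * (2 ^ b * ((∫⁻ x, (∑ i, A i x) ^ P x) + ∫⁻ x, B x ^ P x) +
          ∫⁻ x, (∑ i, T i x) ^ P x) := by
        gcongr
        exact lintegral_add_rpow_le hP.measurable hP1 hP.apply_le hAsum _
    _ ≤ 2 ^ b * (2 ^ b * (N ^ b * (∑ i, ∫⁻ x, A i x ^ P x) + ∫⁻ x, B x ^ P x) +
          N ^ b * ∑ i, ∫⁻ x, T i x ^ P x) := by
        gcongr
        · exact lintegral_sum_rpow_le hP.measurable hP1 hP.apply_le hAm
        · exact lintegral_sum_rpow_le hP.measurable hP1 hP.apply_le hTm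
    _ ≤ _ := by
        gcongr with i _ i _
        · exact hC₂f i G hGm hG1
        · exact hC₃f G hGm hG1
        · refine hC₁f i J hJm (le_trans (lintegral_mono fun x => ?_) hG1)
          gcongr
          · exact hP0 x
          · exact hJG x

lemma LogExponent.conjExponent {P : Rn n → ℝ} {Pinf a b K : ℝ} (hP : LogExponent P Pinf a b K) :
    LogExponent (fun x => (P x).conjExponent) Pinf.conjExponent b.conjExponent a.conjExponent
      (K / (a - 1) ^ 2) := by
  have ha := hP.one_lt
  have hb : 1 < b := ha.trans_le ((hP.le_apply 0).trans (hP.apply_le 0))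
  have key : ∀ {s t l : ℝ}, a ≤ s → a ≤ t → 0 ≤ l → |s - t| * l ≤ K →
      |s.conjExponent - t.conjExponent| * l ≤ K / (a - 1) ^ 2 := by
    intro s t l hs ht hl h
    calc |s.conjExponent - t.conjExponent| * l ≤ |s - t| / (a - 1) ^ 2 * l := by
          gcongr
          exact abs_conjExponent_sub_le ha hs ht
      _ = |s - t| * l / (a - 1) ^ 2 := by ring
      _ ≤ _ := by gcongr
  refine ⟨measurable_conjExponent_comp hP.measurable, one_lt_conjExponent hb,
    fun x => (conjExponent_mem_Icc ha (hP.le_apply x) (hP.apply_le x)).1,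
    fun x => (conjExponent_mem_Icc ha (hP.le_apply x) (hP.apply_le x)).2,
    (conjExponent_mem_Icc ha hP.le_inf hP.inf_le).1,
    (conjExponent_mem_Icc ha hP.le_inf hP.inf_le).2, fun x y => ?_, fun x => ?_,
    fun α => (hP.cellOsc α).conjExponent ha hP.le_apply⟩
  · exact key (hP.le_apply x) (hP.le_apply y)
      (zero_le_one.trans (one_le_log_exp_add (inv_nonneg.2 dist_nonneg))) (hP.locHolder x y)
  · exact key (hP.le_apply x) hP.le_inf
      (zero_le_one.trans (one_le_log_exp_add (norm_nonneg x))) (hP.decay x)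

/-- The size of the norm of the indicator of `B_r(x)` in `L^{P(·)}`. -/
def ballScale (P : Rn n → ℝ) (Pinf : ℝ) (x : Rn n) (r : ℝ) : ℝ :=
  r ^ (n / P x : ℝ) * max 1 r ^ (n / Pinf - n / P x : ℝ)

lemma ballScale_pos (P : Rn n → ℝ) (Pinf : ℝ) (x : Rn n) {r : ℝ} (hr : 0 < r) :
    0 < ballScale P Pinf x r := by
  have : 0 < max 1 r := by positivity
  unfold ballScale
  positivity

lemma ballScale_mul_ballScale_conjExponent {P : Rn n → ℝ} {Pinf : ℝ} {x : Rn n} (hP : 1 < P x)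
    (hPinf : 1 < Pinf) {r : ℝ} (hr : 0 < r) :
    ballScale P Pinf x r * ballScale (fun x => (P x).conjExponent) Pinf.conjExponent x r =
      r ^ (n : ℝ) := by
  have hm : 0 < max 1 r := by positivity
  have e : ∀ {s : ℝ}, 1 < s → (n / s.conjExponent : ℝ) = n - n / s := by
    intro s hs
    rw [Real.conjExponent]
    field_simp
  unfold ballScale
  rw [e hP, e hPinf, mul_mul_mul_comm, ← Real.rpow_add hr, ← Real.rpow_add hm]
  have h1 : (n / P x + (n - n / P x) : ℝ) = n := by ring
  have h2 : (n / Pinf - n / P x + (n - n / Pinf - (n - n / P x)) : ℝ) = 0 := by ring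
  rw [h1, h2, Real.rpow_zero, mul_one]

lemma volume_ball_mul_rpow_neg (x : Rn n) {r : ℝ} (hr : 0 < r) :
    ENNReal.ofReal (r ^ (-n : ℝ)) * volume (Metric.ball x r) =
      volume (Metric.ball (0 : Rn n) 1) := by
  rw [Measure.addHaar_ball_of_pos volume x hr, ← mul_assoc, ← ENNReal.ofReal_mul (by positivity)]
  have : r ^ (-n : ℝ) * r ^ Module.finrank ℝ (Rn n) = 1 := by
    rw [finrank_euclideanSpace_fin, ← Real.rpow_natCast, ← Real.rpow_add hr, neg_add_cancel,
      Real.rpow_zero]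
  rw [this, ENNReal.ofReal_one, one_mul]

lemma LogExponent.exists_setLIntegral_ball_inv_ballScale_rpow_le {P : Rn n → ℝ} {Pinf a b K : ℝ}
    (hP : LogExponent P Pinf a b K) :
    ∃ C : ℝ≥0∞, C ≠ ∞ ∧ ∀ (x : Rn n) (r : ℝ), 0 < r →
      ∫⁻ y in Metric.ball x r, ENNReal.ofReal (ballScale P Pinf x r)⁻¹ ^ P y ≤ C := by
  have ha := hP.one_lt
  have hK : 0 ≤ K := by simpa using hP.locHolder 0 0
  set Ω := volume (Metric.ball (0 : Rn n) 1) with hΩ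
  have hΩt : Ω ≠ ∞ := measure_ball_lt_top.ne
  set W := ∫⁻ x : Rn n, decayW (n + 1) x with hW
  have hWt : W ≠ ∞ := (lintegral_decayW_lt_top (by linarith)).ne
  refine ⟨ENNReal.ofReal (Real.exp (n * K)) * Ω +
    (ENNReal.ofReal (Real.exp ((n + 1) * K)) * Ω + W), ?_, fun x r hr => ?_⟩
  · exact ENNReal.add_ne_top.2 ⟨ENNReal.mul_ne_top (by simp) hΩt,
      ENNReal.add_ne_top.2 ⟨ENNReal.mul_ne_top (by simp) hΩt, hWt⟩⟩
  have hPx : 1 ≤ P x := ha.le.trans (hP.le_apply x)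
  rcases le_total r 1 with h | h
  · refine le_trans ?_ le_self_add
    rw [hΩ, ← volume_ball_mul_rpow_neg x hr, ← mul_assoc, ← setLIntegral_const]
    refine setLIntegral_mono' measurableSet_ball fun y hy => ?_
    rw [ballScale, max_eq_left h, Real.one_rpow, mul_one,
      ENNReal.ofReal_rpow_of_pos (by positivity), ← ENNReal.ofReal_mul (by positivity)]
    refine ENNReal.ofReal_le_ofReal ?_
    have hlog : |P y - P x| * -Real.log r ≤ K := by
      rcases eq_or_ne x y with rfl | hxy
      · simpa using hK
      rw [abs_sub_comm]
      refine le_trans ?_ (hP.locHolder x y)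
      gcongr
      rw [← Real.log_inv]
      refine Real.log_le_log (by positivity) ?_
      have h1 : r⁻¹ ≤ (dist x y)⁻¹ := by
        rw [Metric.mem_ball'] at hy
        exact inv_anti₀ (dist_pos.2 hxy) hy.le
      linarith [Real.exp_pos 1]
    have hlr : 0 ≤ -Real.log r := neg_nonneg.2 (Real.log_nonpos hr.le h)
    rw [← Real.rpow_neg hr.le, ← Real.rpow_mul hr.le]
    have e : -(n / P x : ℝ) * P y = -(n / P x) * (P y - P x) + -n := by
      field_simp
      ring
    rw [e, Real.rpow_add hr]
    gcongr
    rw [Real.rpow_def_of_pos hr]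
    refine Real.exp_le_exp.2 ?_
    calc Real.log r * (-(n / P x) * (P y - P x)) = n / P x * ((P y - P x) * -Real.log r) := by ring
      _ ≤ n / P x * (|P y - P x| * -Real.log r) := by
        gcongr
        exact le_abs_self _
      _ ≤ n / P x * K := by gcongr
      _ ≤ n * K := by
        gcongr
        exact div_le_self (Nat.cast_nonneg n) hPx
  · refine le_trans ?_ le_add_self
    have hPi : 0 < Pinf := by linarith [hP.le_inf]
    set t := ENNReal.ofReal (ballScale P Pinf x r)⁻¹ with ht
    have hs : ballScale P Pinf x r = r ^ (n / Pinf : ℝ) := by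
      rw [ballScale, max_eq_right h, ← Real.rpow_add hr]
      congr 1
      ring
    have ht1 : t ≤ 1 := by
      rw [ht, hs, ENNReal.ofReal_le_one]
      exact inv_le_one_of_one_le₀ (Real.one_le_rpow h (by positivity))
    have htinf : t ^ Pinf = ENNReal.ofReal (r ^ (-n : ℝ)) := by
      rw [ht, hs, ENNReal.ofReal_rpow_of_pos (by positivity), ← Real.rpow_neg hr.le,
        ← Real.rpow_mul hr.le]
      congr 2
      field_simp
    calc ∫⁻ y in Metric.ball x r, t ^ P y
        ≤ ∫⁻ y in Metric.ball x r, ENNReal.ofReal (Real.exp ((n + 1) * K)) *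
          ENNReal.ofReal (r ^ (-n : ℝ)) + decayW (n + 1) y := by
          refine lintegral_mono fun y => ?_
          rw [← htinf]
          exact rpow_le_mul_rpow_add_decayW ht1 (by positivity) (ha.le.trans (hP.le_apply y))
            hPi.le (hP.decay y)
      _ = ENNReal.ofReal (Real.exp ((n + 1) * K)) * Ω +
          ∫⁻ y in Metric.ball x r, decayW (n + 1) y := by
          rw [lintegral_add_left measurable_const, setLIntegral_const, mul_assoc,
            volume_ball_mul_rpow_neg x hr]
      _ ≤ _ := by
          gcongr
          exact setLIntegral_le_lintegral _ _

lemma LogExponent.exists_setLIntegral_ball_le {P : Rn n → ℝ} {Pinf a b K : ℝ}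
    (hP : LogExponent P Pinf a b K) :
    ∃ C : ℝ≥0∞, C ≠ ∞ ∧ ∀ (G : Rn n → ℝ≥0∞) (Λ : ℝ≥0∞) (x : Rn n) (r : ℝ), Measurable G → Λ ≠ 0 →
      Λ ≠ ∞ → 0 < r → ∫⁻ y in Metric.ball x r, (G y / Λ) ^ P y ≤ 1 →
      ∫⁻ y in Metric.ball x r, G y ≤
        C * (Λ * ENNReal.ofReal (r ^ (n : ℝ) * (ballScale P Pinf x r)⁻¹)) := by
  have ha := hP.one_lt
  obtain ⟨C, hC, hCf⟩ := hP.conjExponent.exists_setLIntegral_ball_inv_ballScale_rpow_le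
  refine ⟨1 + C, ENNReal.add_ne_top.2 ⟨one_ne_top, hC⟩, fun G Λ x r hG hΛ0 hΛt hr h => ?_⟩
  have hPx : 1 < P x := ha.trans_le (hP.le_apply x)
  set ψ := ballScale (fun x => (P x).conjExponent) Pinf.conjExponent x r with hψ
  have hψ0 : 0 < ψ := ballScale_pos _ _ _ hr
  have e : r ^ (n : ℝ) * (ballScale P Pinf x r)⁻¹ = ψ := by
    rw [← ballScale_mul_ballScale_conjExponent hPx (ha.trans_le hP.le_inf) hr, mul_comm,
      inv_mul_cancel_left₀ (ballScale_pos P Pinf x hr).ne']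
  rw [e]
  have hψi : ENNReal.ofReal ψ⁻¹ * ENNReal.ofReal ψ = 1 := by
    rw [← ENNReal.ofReal_mul (inv_nonneg.2 hψ0.le), inv_mul_cancel₀ hψ0.ne', ENNReal.ofReal_one]
  have hm : Measurable fun y => (G y / Λ) ^ P y := (hG.div_const Λ).pow hP.measurable
  calc ∫⁻ y in Metric.ball x r, G y
      ≤ ∫⁻ y in Metric.ball x r, (Λ * ENNReal.ofReal ψ) *
        ((G y / Λ) ^ P y + ENNReal.ofReal ψ⁻¹ ^ (P y).conjExponent) := by
        refine lintegral_mono fun y => ?_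
        calc G y = (ENNReal.ofReal ψ⁻¹ * ENNReal.ofReal ψ) * (Λ * (G y / Λ)) := by
              rw [hψi, one_mul, ENNReal.mul_div_cancel hΛ0 hΛt]
          _ = (Λ * ENNReal.ofReal ψ) * ((G y / Λ) * ENNReal.ofReal ψ⁻¹) := by ring
          _ ≤ _ := by
              gcongr
              exact ennreal_mul_le_rpow_add_rpow _ _
                (Real.HolderConjugate.conjExponent (ha.trans_le (hP.le_apply y)))
    _ = (Λ * ENNReal.ofReal ψ) * ((∫⁻ y in Metric.ball x r, (G y / Λ) ^ P y) +
        ∫⁻ y in Metric.ball x r, ENNReal.ofReal ψ⁻¹ ^ (P y).conjExponent) := by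
        rw [lintegral_const_mul' _ _ (ENNReal.mul_ne_top hΛt (by simp)), lintegral_add_left hm]
    _ ≤ (Λ * ENNReal.ofReal ψ) * (1 + C) := by
        gcongr
        exact hCf x r hr
    _ = _ := mul_comm _ _

lemma tsum_pow_ne_top {r : ℝ≥0∞} (hr : r < 1) : ∑' k : ℕ, r ^ k ≠ ∞ := by
  rw [ENNReal.tsum_geometric]
  exact ENNReal.inv_ne_top.2 (tsub_pos_of_lt hr).ne'

lemma ofReal_two_rpow_neg_lt_one {ε : ℝ} (hε : 0 < ε) : ENNReal.ofReal (2 ^ (-ε)) < 1 := by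
  rw [ENNReal.ofReal_lt_one]
  exact Real.rpow_lt_one_of_one_lt_of_neg one_lt_two (neg_lt_zero.2 hε)

lemma etaK_eq_mul (ν : ℕ) (m : ℝ) {z : Rn n} (hz : 0 < ‖z‖) :
    etaK ν m z = ENNReal.ofReal (‖z‖ ^ (-n : ℝ)) *
      ENNReal.ofReal ((2 ^ ν * ‖z‖) ^ (n : ℝ) * (1 + 2 ^ ν * ‖z‖) ^ (-m)) := by
  rw [etaK, ← ENNReal.ofReal_mul (by positivity)]
  congr 1
  rw [Real.mul_rpow (by positivity) hz.le, Real.rpow_neg hz.le, pow_mul, Real.rpow_natCast,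
    Real.rpow_natCast]
  field_simp

lemma rpow_mul_one_add_rpow_neg_le {s m t : ℝ} (hs : 0 ≤ s) (hm : s ≤ m) (ht : 0 < t) :
    t ^ s * (1 + t) ^ (-m) ≤ t ^ (-(m - s)) := by
  calc t ^ s * (1 + t) ^ (-m) ≤ t ^ s * t ^ (-m) := by
        gcongr ?_ * ?_
        exact Real.rpow_le_rpow_of_nonpos ht (by linarith) (by linarith)
    _ = t ^ (-(m - s)) := by
        rw [← Real.rpow_add ht]
        congr 1
        ring

lemma exists_tsum_etaK_le (hn : n ≠ 0) {m : ℝ} (hm : (n : ℝ) < m) :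
    ∃ C : ℝ≥0∞, C ≠ ∞ ∧ ∀ z : Rn n, 0 < ‖z‖ →
      ∑' ν, etaK ν m z ≤ C * ENNReal.ofReal (‖z‖ ^ (-n : ℝ) * max 1 ‖z‖ ^ (-(m - n))) := by
  have hε : 0 < m - n := sub_pos.2 hm
  set d := ENNReal.ofReal (2 ^ (-(m - n))) with hd
  have hd1 : d < 1 := ofReal_two_rpow_neg_lt_one hε
  refine ⟨(∑' k : ℕ, (2⁻¹ : ℝ≥0∞) ^ k) + ∑' k : ℕ, d ^ k,
    ENNReal.add_ne_top.2 ⟨tsum_pow_ne_top (by simp), tsum_pow_ne_top hd1⟩, fun z hz => ?_⟩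
  have hdk : ∀ k : ℕ, ENNReal.ofReal ((2 ^ k : ℝ) ^ (-(m - n))) = d ^ k := by
    intro k
    rw [hd, ← ENNReal.ofReal_pow (by positivity), ← Real.rpow_natCast, ← Real.rpow_natCast,
      ← Real.rpow_mul (by norm_num), ← Real.rpow_mul (by norm_num), mul_comm]
  simp only [etaK_eq_mul _ m hz]
  rw [ENNReal.tsum_mul_left, ENNReal.ofReal_mul (by positivity), mul_left_comm]
  gcongr _ * ?_
  rcases le_total 1 ‖z‖ with h | h
  · rw [max_eq_right h]
    calc ∑' ν : ℕ, ENNReal.ofReal ((2 ^ ν * ‖z‖) ^ (n : ℝ) * (1 + 2 ^ ν * ‖z‖) ^ (-m))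
        ≤ ∑' ν : ℕ, d ^ ν * ENNReal.ofReal (‖z‖ ^ (-(m - n))) := by
          refine ENNReal.tsum_le_tsum fun ν => ?_
          rw [← hdk, ← ENNReal.ofReal_mul (by positivity), ← Real.mul_rpow (by positivity) hz.le]
          exact ENNReal.ofReal_le_ofReal
            (rpow_mul_one_add_rpow_neg_le (Nat.cast_nonneg n) hm.le (by positivity))
      _ ≤ _ := by
          rw [ENNReal.tsum_mul_right]
          gcongr
          exact le_add_self
  · rw [max_eq_left h, Real.one_rpow, ENNReal.ofReal_one, mul_one]
    obtain ⟨N, hN, hN'⟩ := exists_nat_pow_near ((one_le_inv₀ hz).2 h) (one_lt_two (α := ℝ))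
    rw [← ENNReal.summable.sum_add_tsum_nat_add' (k := N + 1)]
    gcongr ?_ + ?_
    · calc ∑ ν ∈ Finset.range (N + 1),
            ENNReal.ofReal ((2 ^ ν * ‖z‖) ^ (n : ℝ) * (1 + 2 ^ ν * ‖z‖) ^ (-m))
          ≤ ∑ ν ∈ Finset.range (N + 1), (2⁻¹ : ℝ≥0∞) ^ (N + 1 - 1 - ν) := by
            refine Finset.sum_le_sum fun ν hν => ?_
            have hν' : ν ≤ N := Nat.lt_succ_iff.1 (Finset.mem_range.1 hν)
            have ht : 2 ^ ν * ‖z‖ ≤ (2⁻¹ : ℝ) ^ (N - ν) := by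
              have h1 : ‖z‖ ≤ (2 ^ N)⁻¹ := (le_inv_comm₀ (by positivity) hz).1 hN
              calc 2 ^ ν * ‖z‖ ≤ 2 ^ ν * (2 ^ N : ℝ)⁻¹ := by gcongr
                _ = (2⁻¹ : ℝ) ^ (N - ν) := by
                    rw [inv_pow, ← Nat.sub_add_cancel hν', pow_add, Nat.sub_add_cancel hν']
                    field_simp
            have ht1 : 2 ^ ν * ‖z‖ ≤ 1 := ht.trans (pow_le_one₀ (by norm_num) (by norm_num))
            have e : (2⁻¹ : ℝ≥0∞) ^ (N + 1 - 1 - ν) = ENNReal.ofReal ((2⁻¹ : ℝ) ^ (N - ν)) := by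
              rw [ENNReal.ofReal_pow (by norm_num), ENNReal.ofReal_inv_of_pos two_pos]
              simp
            rw [e]
            refine ENNReal.ofReal_le_ofReal ?_
            calc (2 ^ ν * ‖z‖) ^ (n : ℝ) * (1 + 2 ^ ν * ‖z‖) ^ (-m)
                ≤ (2 ^ ν * ‖z‖) ^ (1 : ℝ) * 1 := by
                  gcongr ?_ * ?_
                  · refine Real.rpow_le_rpow_of_exponent_ge (by positivity) ht1 ?_
                    exact_mod_cast Nat.one_le_iff_ne_zero.2 hn
                  · refine Real.rpow_le_one_of_one_le_of_nonpos ?_ ?_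
                    · linarith [show 0 ≤ 2 ^ ν * ‖z‖ by positivity]
                    · linarith [Nat.cast_nonneg (α := ℝ) n]
              _ ≤ _ := by rwa [Real.rpow_one, mul_one]
        _ = ∑ ν ∈ Finset.range (N + 1), (2⁻¹ : ℝ≥0∞) ^ ν :=
            Finset.sum_range_reflect (fun ν => (2⁻¹ : ℝ≥0∞) ^ ν) (N + 1)
        _ ≤ _ := ENNReal.sum_le_tsum _
    · refine ENNReal.tsum_le_tsum fun k => ?_
      rw [← hdk]
      refine ENNReal.ofReal_le_ofReal
        ((rpow_mul_one_add_rpow_neg_le (Nat.cast_nonneg n) hm.le (by positivity)).trans ?_)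
      refine Real.rpow_le_rpow_of_nonpos (by positivity) ?_ (by linarith)
      have h1 : (2 ^ (N + 1) : ℝ)⁻¹ ≤ ‖z‖ := ((inv_lt_comm₀ hz (by positivity)).1 hN').le
      calc (2 : ℝ) ^ k = 2 ^ (k + (N + 1)) * (2 ^ (N + 1))⁻¹ := by
            rw [pow_add]
            field_simp
        _ ≤ _ := by gcongr

lemma lqSum_le_tsum {q : Rn n → ℝ} (f : ℕ → Rn n → ℝ≥0∞) {x : Rn n} (hq : 1 ≤ q x) :
    lqSum q f x ≤ ∑' ν, f ν x := by
  have hq0 : 0 ≤ q x - 1 := by linarith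
  have h : ∀ t : ℝ≥0∞, t ^ q x = t * t ^ (q x - 1) := by
    intro t
    conv_lhs => rw [show q x = 1 + (q x - 1) by ring]
    rw [ENNReal.rpow_add_of_nonneg _ _ zero_le_one hq0, ENNReal.rpow_one]
  rw [lqSum_le_iff (by linarith)]
  simp only [h]
  rw [← ENNReal.tsum_mul_right]
  gcongr with ν
  exact ENNReal.le_tsum ν

lemma lqSum_add_le {q : Rn n → ℝ} (f g : ℕ → Rn n → ℝ≥0∞) {x : Rn n} (hq : 1 ≤ q x) :
    lqSum q (fun ν x => f ν x + g ν x) x ≤ 2 * (lqSum q f x + lqSum q g x) := by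
  have hq0 : 0 < q x := by linarith
  rw [lqSum_le_iff hq0, ENNReal.mul_rpow_of_nonneg _ _ hq0.le]
  calc ∑' ν, (f ν x + g ν x) ^ q x ≤ ∑' ν, 2 ^ q x * (f ν x ^ q x + g ν x ^ q x) :=
        ENNReal.tsum_le_tsum fun ν => ennreal_add_rpow_le_two_rpow _ _ hq
    _ = 2 ^ q x * (lqSum q f x ^ q x + lqSum q g x ^ q x) := by
        rw [ENNReal.tsum_mul_left, ENNReal.tsum_add, lqSum_rpow f hq0, lqSum_rpow g hq0]
    _ ≤ _ := by
        gcongr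
        exact ENNReal.add_rpow_le_rpow_add _ _ hq

lemma lqSum_lconv_indicator_le {q : Rn n → ℝ} {f : ℕ → Rn n → ℝ≥0∞} (hf : ∀ ν, Measurable (f ν))
    (hq : ∀ x, 1 ≤ q x) (m : ℝ) {s : Set (Rn n)} (hs : MeasurableSet s) (y : Rn n) :
    lqSum q (fun ν => lconv (etaK ν m) (s.indicator (f ν))) y ≤
      ∫⁻ z in s, (∑' ν, etaK ν m (y - z)) * lqSum q f z := by
  refine (lqSum_le_tsum _ (hq y)).trans ?_
  have e : ∀ ν, lconv (etaK ν m) (s.indicator (f ν)) y = ∫⁻ z in s, etaK ν m (y - z) * f ν z := by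
    intro ν
    rw [lconv, ← lintegral_indicator hs]
    refine lintegral_congr fun z => ?_
    by_cases hz : z ∈ s <;> simp [hz]
  have hm : ∀ ν, Measurable fun z => etaK ν m (y - z) * f ν z := fun ν =>
    ((measurable_etaK ν m).comp (measurable_const.sub measurable_id)).mul (hf ν)
  simp only [e]
  rw [← lintegral_tsum fun ν => (hm ν).aemeasurable]
  refine lintegral_mono fun z => ?_
  rw [← ENNReal.tsum_mul_right]
  gcongr with ν
  exact le_lqSum f (by linarith [hq z]) ν

lemma compl_ball_subset_iUnion_shell (x : Rn n) {r : ℝ} (hr : 0 < r) :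
    (Metric.ball x (2 * r))ᶜ ⊆
      ⋃ k : ℕ, Metric.ball x (2 ^ (k + 2) * r) \ Metric.ball x (2 ^ (k + 1) * r) := by
  intro z hz
  rw [Set.mem_compl_iff, Metric.mem_ball, not_lt] at hz
  have h1 : 1 ≤ dist z x / (2 * r) := (one_le_div (by positivity)).2 hz
  obtain ⟨k, hk, hk'⟩ := exists_nat_pow_near h1 (one_lt_two (α := ℝ))
  rw [le_div_iff₀ (by positivity)] at hk
  rw [div_lt_iff₀ (by positivity)] at hk'
  refine Set.mem_iUnion.2 ⟨k, ?_, ?_⟩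
  · rw [Metric.mem_ball]
    linarith [pow_succ (2 : ℝ) (k + 1), show (2 : ℝ) ^ (k + 1) * (2 * r) = 2 ^ (k + 2) * r by ring]
  · rw [Metric.mem_ball, not_lt]
    linarith [show (2 : ℝ) ^ k * (2 * r) = 2 ^ (k + 1) * r by ring]

lemma exists_lqSum_lconv_indicator_compl_le (hn : n ≠ 0) {m : ℝ} (hm : (n : ℝ) < m) :
    ∃ C : ℝ≥0∞, C ≠ ∞ ∧ ∀ (q : Rn n → ℝ) (f : ℕ → Rn n → ℝ≥0∞) (x : Rn n) (r : ℝ),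
      (∀ x, 1 ≤ q x) → (∀ ν, Measurable (f ν)) → 0 < r → ∀ y ∈ Metric.ball x r,
        lqSum q (fun ν => lconv (etaK ν m) ((Metric.ball x (2 * r))ᶜ.indicator (f ν))) y ≤
          ∑' k : ℕ, C * ENNReal.ofReal ((2 ^ k * r) ^ (-n : ℝ) * max 1 (2 ^ k * r) ^ (-(m - n))) *
            ∫⁻ z in Metric.ball x (2 ^ (k + 2) * r), lqSum q f z := by
  obtain ⟨C, hC, hCz⟩ := exists_tsum_etaK_le hn hm
  refine ⟨C, hC, fun q f x r hq hf hr y hy => ?_⟩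
  refine (lqSum_lconv_indicator_le hf hq m measurableSet_ball.compl y).trans ?_
  refine (lintegral_mono_set (compl_ball_subset_iUnion_shell x hr)).trans ?_
  refine (lintegral_iUnion_le _ _).trans ?_
  refine ENNReal.tsum_le_tsum fun k => ?_
  set c := C * ENNReal.ofReal ((2 ^ k * r) ^ (-n : ℝ) * max 1 (2 ^ k * r) ^ (-(m - n))) with hc
  calc ∫⁻ z in Metric.ball x (2 ^ (k + 2) * r) \ Metric.ball x (2 ^ (k + 1) * r),
        (∑' ν, etaK ν m (y - z)) * lqSum q f z
      ≤ ∫⁻ z in Metric.ball x (2 ^ (k + 2) * r) \ Metric.ball x (2 ^ (k + 1) * r),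
        c * lqSum q f z := by
        refine setLIntegral_mono' (measurableSet_ball.diff measurableSet_ball) fun z hz => ?_
        gcongr ?_ * _
        have hz2 : 2 ^ (k + 1) * r ≤ dist z x := by simpa using hz.2
        have hk : 2 ^ k * r ≤ ‖y - z‖ := by
          have h1 := dist_triangle z y x
          have h2 : dist y x < r := hy
          have h3 : r ≤ 2 ^ k * r := le_mul_of_one_le_left hr.le (one_le_pow₀ one_le_two)
          rw [← dist_eq_norm, dist_comm]
          linarith [show (2 : ℝ) ^ (k + 1) * r = 2 ^ k * r + 2 ^ k * r by ring]
        have hk0 : 0 < 2 ^ k * r := by positivity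
        refine (hCz _ (hk0.trans_le hk)).trans ?_
        rw [hc]
        gcongr C * ENNReal.ofReal (?_ * ?_)
        · exact Real.rpow_le_rpow_of_nonpos hk0 hk (by simp)
        · exact Real.rpow_le_rpow_of_nonpos (by positivity) (max_le_max le_rfl hk) (by linarith)
    _ ≤ ∫⁻ z in Metric.ball x (2 ^ (k + 2) * r), c * lqSum q f z :=
        lintegral_mono_set Set.sdiff_subset
    _ = _ := by
        refine lintegral_const_mul' _ _ ?_
        exact ENNReal.mul_ne_top hC (by simp)

lemma rpow_mul_inv_ballScale (P : Rn n → ℝ) (Pinf v : ℝ) (x : Rn n) {r : ℝ} (hr : 0 < r) :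
    r ^ (n * (1 / P x - v) : ℝ) * (ballScale P Pinf x r)⁻¹ =
      r ^ (-(n * v) : ℝ) * max 1 r ^ (n / P x - n / Pinf : ℝ) := by
  have hm : 0 < max 1 r := by positivity
  rw [ballScale, mul_inv, ← Real.rpow_neg hr.le, ← Real.rpow_neg hm.le, ← mul_assoc,
    ← Real.rpow_add hr]
  congr 2 <;> ring

lemma tail_scale_le (P : Rn n → ℝ) {Pinf v m δ : ℝ} (x : Rn n) (hm : (n : ℝ) ≤ m)
    (hσ : (n / P x - n / Pinf : ℝ) ≤ m - n) (hδ : 0 ≤ δ) (hv : δ ≤ n * v) {r : ℝ} (hr : 0 < r)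
    (k : ℕ) :
    (2 ^ k * r) ^ (-n : ℝ) * max 1 (2 ^ k * r) ^ (-(m - n)) *
      ((2 ^ (k + 2) * r) ^ (n * (1 / P x - v) : ℝ) *
        ((2 ^ (k + 2) * r) ^ (n : ℝ) * (ballScale P Pinf x (2 ^ (k + 2) * r))⁻¹)) ≤
      4 ^ m * (2 ^ (-δ)) ^ k * (r ^ (n * (1 / P x - v) : ℝ) * (ballScale P Pinf x r)⁻¹) := by
  set R : ℝ := 2 ^ (k + 2) * r with hR
  have hR0 : 0 < R := by positivity
  have hR4 : R = 4 * (2 ^ k * r) := by rw [hR]; ring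
  have hkr : r ≤ 2 ^ k * r := le_mul_of_one_le_left hr.le (one_le_pow₀ one_le_two)
  have hrR : r ≤ R := by rw [hR4]; linarith
  rw [mul_left_comm (R ^ _), rpow_mul_inv_ballScale P Pinf v x hr,
    rpow_mul_inv_ballScale P Pinf v x hR0]
  set σ : ℝ := n / P x - n / Pinf with hσ'
  have h1 : (2 ^ k * r) ^ (-n : ℝ) * R ^ (n : ℝ) = 4 ^ (n : ℝ) := by
    have hk0 : 0 < 2 ^ k * r := by positivity
    rw [hR4, Real.mul_rpow (by norm_num : (0 : ℝ) ≤ 4) hk0.le, mul_left_comm,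
      ← Real.rpow_add hk0, neg_add_cancel, Real.rpow_zero, mul_one]
  have h2 : max 1 (2 ^ k * r) ^ (-(m - n)) ≤ 4 ^ (m - n) * max 1 R ^ (-(m - n)) := by
    have h : max 1 R ≤ 4 * max 1 (2 ^ k * r) := by
      rw [hR4]
      refine max_le ?_ ?_
      · linarith [le_max_left 1 (2 ^ k * r)]
      · gcongr
        exact le_max_right _ _
    calc max 1 (2 ^ k * r) ^ (-(m - n))
        = 4 ^ (m - n) * (4 * max 1 (2 ^ k * r)) ^ (-(m - n)) := by
          rw [Real.mul_rpow (by norm_num) (by positivity), ← mul_assoc,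
            ← Real.rpow_add (by norm_num), add_neg_cancel, Real.rpow_zero, one_mul]
      _ ≤ _ := by
          gcongr _ * ?_
          exact Real.rpow_le_rpow_of_nonpos (by positivity) h (by linarith)
  have h3 : max 1 R ^ (-(m - n)) * max 1 R ^ σ ≤ max 1 r ^ σ := by
    rw [← Real.rpow_add (by positivity)]
    calc max 1 R ^ (-(m - n) + σ) ≤ max 1 r ^ (-(m - n) + σ) :=
          Real.rpow_le_rpow_of_nonpos (by positivity) (max_le_max le_rfl hrR) (by linarith)
      _ ≤ _ := Real.rpow_le_rpow_of_exponent_le (le_max_left _ _) (by linarith)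
  have h4 : R ^ (-(n * v) : ℝ) ≤ (2 ^ (-δ)) ^ k * r ^ (-(n * v) : ℝ) := by
    calc R ^ (-(n * v) : ℝ) ≤ (2 ^ k * r) ^ (-(n * v) : ℝ) :=
          Real.rpow_le_rpow_of_nonpos (by positivity) (by rw [hR4]; linarith) (by linarith)
      _ = (2 ^ k) ^ (-(n * v) : ℝ) * r ^ (-(n * v) : ℝ) := Real.mul_rpow (by positivity) hr.le
      _ ≤ (2 ^ k) ^ (-δ) * r ^ (-(n * v) : ℝ) := by
          gcongr
          exact one_le_pow₀ one_le_two
      _ = _ := by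
          rw [← Real.rpow_natCast, ← Real.rpow_natCast, ← Real.rpow_mul (by norm_num),
            ← Real.rpow_mul (by norm_num), mul_comm (k : ℝ)]
  calc (2 ^ k * r) ^ (-n : ℝ) * max 1 (2 ^ k * r) ^ (-(m - n)) *
        (R ^ (n : ℝ) * (R ^ (-(n * v) : ℝ) * max 1 R ^ σ))
      ≤ (2 ^ k * r) ^ (-n : ℝ) * (4 ^ (m - n) * max 1 R ^ (-(m - n))) *
        (R ^ (n : ℝ) * ((2 ^ (-δ)) ^ k * r ^ (-(n * v) : ℝ) * max 1 R ^ σ)) := by gcongr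
    _ = ((2 ^ k * r) ^ (-n : ℝ) * R ^ (n : ℝ)) * 4 ^ (m - n) * (2 ^ (-δ)) ^ k *
        (r ^ (-(n * v) : ℝ) * (max 1 R ^ (-(m - n)) * max 1 R ^ σ)) := by ring
    _ ≤ 4 ^ (n : ℝ) * 4 ^ (m - n) * (2 ^ (-δ)) ^ k * (r ^ (-(n * v) : ℝ) * max 1 r ^ σ) := by
        rw [h1]
        gcongr
    _ = _ := by
        rw [← Real.rpow_add (by norm_num), add_sub_cancel]

/-- `G / lam` has modulars at most `1` on all balls after the Morrey rescaling with
`1 / u = v`. -/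
def MorreyBound (P v : Rn n → ℝ) (lam : ℝ≥0∞) (G : Rn n → ℝ≥0∞) : Prop :=
  ∀ (x : Rn n) (r : ℝ), 0 < r →
    ∫⁻ y in Metric.ball x r,
      (G y / (lam * ENNReal.ofReal (r ^ (n * (1 / P x - v x) : ℝ)))) ^ P y ≤ 1

lemma LogExponent.exists_lqSum_tail_le {P : Rn n → ℝ} {Pinf a b K m δ : ℝ}
    (hP : LogExponent P Pinf a b K) (hn : n ≠ 0) (hm : (n : ℝ) < m)
    (hσ : ∀ x, (n / P x - n / Pinf : ℝ) ≤ m - n) (hδ : 0 < δ) :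
    ∃ C : ℝ≥0∞, C ≠ ∞ ∧ ∀ (q v : Rn n → ℝ) (f : ℕ → Rn n → ℝ≥0∞) (lam : ℝ≥0∞),
      Measurable q → (∀ x, 1 ≤ q x) → (∀ ν, Measurable (f ν)) → (∀ x, δ ≤ n * v x) → lam ≠ 0 →
      lam ≠ ∞ → MorreyBound P v lam (lqSum q f) → ∀ (x : Rn n) (r : ℝ), 0 < r →
        ∀ y ∈ Metric.ball x r,
          lqSum q (fun ν => lconv (etaK ν m) ((Metric.ball x (2 * r))ᶜ.indicator (f ν))) y ≤
            C * (lam * ENNReal.ofReal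
              (r ^ (n * (1 / P x - v x) : ℝ) * (ballScale P Pinf x r)⁻¹)) := by
  obtain ⟨C₁, hC₁, H₁⟩ := exists_lqSum_lconv_indicator_compl_le hn hm
  obtain ⟨C₂, hC₂, H₂⟩ := hP.exists_setLIntegral_ball_le
  set d := ENNReal.ofReal (2 ^ (-δ)) with hd
  refine ⟨C₁ * C₂ * ENNReal.ofReal (4 ^ m) * ∑' k : ℕ, d ^ k,
    ENNReal.mul_ne_top (ENNReal.mul_ne_top (ENNReal.mul_ne_top hC₁ hC₂) (by simp))
      (tsum_pow_ne_top (ofReal_two_rpow_neg_lt_one hδ)),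
    fun q v f lam hqm hq hf hv hl0 hlt hG x r hr y hy => ?_⟩
  refine (H₁ q f x r hq hf hr y hy).trans ?_
  set X := r ^ (n * (1 / P x - v x) : ℝ) * (ballScale P Pinf x r)⁻¹ with hX
  calc ∑' k : ℕ, C₁ * ENNReal.ofReal ((2 ^ k * r) ^ (-n : ℝ) * max 1 (2 ^ k * r) ^ (-(m - n))) *
        ∫⁻ z in Metric.ball x (2 ^ (k + 2) * r), lqSum q f z
      ≤ ∑' k : ℕ, C₁ * C₂ * ENNReal.ofReal (4 ^ m) * (lam * ENNReal.ofReal X) * d ^ k := by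
        refine ENNReal.tsum_le_tsum fun k => ?_
        set R : ℝ := 2 ^ (k + 2) * r with hR
        have hR0 : 0 < R := by positivity
        set A := (2 ^ k * r) ^ (-n : ℝ) * max 1 (2 ^ k * r) ^ (-(m - n)) with hA
        have hA0 : 0 ≤ A := by positivity
        have hψ := ballScale_pos P Pinf x hR0
        have hψr := ballScale_pos P Pinf x hr
        have hL0 : lam * ENNReal.ofReal (R ^ (n * (1 / P x - v x) : ℝ)) ≠ 0 :=
          mul_ne_zero hl0 (ENNReal.ofReal_pos.2 (by positivity)).ne'
        have hLt : lam * ENNReal.ofReal (R ^ (n * (1 / P x - v x) : ℝ)) ≠ ∞ :=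
          ENNReal.mul_ne_top hlt (by simp)
        calc C₁ * ENNReal.ofReal A * ∫⁻ z in Metric.ball x R, lqSum q f z
            ≤ C₁ * ENNReal.ofReal A * (C₂ * ((lam * ENNReal.ofReal
              (R ^ (n * (1 / P x - v x) : ℝ))) *
              ENNReal.ofReal (R ^ (n : ℝ) * (ballScale P Pinf x R)⁻¹))) := by
              gcongr
              exact H₂ _ _ x R (measurable_lqSum hqm hf) hL0 hLt hR0 (hG x R hR0)
          _ = C₁ * C₂ * lam * ENNReal.ofReal (A * (R ^ (n * (1 / P x - v x) : ℝ) *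
              (R ^ (n : ℝ) * (ballScale P Pinf x R)⁻¹))) := by
              rw [ENNReal.ofReal_mul hA0, ENNReal.ofReal_mul
                (p := R ^ (n * (1 / P x - v x) : ℝ)) (by positivity)]
              ring
          _ ≤ C₁ * C₂ * lam * ENNReal.ofReal (4 ^ m * (2 ^ (-δ)) ^ k * X) := by
              gcongr C₁ * C₂ * lam * ENNReal.ofReal ?_
              exact tail_scale_le P x hm.le (hσ x) hδ.le (hv x) hr k
          _ = _ := by
              rw [ENNReal.ofReal_mul (by positivity), ENNReal.ofReal_mul (by positivity),
                ENNReal.ofReal_pow (by positivity)]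
              ring
    _ = _ := by
        rw [ENNReal.tsum_mul_left]
        ring

lemma lintegral_div_rpow_le_one {μ : Measure (Rn n)} {P : Rn n → ℝ} (hP : ∀ x, 1 ≤ P x)
    {C : ℝ≥0∞} (hC : 1 ≤ C) (hCt : C ≠ ∞) {g : Rn n → ℝ≥0∞} (h : ∫⁻ x, g x ^ P x ∂μ ≤ C) :
    ∫⁻ x, (g x / C) ^ P x ∂μ ≤ 1 := by
  have hC0 : C ≠ 0 := (zero_lt_one.trans_le hC).ne'
  calc ∫⁻ x, (g x / C) ^ P x ∂μ ≤ ∫⁻ x, C⁻¹ * g x ^ P x ∂μ := by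
        refine lintegral_mono fun x => ?_
        rw [ENNReal.div_rpow_of_nonneg _ _ (by linarith [hP x]), div_eq_mul_inv, mul_comm]
        gcongr
        calc C = C ^ (1 : ℝ) := (ENNReal.rpow_one C).symm
          _ ≤ C ^ P x := ENNReal.rpow_le_rpow_of_exponent_le hC (hP x)
    _ = C⁻¹ * ∫⁻ x, g x ^ P x ∂μ := lintegral_const_mul' _ _ (ENNReal.inv_ne_top.2 hC0)
    _ ≤ C⁻¹ * C := by gcongr
    _ = 1 := ENNReal.inv_mul_cancel hC0 hCt

lemma lconv_div (f g : Rn n → ℝ≥0∞) {c : ℝ≥0∞} (hc : c ≠ 0) (x : Rn n) :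
    lconv f (fun y => g y / c) x = lconv f g x / c := by
  simp only [lconv, div_eq_mul_inv, ← mul_assoc]
  rw [lintegral_mul_const' _ _ (ENNReal.inv_ne_top.2 hc)]

lemma lqSum_div {q : Rn n → ℝ} (f : ℕ → Rn n → ℝ≥0∞) {x : Rn n} (hq : 0 < q x) (c : ℝ≥0∞) :
    lqSum q (fun ν y => f ν y / c) x = lqSum q f x / c := by
  have h : ∀ ν, (f ν x / c) ^ q x = f ν x ^ q x * (c ^ q x)⁻¹ := fun ν => by
    rw [ENNReal.div_rpow_of_nonneg _ _ hq.le, div_eq_mul_inv]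
  simp only [lqSum, h]
  rw [ENNReal.tsum_mul_right, ENNReal.mul_rpow_of_nonneg _ _ (by positivity), ← ENNReal.inv_rpow,
    ← ENNReal.rpow_mul, mul_one_div_cancel hq.ne', ENNReal.rpow_one, ← div_eq_mul_inv]

lemma lqSum_indicator {q : Rn n → ℝ} (f : ℕ → Rn n → ℝ≥0∞) {x : Rn n} (hq : 0 < q x)
    (s : Set (Rn n)) : lqSum q (fun ν => s.indicator (f ν)) x = s.indicator (lqSum q f) x := by
  by_cases hx : x ∈ s
  · simp [lqSum, hx]
  · simp [lqSum, hx, hq]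

lemma lconv_indicator_add {f g : Rn n → ℝ≥0∞} (hf : Measurable f) (hg : Measurable g)
    {s : Set (Rn n)} (hs : MeasurableSet s) (x : Rn n) :
    lconv f (s.indicator g) x + lconv f (sᶜ.indicator g) x = lconv f g x := by
  have hm : Measurable fun y => f (x - y) * s.indicator g y :=
    (hf.comp (measurable_const.sub measurable_id)).mul (hg.indicator hs)
  simp only [lconv]
  rw [← lintegral_add_left hm]
  refine lintegral_congr fun y => ?_
  by_cases hy : y ∈ s <;> simp [hy]

theorem LogExponent.exists_morreyBound_lqSum_lconv {P q : Rn n → ℝ} {Pinf a b K Kq m δ : ℝ}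
    (hP : LogExponent P Pinf a b K) (hqm : Measurable q) (hqosc : ∀ α, CellOsc α q Kq)
    (hq : ∀ x, 1 ≤ q x) (hn : n ≠ 0) (hm : (n : ℝ) < m)
    (hσ : ∀ x, (n / P x - n / Pinf : ℝ) ≤ m - n) (hδ : 0 < δ) :
    ∃ C : ℝ≥0∞, C ≠ 0 ∧ C ≠ ∞ ∧ ∀ (v : Rn n → ℝ) (f : ℕ → Rn n → ℝ≥0∞) (lam : ℝ≥0∞),
      (∀ ν, Measurable (f ν)) → (∀ x, δ ≤ n * v x) → lam ≠ 0 → lam ≠ ∞ →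
        MorreyBound P v lam (lqSum q f) →
          MorreyBound P v (C * lam) (lqSum q (fun ν => lconv (etaK ν m) (f ν))) := by
  have ha := hP.one_lt
  have hP1 : ∀ x, 1 ≤ P x := fun x => ha.le.trans (hP.le_apply x)
  have hn0 : (0 : ℝ) < n := by exact_mod_cast Nat.pos_of_ne_zero hn
  obtain ⟨C₁, hC₁, H₁⟩ := hP.exists_lintegral_lqSum_lconv_rpow_le hqm hqosc hq hm
  obtain ⟨C₂, hC₂, H₂⟩ := hP.exists_lqSum_tail_le hn hm hσ hδ
  obtain ⟨C₃, hC₃, H₃⟩ := hP.exists_setLIntegral_ball_inv_ballScale_rpow_le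
  have hb0 : 0 ≤ b := by linarith [hP1 0, hP.apply_le 0]
  set D : ℝ≥0∞ := 2 ^ n + C₂ with hD
  set E : ℝ≥0∞ := 1 + 2 ^ b * (C₁ + C₃) with hE
  have hDt : D ≠ ∞ := ENNReal.add_ne_top.2 ⟨by simp, hC₂⟩
  have hD0 : D ≠ 0 := (lt_of_lt_of_le (by positivity) (le_self_add : (2 : ℝ≥0∞) ^ n ≤ D)).ne'
  have hE1 : 1 ≤ E := le_self_add
  have hE0 : E ≠ 0 := (zero_lt_one.trans_le hE1).ne'
  have hEt : E ≠ ∞ := ENNReal.add_ne_top.2 ⟨by simp, ENNReal.mul_ne_top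
    (ENNReal.rpow_ne_top_of_nonneg hb0 (by simp)) (ENNReal.add_ne_top.2 ⟨hC₁, hC₃⟩)⟩
  refine ⟨2 * D * E, by simp [hD0, hE0], ENNReal.mul_ne_top (ENNReal.mul_ne_top (by simp) hDt) hEt,
    fun v f lam hf hv hl0 hlt hG x r hr => ?_⟩
  set e : ℝ := n * (1 / P x - v x) with he
  have hen : e ≤ n := by
    have h1 : 1 / P x ≤ 1 := (div_le_one (by linarith [hP1 x])).2 (hP1 x)
    have h2 : n * (1 / P x) ≤ n * 1 := by gcongr
    rw [he]
    linarith [hv x]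
  set Λ := lam * ENNReal.ofReal (r ^ e) with hΛ
  have hΛ0 : Λ ≠ 0 := mul_ne_zero hl0 (ENNReal.ofReal_pos.2 (by positivity)).ne'
  have hΛt : Λ ≠ ∞ := ENNReal.mul_ne_top hlt (by simp)
  set Λ₂ := lam * ENNReal.ofReal ((2 * r) ^ e) with hΛ₂
  have hΛ₂0 : Λ₂ ≠ 0 := mul_ne_zero hl0 (ENNReal.ofReal_pos.2 (by positivity)).ne'
  have hΛ₂D : Λ₂ ≤ D * Λ := by
    calc Λ₂ = ENNReal.ofReal (2 ^ e) * Λ := by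
          rw [hΛ₂, hΛ, Real.mul_rpow (by norm_num) hr.le, ENNReal.ofReal_mul (by positivity)]
          ring
      _ ≤ ENNReal.ofReal (2 ^ (n : ℝ)) * Λ := by
          gcongr
          norm_num
      _ = 2 ^ n * Λ := by
          rw [Real.rpow_natCast, ENNReal.ofReal_pow (by norm_num), ENNReal.ofReal_ofNat]
      _ ≤ D * Λ := by
          gcongr
          exact le_self_add
  set B := Metric.ball x r with hB
  set B₂ := Metric.ball x (2 * r) with hB₂
  set F := lqSum q (fun ν => lconv (etaK ν m) (f ν)) with hF
  set F₁ := lqSum q (fun ν => lconv (etaK ν m) (B₂.indicator (f ν))) with hF₁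
  set F₂ := lqSum q (fun ν => lconv (etaK ν m) (B₂ᶜ.indicator (f ν))) with hF₂
  have hloc : ∫⁻ y, (F₁ y / (D * Λ)) ^ P y ≤ C₁ := by
    have h1 := H₁ (fun ν y => B₂.indicator (f ν) y / Λ₂)
      (fun ν => ((hf ν).indicator measurableSet_ball).div_const _) ?_
    · refine le_trans (lintegral_mono fun y => ?_) h1
      have hq0 : 0 < q y := by linarith [hq y]
      have h2 : lqSum q (fun ν => lconv (etaK ν m) fun y => B₂.indicator (f ν) y / Λ₂) y =
          F₁ y / Λ₂ := by
        rw [hF₁, ← lqSum_div _ hq0]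
        simp only [lqSum, lconv_div _ _ hΛ₂0]
      simp only [h2]
      exact ENNReal.rpow_le_rpow (ENNReal.div_le_div_left hΛ₂D _) (by linarith [hP1 y])
    · refine le_of_eq_of_le ?_ (hG x (2 * r) (by positivity))
      rw [← lintegral_indicator measurableSet_ball]
      refine lintegral_congr fun y => ?_
      have hq0 : 0 < q y := by linarith [hq y]
      have hP0 : 0 < P y := by linarith [hP1 y]
      rw [lqSum_div _ hq0, lqSum_indicator _ hq0]
      by_cases hy : y ∈ B₂
      · rw [Set.indicator_of_mem hy, Set.indicator_of_mem hy]
      · rw [Set.indicator_of_notMem hy, Set.indicator_of_notMem hy, ENNReal.zero_div,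
          ENNReal.zero_rpow_of_pos hP0]
  have htail : ∀ y ∈ B, F₂ y / (D * Λ) ≤ ENNReal.ofReal (ballScale P Pinf x r)⁻¹ := by
    intro y hy
    refine ENNReal.div_le_of_le_mul ((H₂ q v f lam hqm hq hf hv hl0 hlt hG x r hr y hy).trans ?_)
    rw [ENNReal.ofReal_mul (by positivity)]
    calc C₂ * (lam * (ENNReal.ofReal (r ^ e) * ENNReal.ofReal (ballScale P Pinf x r)⁻¹))
        = ENNReal.ofReal (ballScale P Pinf x r)⁻¹ * (C₂ * Λ) := by
          rw [hΛ]
          ring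
      _ ≤ _ := by
          gcongr
          exact le_add_self
  set t : Rn n → ℝ≥0∞ := B.indicator fun _ => ENNReal.ofReal (ballScale P Pinf x r)⁻¹ with ht
  have htP : ∫⁻ y, t y ^ P y ≤ C₃ := by
    refine le_of_eq_of_le ?_ (H₃ x r hr)
    rw [← lintegral_indicator measurableSet_ball]
    refine lintegral_congr fun y => ?_
    have hP0 : 0 < P y := by linarith [hP1 y]
    by_cases hy : y ∈ B
    · rw [ht, Set.indicator_of_mem hy, Set.indicator_of_mem hy]
    · rw [ht, Set.indicator_of_notMem hy, Set.indicator_of_notMem hy,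
        ENNReal.zero_rpow_of_pos hP0]
  have hF₁m : Measurable fun y => F₁ y / (D * Λ) :=
    (measurable_lqSum hqm fun ν => measurable_lconv_etaK ν m
      ((hf ν).indicator measurableSet_ball)).div_const _
  have hFF : ∀ y ∈ B, F y / (2 * D * Λ) ≤ F₁ y / (D * Λ) + t y := by
    intro y hy
    have h1 : F y ≤ 2 * (F₁ y + F₂ y) := by
      refine le_trans (le_of_eq ?_) (lqSum_add_le _ _ (hq y))
      have h2 : ∀ ν, lconv (etaK ν m) (B₂.indicator (f ν)) y +
          lconv (etaK ν m) (B₂ᶜ.indicator (f ν)) y = lconv (etaK ν m) (f ν) y := fun ν =>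
        lconv_indicator_add (measurable_etaK ν m) (hf ν) measurableSet_ball y
      simp only [hF, lqSum, h2]
    calc F y / (2 * D * Λ) ≤ F₁ y / (D * Λ) + F₂ y / (D * Λ) := by
          refine ENNReal.div_le_of_le_mul (h1.trans (le_of_eq ?_))
          rw [← ENNReal.add_div, mul_assoc 2, mul_left_comm, ENNReal.div_mul_cancel
            (mul_ne_zero hD0 hΛ0) (ENNReal.mul_ne_top hDt hΛt)]
      _ ≤ F₁ y / (D * Λ) + t y := by
          rw [ht, Set.indicator_of_mem hy]
          gcongr
          exact htail y hy
  have hfin : ∫⁻ y in B, (F y / (2 * D * Λ)) ^ P y ≤ E := by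
    calc ∫⁻ y in B, (F y / (2 * D * Λ)) ^ P y
        ≤ ∫⁻ y in B, (F₁ y / (D * Λ) + t y) ^ P y :=
          setLIntegral_mono' measurableSet_ball fun y hy =>
            ENNReal.rpow_le_rpow (hFF y hy) (by linarith [hP1 y])
      _ ≤ ∫⁻ y, (F₁ y / (D * Λ) + t y) ^ P y := setLIntegral_le_lintegral _ _
      _ ≤ 2 ^ b * ((∫⁻ y, (F₁ y / (D * Λ)) ^ P y) + ∫⁻ y, t y ^ P y) :=
          lintegral_add_rpow_le hP.measurable hP1 hP.apply_le hF₁m t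
      _ ≤ 2 ^ b * (C₁ + C₃) := by gcongr
      _ ≤ E := le_add_self
  refine le_of_eq_of_le ?_ (lintegral_div_rpow_le_one hP1 hE1 hEt hfin)
  refine lintegral_congr fun y => ?_
  congr 1
  simp only [div_eq_mul_inv (G := ℝ≥0∞)]
  rw [mul_assoc (F y), ← ENNReal.mul_inv (Or.inr hEt) (Or.inr hE0)]
  congr 2
  rw [hΛ]
  ring

lemma LocLogHolder.continuous {g : Rn n → ℝ} (hg : LocLogHolder g) : Continuous g := by
  obtain ⟨c, hc, h⟩ := hg
  refine Metric.continuous_iff.2 fun x ε hε => ⟨Real.exp (-(c / ε)), Real.exp_pos _, fun y hy => ?_⟩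
  rcases eq_or_ne y x with rfl | hyx
  · simpa using hε
  have hd : 0 < dist y x := dist_pos.2 hyx
  have hl : c / ε < Real.log (Real.exp 1 + (dist y x)⁻¹) := by
    rw [Real.lt_log_iff_exp_lt (by positivity)]
    have h1 : Real.exp (c / ε) < (dist y x)⁻¹ := by
      rw [lt_inv_comm₀ (Real.exp_pos _) hd, ← Real.exp_neg]
      exact hy
    linarith [Real.exp_pos 1]
  rw [Real.dist_eq]
  refine (h y x).trans_lt ?_
  rw [div_lt_iff₀ ((by positivity : 0 < c / ε).trans hl), mul_comm]
  exact (div_lt_iff₀ hε).1 hl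

lemma exists_bounds_inv_toReal {p : Rn n → ℝ≥0∞} {A U : ℝ≥0∞}
    (hloc : LocLogHolder fun x => (p x)⁻¹.toReal) (hA : 1 < A) (hU : U ≠ ∞)
    (hAp : ∀ᵐ x, A ≤ p x) (hpU : ∀ᵐ x, p x ≤ U) :
    ∃ α β : ℝ, 0 < β ∧ α < 1 ∧ ∀ x, β ≤ (p x)⁻¹.toReal ∧ (p x)⁻¹.toReal ≤ α := by
  have hA0 : A ≠ 0 := (zero_lt_one.trans hA).ne'
  have hU0 : U ≠ 0 := by
    obtain ⟨x, hx, hx'⟩ := (hAp.and hpU).exists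
    exact (zero_lt_one.trans (hA.trans_le (hx.trans hx'))).ne'
  have hA1 : A⁻¹ < 1 := ENNReal.inv_lt_one.2 hA
  refine ⟨A⁻¹.toReal, U⁻¹.toReal, ENNReal.toReal_pos (ENNReal.inv_ne_zero.2 hU)
    (ENNReal.inv_ne_top.2 hU0), ?_, ?_⟩
  · simpa using (ENNReal.toReal_lt_toReal hA1.ne_top one_ne_top).2 hA1
  · have hd : Dense {x : Rn n | (p x)⁻¹.toReal ∈ Set.Icc U⁻¹.toReal A⁻¹.toReal} := by
      refine Measure.dense_of_ae (μ := volume) ?_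
      filter_upwards [hAp, hpU] with x hx hx'
      have h1 : (p x)⁻¹ ≤ A⁻¹ := ENNReal.inv_le_inv.2 hx
      exact ⟨ENNReal.toReal_mono (h1.trans_lt hA1).ne_top.lt_top.ne (ENNReal.inv_le_inv.2 hx'),
        ENNReal.toReal_mono hA1.ne_top h1⟩
    have hcl : IsClosed {x : Rn n | (p x)⁻¹.toReal ∈ Set.Icc U⁻¹.toReal A⁻¹.toReal} :=
      isClosed_Icc.preimage hloc.continuous
    intro x
    have hx : x ∈ closure {x : Rn n | (p x)⁻¹.toReal ∈ Set.Icc U⁻¹.toReal A⁻¹.toReal} := hd x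
    rwa [hcl.closure_eq] at hx

lemma abs_inv_sub_inv_le {β s t : ℝ} (hβ : 0 < β) (hs : β ≤ s) (ht : β ≤ t) :
    |s⁻¹ - t⁻¹| ≤ |s - t| / β ^ 2 := by
  have hs0 : 0 < s := hβ.trans_le hs
  have ht0 : 0 < t := hβ.trans_le ht
  rw [inv_sub_inv hs0.ne' ht0.ne', abs_div, abs_sub_comm, abs_of_pos (by positivity : 0 < s * t),
    sq]
  gcongr

lemma exists_logExponent {p : Rn n → ℝ≥0∞} {gInf c α β : ℝ} (hpm : Measurable p)
    (hloc : LocLogHolder fun x => (p x)⁻¹.toReal) (hc : 0 < c)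
    (hdec : LogDecay (fun x => (p x)⁻¹.toReal) gInf c) (hβ : 0 < β) (hα : α < 1)
    (hb : ∀ x, β ≤ (p x)⁻¹.toReal ∧ (p x)⁻¹.toReal ≤ α) :
    ∃ Pinf K, LogExponent (fun x => (p x).toReal) Pinf α⁻¹ β⁻¹ K ∧
      ∀ x, 1 / (p x).toReal - 1 / Pinf ≤ c := by
  obtain ⟨c', hc', hloc'⟩ := hloc
  set g : Rn n → ℝ := fun x => (p x)⁻¹.toReal with hg
  have hP : ∀ x, (p x).toReal = (g x)⁻¹ := fun x => by simp [hg]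
  have hβα : β ≤ α := (hb 0).1.trans (hb 0).2
  have hα0 : 0 < α := hβ.trans_le hβα
  set h := max β (min gInf α) with hh
  have hβh : β ≤ h := le_max_left _ _
  have hhα : h ≤ α := max_le hβα (min_le_right _ _)
  have hdec' : ∀ x, |g x - h| ≤ c / Real.log (Real.exp 1 + ‖x‖) := by
    intro x
    refine le_trans ?_ (hdec x)
    have h1 := (hb x).1
    have h2 := (hb x).2
    rcases le_total gInf α with h3 | h3
    · rw [hh, min_eq_left h3]
      rcases le_total β gInf with h4 | h4
      · rw [max_eq_right h4]
      · rw [max_eq_left h4, abs_of_nonneg (by linarith), abs_of_nonneg (by linarith)]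
        linarith
    · rw [hh, min_eq_right h3, max_eq_right hβα, abs_of_nonpos (by linarith),
        abs_of_nonpos (by linarith)]
      linarith
  set L := max c' c / β ^ 2 with hL
  have hlogx : ∀ x : Rn n, 1 ≤ Real.log (Real.exp 1 + ‖x‖) := fun x =>
    one_le_log_exp_add (norm_nonneg x)
  have hlogd : ∀ x y : Rn n, 1 ≤ Real.log (Real.exp 1 + (dist x y)⁻¹) := fun x y =>
    one_le_log_exp_add (inv_nonneg.2 dist_nonneg)
  have hlocP : ∀ x y, |(p x).toReal - (p y).toReal| ≤
      L / Real.log (Real.exp 1 + (dist x y)⁻¹) := by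
    intro x y
    have h1 := hlogd x y
    rw [hP, hP]
    calc |(g x)⁻¹ - (g y)⁻¹| ≤ |g x - g y| / β ^ 2 := abs_inv_sub_inv_le hβ (hb x).1 (hb y).1
      _ ≤ max c' c / Real.log (Real.exp 1 + (dist x y)⁻¹) / β ^ 2 := by
          gcongr
          exact (hloc' x y).trans (by gcongr; exact le_max_left _ _)
      _ = _ := by rw [hL, div_right_comm]
  have hdecP : ∀ x, |(p x).toReal - h⁻¹| ≤ L / Real.log (Real.exp 1 + ‖x‖) := by
    intro x
    have h1 := hlogx x
    rw [hP]
    calc |(g x)⁻¹ - h⁻¹| ≤ |g x - h| / β ^ 2 := abs_inv_sub_inv_le hβ (hb x).1 hβh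
      _ ≤ max c' c / Real.log (Real.exp 1 + ‖x‖) / β ^ 2 := by
          gcongr
          exact (hdec' x).trans (by gcongr; exact le_max_right _ _)
      _ = _ := by rw [hL, div_right_comm]
  obtain ⟨K₀, hK₀⟩ := exists_cellOsc hlocP hdecP
  refine ⟨h⁻¹, max K₀ L, ⟨hpm.ennreal_toReal, (one_lt_inv₀ hα0).2 hα, fun x => ?_, fun x => ?_,
    inv_anti₀ (hβ.trans_le hβh) hhα, inv_anti₀ hβ hβh, fun x y => ?_, fun x => ?_, fun α' => ?_⟩,
    fun x => ?_⟩
  · rw [hP]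
    exact inv_anti₀ (hβ.trans_le (hb x).1) (hb x).2
  · rw [hP]
    exact inv_anti₀ hβ (hb x).1
  · exact ((le_div_iff₀ (by linarith [hlogd x y])).1 (hlocP x y)).trans (le_max_right _ _)
  · exact ((le_div_iff₀ (by linarith [hlogx x])).1 (hdecP x)).trans (le_max_right _ _)
  · exact fun ν x y hy => (hK₀ α' ν x y hy).trans (le_max_left _ _)
  · rw [hP, one_div, one_div, inv_inv, inv_inv]
    exact (le_abs_self _).trans ((hdec' x).trans (div_le_self hc.le (hlogx x)))

lemma setLIntegral_rpow_eq_modularVE {p : Rn n → ℝ≥0∞} (hp : ∀ x, 0 < (p x).toReal)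
    (g : Rn n → ℝ≥0∞) (lam : ℝ≥0∞) {s : Set (Rn n)} (hs : MeasurableSet s) :
    modularVE p (fun x => s.indicator g x / lam) = ∫⁻ x in s, (g x / lam) ^ (p x).toReal := by
  rw [modularVE, ← lintegral_indicator hs]
  refine lintegral_congr fun x => ?_
  have hpt : p x ≠ ∞ := fun h => by simpa [h] using hp x
  rw [phiVE, if_neg hpt]
  by_cases hx : x ∈ s
  · rw [Set.indicator_of_mem hx, Set.indicator_of_mem hx]
  · rw [Set.indicator_of_notMem hx, Set.indicator_of_notMem hx, ENNReal.zero_div,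
      ENNReal.zero_rpow_of_pos (hp x)]

lemma modularVE_div_le_one_of_vLpNorm_lt {p : Rn n → ℝ≥0∞} (hp : ∀ x, 0 < (p x).toReal)
    {g : Rn n → ℝ≥0∞} {lam : ℝ≥0∞} (h : vLpNorm p g < lam) :
    modularVE p (fun x => g x / lam) ≤ 1 := by
  obtain ⟨lam', hlam', hlt⟩ := sInf_lt_iff.1 h
  refine le_trans (lintegral_mono fun x => ?_) hlam'
  have hpt : p x ≠ ∞ := fun h => by simpa [h] using hp x
  simp only [phiVE, if_neg hpt]
  exact ENNReal.rpow_le_rpow (ENNReal.div_le_div_left hlt.le _) (hp x).le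

lemma ofReal_rpow_mul_ofReal_rpow_neg {r : ℝ} (hr : 0 < r) (a : ℝ) :
    ENNReal.ofReal (r ^ a) * ENNReal.ofReal (r ^ (-a)) = 1 := by
  rw [← ENNReal.ofReal_mul (by positivity), ← Real.rpow_add hr, add_neg_cancel, Real.rpow_zero,
    ENNReal.ofReal_one]

lemma neg_mul_sub_inv_toReal (p u : Rn n → ℝ≥0∞) (x : Rn n) :
    (n * (1 / (p x).toReal - (u x)⁻¹.toReal) : ℝ) =
      -(n * ((u x)⁻¹.toReal - (p x)⁻¹.toReal)) := by
  rw [ENNReal.toReal_inv (p x)]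
  ring

lemma morreyBound_of_morreyNorm_lt {p u : Rn n → ℝ≥0∞} (hp : ∀ x, 0 < (p x).toReal)
    {g : Rn n → ℝ≥0∞} {lam : ℝ≥0∞} (h : morreyNorm p u g < lam) :
    MorreyBound (fun x => (p x).toReal) (fun x => (u x)⁻¹.toReal) lam g := by
  intro x r hr
  rw [← setLIntegral_rpow_eq_modularVE hp g _ measurableSet_ball]
  refine modularVE_div_le_one_of_vLpNorm_lt hp ?_
  rw [neg_mul_sub_inv_toReal]
  set e : ℝ := n * ((u x)⁻¹.toReal - (p x)⁻¹.toReal) with he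
  have h1 : ENNReal.ofReal (r ^ e) * vLpNorm p ((Metric.ball x r).indicator g) < lam := by
    refine lt_of_le_of_lt ?_ h
    exact le_iSup_of_le x (le_iSup_of_le r (le_iSup_of_le hr le_rfl))
  have h0 : ENNReal.ofReal (r ^ (-e)) ≠ 0 := (ENNReal.ofReal_pos.2 (by positivity)).ne'
  calc vLpNorm p ((Metric.ball x r).indicator g)
      = ENNReal.ofReal (r ^ e) * vLpNorm p ((Metric.ball x r).indicator g) *
        ENNReal.ofReal (r ^ (-e)) := by
        rw [mul_right_comm, ofReal_rpow_mul_ofReal_rpow_neg hr, one_mul]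
    _ < lam * ENNReal.ofReal (r ^ (-e)) := ENNReal.mul_lt_mul_left h0 (by simp) h1

lemma morreyNorm_le_of_morreyBound {p u : Rn n → ℝ≥0∞} (hp : ∀ x, 0 < (p x).toReal)
    {g : Rn n → ℝ≥0∞} {lam : ℝ≥0∞}
    (h : MorreyBound (fun x => (p x).toReal) (fun x => (u x)⁻¹.toReal) lam g) :
    morreyNorm p u g ≤ lam := by
  refine iSup_le fun x => iSup_le fun r => iSup_le fun hr => ?_
  have h1 := h x r hr
  rw [← setLIntegral_rpow_eq_modularVE hp g _ measurableSet_ball, neg_mul_sub_inv_toReal] at h1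
  set e : ℝ := n * ((u x)⁻¹.toReal - (p x)⁻¹.toReal) with he
  calc ENNReal.ofReal (r ^ e) * vLpNorm p ((Metric.ball x r).indicator g)
      ≤ ENNReal.ofReal (r ^ e) * (lam * ENNReal.ofReal (r ^ (-e))) := by
        gcongr
        exact sInf_le h1
    _ = lam := by rw [mul_left_comm, ofReal_rpow_mul_ofReal_rpow_neg hr, mul_one]

lemma lqNorm_eq_lqSum {q : Rn n → ℝ≥0∞} (hq : ∀ x, 0 < (q x).toReal) (f : ℕ → Rn n → ℝ≥0∞) :
    (fun x => lqNorm (q x) fun ν => f ν x) = lqSum (fun x => (q x).toReal) f := by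
  funext x
  have hqt : q x ≠ ∞ := fun h => by simpa [h] using hq x
  rw [lqNorm, if_neg hqt, lqSum]

lemma lconv_etaK_of_zero (ν : ℕ) (m : ℝ) (f : Rn 0 → ℝ≥0∞) : lconv (etaK ν m) f = f := by
  funext x
  have hx : x = 0 := Subsingleton.elim _ _
  rw [lconv, volume_euclideanSpace_eq_dirac, lintegral_dirac, hx]
  simp [etaK]

/-- the convolution inequality in variable exponent Morrey spaces,
with the alternative condition `m > n(1 + c_∞(1/p))`. -/
theorem statement3 (n : ℕ) (p q u : Rn n → ℝ≥0∞) (pinvInf cInf : ℝ)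
    (hp : IsPLogWith p pinvInf) (hq : IsPLog q) (hu : IsVarExp u)
    (hcInf : 0 < cInf)
    (hdecay : LogDecay (fun x => (p x)⁻¹.toReal) pinvInf cInf)
    (hpm : 1 < essInf p (volume : Measure (Rn n)))
    (hpu : ∀ᵐ x : Rn n ∂(volume : Measure (Rn n)), p x ≤ u x)
    (husup : (⨆ x : Rn n, u x) < ∞)
    (hqm : 1 < essInf q (volume : Measure (Rn n)))
    (hqp : essSup q (volume : Measure (Rn n)) < ∞)
    (m : ℝ) (hm : (n : ℝ) * (1 + cInf) < m) :
    ∃ c : ℝ, 0 < c ∧ ∀ f : ℕ → Rn n → ℝ≥0∞, (∀ ν, Measurable (f ν)) →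
      morreySeqNorm p u q (fun ν => lconv (etaK ν m) (f ν)) ≤
        ENNReal.ofReal c * morreySeqNorm p u q f := by
  rcases eq_or_ne n 0 with rfl | hn
  · refine ⟨1, one_pos, fun f _ => ?_⟩
    simp only [lconv_etaK_of_zero, ENNReal.ofReal_one, one_mul, le_refl]
  have hn0 : (0 : ℝ) < n := by exact_mod_cast Nat.pos_of_ne_zero hn
  set U := ⨆ x : Rn n, u x with hU
  have hU0 : U ≠ 0 := ((hu.2.1 0).trans_le (le_iSup u 0)).ne'
  obtain ⟨α, β, hβ, hα, hb⟩ := exists_bounds_inv_toReal hp.2.1 hpm husup.ne ae_essInf_le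
    (hpu.mono fun x hx => hx.trans (le_iSup u x))
  obtain ⟨Pinf, K, hP, hPinf⟩ := exists_logExponent hp.1.1 hp.2.1 hcInf hdecay hβ hα hb
  obtain ⟨qinvInf, hq1, hqloc, cq, hcq, hqdec⟩ := hq
  obtain ⟨α', β', hβ', hα', hb'⟩ := exists_bounds_inv_toReal hqloc hqm hqp.ne ae_essInf_le
    (ENNReal.ae_le_essSup q)
  obtain ⟨Qinf, Kq, hQ, -⟩ := exists_logExponent hq1.1 hqloc hcq hqdec hβ' hα' hb'
  have hP0 : ∀ x, 0 < (p x).toReal := fun x => by linarith [hP.one_lt, hP.le_apply x]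
  have hQ1 : ∀ x, 1 ≤ (q x).toReal := fun x => hQ.one_lt.le.trans (hQ.le_apply x)
  have hQ0 : ∀ x, 0 < (q x).toReal := fun x => zero_lt_one.trans_le (hQ1 x)
  have hnc : 0 < n * cInf := by positivity
  have hσ : ∀ x, (n / (p x).toReal - n / Pinf : ℝ) ≤ m - n := by
    intro x
    calc (n / (p x).toReal - n / Pinf : ℝ) = n * (1 / (p x).toReal - 1 / Pinf) := by ring
      _ ≤ n * cInf := by
          gcongr
          exact hPinf x
      _ ≤ m - n := by linarith
  have hδ : 0 < n * U⁻¹.toReal := mul_pos hn0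
    (ENNReal.toReal_pos (ENNReal.inv_ne_zero.2 husup.ne) (ENNReal.inv_ne_top.2 hU0))
  have hv : ∀ x, n * U⁻¹.toReal ≤ n * (u x)⁻¹.toReal := by
    intro x
    gcongr
    · exact ENNReal.inv_ne_top.2 (hu.2.1 x).ne'
    · exact le_iSup u x
  obtain ⟨C, hC0, hCt, H⟩ := hP.exists_morreyBound_lqSum_lconv hQ.measurable hQ.cellOsc hQ1 hn
    (by linarith) hσ hδ
  refine ⟨C.toReal, ENNReal.toReal_pos hC0 hCt, fun f hf => ?_⟩
  rw [ENNReal.ofReal_toReal hCt, morreySeqNorm, morreySeqNorm, lqNorm_eq_lqSum hQ0,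
    lqNorm_eq_lqSum hQ0]
  refine (ENNReal.div_le_iff' hC0 hCt).1 (le_of_forall_gt_imp_ge_of_dense fun lam hlam => ?_)
  rcases eq_or_ne lam ∞ with rfl | hlt
  · exact le_top
  refine (ENNReal.div_le_iff' hC0 hCt).2 (morreyNorm_le_of_morreyBound hP0 ?_)
  exact H _ f lam hf hv (pos_of_gt hlam).ne' hlt (morreyBound_of_morreyNorm_lt hP0 hlam)

end
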